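/- There exists a constant C > 0 such that for every integer d ≥ 3, every finite tree G in which every internal vertex has degree exactly d, every splitting subtree T = (V,E) of G with m ≥ 1 edges, and every proper (d+1)-edge-colouring μ of G, the Glauber dynamics 𝓛^μ_E is ergodic and its relaxation time satisfies τ(𝓛^μ_E) ≤ d³·m^C. -/

import Mathlib

/-!
The relaxation time is bounded through a Poincaré inequality for single-edge recolourings
(`TreeSplit.GPoin`), from which ergodicity (the indicator of a reachable set has no energy) and the
bound on the spectral gap both follow (`GPoin.ergodic`, `GPoin.relax`).

*Rooting.* For `m ≥ 2`, the tree is rooted at a leaf of `T`: the outer end of an interior boundary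
edge if there is one. Edges of `T` are identified with their lower endpoints, and every edge of `T`
has no children or `d - 1` children in `T`. The colours outside `T` only matter at the interior
boundary edges, and leave exactly two colours at each of them (`bd_list`). So the states are the
proper colourings of a rooted `d`-regular branching, with a list of at least two colours at the
root edge and possibly a list of two colours at one other leaf edge.

*Induction up the tree.* The colourings of the subtree below an edge `r` are parametrised by the
colour of `r` and a hidden coordinate. The inequality `PIT` (on colourings: `HasPI`) bounds, for
every list of root colours, the fluctuation inside each root colour plus a multiple of the
fluctuation of the means between root colours by the energy of the moves, where moves at `r` carry
an absolute weight (up to a factor `d`) and all other moves carry the weight `W`. One step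
(`one_step_core`, `HasPI_step`) passes from the children of `r` to `r`. Around the lower end of `r`
the `d + 1` colours are matched bijectively with `r`, its `d - 1` children and one missing colour.
One child is distinguished as heavy. The light ones are averaged out by the comparison of all
permutations with swaps against the missing colour (`star_lemma`) and by the Efron–Stein inequality
for the hidden coordinates; what remains depends on the colours of `r` and of the heavy child only,
and is handled by the inequality of the heavy child and an explicit estimate (`row_mean_ineq`).
The weight of the heavy child is not increased by the step, and light ones lose a factor `700`.
When the heavy child is a largest one, a light child has at most half of the edges, so
the weight stays at most `2 ^ 15 * d * n ^ 10` on a subtree of `n` edges (`Br.thm1`, `poin_one`).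

*Two boundary edges.* Let the second boundary edge `y` have the list `L` and the parent `p`. For the
tree cut below `p`, `p` is a leaf, and an inequality still holds if the moves of `p` inside `L` are
forbidden (`Br.thm2`, with the heavy child towards `p`). The full space is fibred over the colourings
of the cut tree. Every fibre has a Poincaré inequality (`fibre_var`), and a move permitted in the
base can be followed by a fraction of order `1 / d` of the fibre (`followF_card`); precisely the moves
of `p` inside `L` could be blocked. This gives the inequality for the full space (`fibration`,
`two_ended`, `poin_two`).

*Constants.* If `m ≥ 2`, then `T` has an internal vertex, whose `d` edges all belong to `T`; thus
`d ≤ m`, and all constants are absorbed into `m ^ 84`. If `m = 1` the dynamics is that of a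
complete graph (`gpoin_single`).
-/

open Finset
open scoped Classical

section Markov

variable {Ω : Type*} [Fintype Ω]

/-- A generator matrix: nonnegative off-diagonal entries, zero row sums. -/
def IsGenerator (L : Ω → Ω → ℝ) : Prop :=
  (∀ x y : Ω, x ≠ y → 0 ≤ L x y) ∧ (∀ x : Ω, ∑ y : Ω, L x y = 0)

/-- A transition of a generator matrix. -/
def IsTransition (L : Ω → Ω → ℝ) (x y : Ω) : Prop := x ≠ y ∧ 0 < L x y

/-- Ergodicity: the directed graph of transitions is strongly connected. -/
def IsErgodicGen (L : Ω → Ω → ℝ) : Prop :=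
  ∀ x y : Ω, Relation.ReflTransGen (IsTransition L) x y

/-- Reversibility with respect to a distribution π. -/
def IsReversible (L : Ω → Ω → ℝ) (π : Ω → ℝ) : Prop :=
  ∀ x y : Ω, π x * L x y = π y * L y x

/-- The variance form. -/
noncomputable def VarForm (π : Ω → ℝ) (f : Ω → ℝ) : ℝ :=
  (1 / 2) * ∑ a : Ω, ∑ b : Ω, π a * π b * (f a - f b) ^ 2

/-- The Dirichlet form. -/
noncomputable def DirForm (π : Ω → ℝ) (L : Ω → Ω → ℝ) (f : Ω → ℝ) : ℝ :=
  (1 / 2) * ∑ a : Ω, ∑ b : Ω, π a * L a b * (f a - f b) ^ 2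

/-- The spectral gap: infimum (= minimum) of the Rayleigh quotient over nonconstant functions. -/
noncomputable def specGap (π : Ω → ℝ) (L : Ω → Ω → ℝ) : ℝ :=
  sInf {r : ℝ | ∃ f : Ω → ℝ, (∃ a b : Ω, f a ≠ f b) ∧ r = DirForm π L f / VarForm π f}

/-- The relaxation time, with the convention that it equals 1 on a one-point space. -/
noncomputable def relaxTime (π : Ω → ℝ) (L : Ω → Ω → ℝ) : ℝ :=
  if ∃ a b : Ω, a ≠ b then 1 / specGap π L else 1

/-- The uniform distribution on a finite type. -/
noncomputable def unif (Ω : Type*) [Fintype Ω] : Ω → ℝ := fun _ => 1 / (Fintype.card Ω : ℝ)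

end Markov

section Glauber

variable {I : Type*} [Fintype I] {k : ℕ} {S : Type*} [Fintype S] [DecidableEq S]

/-- Off-diagonal entry of the Glauber dynamics: if the two states differ at exactly one site,
the rate of that site; otherwise `0`. -/
noncomputable def glauberOff (p : I → ℝ) (val : S → I → Fin k) (a b : S) : ℝ :=
  if (Finset.univ.filter fun w => val a w ≠ val b w).card = 1 then
    ∑ w ∈ Finset.univ.filter fun w => val a w ≠ val b w, p w
  else 0

/-- The Glauber dynamics generator with site rates `p`, on a state space `S` of configurations
(described by `val : S → I → Fin k`): off-diagonal entries are the rate of the unique differing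
site, diagonal entries make row sums vanish. -/
noncomputable def glauber (p : I → ℝ) (val : S → I → Fin k) : S → S → ℝ :=
  fun σ η =>
    if σ = η then -∑ η' ∈ Finset.univ.filter fun b => b ≠ σ, glauberOff p val σ η'
    else glauberOff p val σ η

end Glauber

section Trees

variable {V : Type} [Fintype V] [DecidableEq V]

/-- Two edges are incident if they are distinct and share an endpoint. -/
def EdgeInc (e f : Sym2 V) : Prop := e ≠ f ∧ ∃ v : V, v ∈ e ∧ v ∈ f

/-- A proper `k`-edge-colouring of `G` (total map on `Sym2 V`, constrained on edges). -/
def ProperECol (G : SimpleGraph V) {k : ℕ} (σ : Sym2 V → Fin k) : Prop :=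
  ∀ e ∈ G.edgeSet, ∀ f ∈ G.edgeSet, EdgeInc e f → σ e ≠ σ f

/-- `Ω^χ_{E'}`: proper edge-colourings of `G` agreeing with `χ` off `E'`. -/
abbrev OmegaE (G : SimpleGraph V) (k : ℕ) (E' : Finset (Sym2 V)) (χ : Sym2 V → Fin k) :=
  {σ : Sym2 V → Fin k // ProperECol G σ ∧ ∀ e ∉ E', σ e = χ e}

/-- The Glauber dynamics `𝓛^χ_{E'}` for `k`-edge-colourings: each edge is updated at
rate `1/k`. -/
noncomputable def treeGen (G : SimpleGraph V) (k : ℕ) (E' : Finset (Sym2 V))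
    (χ : Sym2 V → Fin k) : OmegaE G k E' χ → OmegaE G k E' χ → ℝ :=
  glauber (fun _ : Sym2 V => 1 / (k : ℝ)) (fun σ => σ.1)

variable (G : SimpleGraph V) [DecidableRel G.Adj]

/-- The exterior boundary `∂T` of the subtree with edge set `ET`. -/
noncomputable def extBd (ET : Finset (Sym2 V)) : Finset (Sym2 V) :=
  (G.edgeFinset \ ET).filter fun e => ∃ f ∈ ET, EdgeInc e f

/-- The interior boundary `∂̄T` of the subtree with edge set `ET`. -/
noncomputable def intBd (ET : Finset (Sym2 V)) : Finset (Sym2 V) :=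
  ET.filter fun e => ∃ f ∈ extBd G ET, EdgeInc e f

/-- Degree of a vertex in the subtree with edge set `ET`. -/
noncomputable def degT (ET : Finset (Sym2 V)) (v : V) : ℕ :=
  (ET.filter fun e => v ∈ e).card

/-- An edge set is connected (spans a subtree, inside a forest) if any two of its edges are
linked by a chain of pairwise incident edges within the set. -/
def EdgeConnectedSet (ET : Finset (Sym2 V)) : Prop :=
  ∀ e ∈ ET, ∀ f ∈ ET,
    Relation.ReflTransGen (fun a b => a ∈ ET ∧ b ∈ ET ∧ EdgeInc a b) e f

/-- A splitting subtree (given by its nonempty connected edge set `ET`): either a single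
edge, or a subtree with fringe interior boundary of size at most 2 whose two interior
boundary edges (if there are two) are non-incident. -/
def IsSplitting (ET : Finset (Sym2 V)) : Prop :=
  ET ⊆ G.edgeFinset ∧ ET.Nonempty ∧ EdgeConnectedSet ET ∧
  (ET.card = 1 ∨
    ((∀ e ∈ intBd G ET, ∃ v : V, v ∈ e ∧ degT ET v = 1) ∧
     (intBd G ET).card ≤ 2 ∧
     ∀ e ∈ intBd G ET, ∀ f ∈ intBd G ET, e ≠ f → ¬ EdgeInc e f))

end Trees

set_option linter.unusedSectionVars false
set_option linter.unusedVariables false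

namespace TreeSplit

/-! ### Averages over permutations -/

section Perm

variable {X K : Type*} [Fintype X] [DecidableEq X] [Fintype K] [DecidableEq K]

/-- The permutations of `X` that fix every point outside `U`. -/
def permOn (U : Finset X) : Finset (Equiv.Perm X) :=
  univ.filter fun g => ∀ x, x ∉ U → g x = x

theorem mem_permOn {U : Finset X} {g : Equiv.Perm X} :
    g ∈ permOn U ↔ ∀ x, x ∉ U → g x = x := by simp [permOn]

theorem permOn_card_pos (U : Finset X) : (0 : ℝ) < ((permOn U).card : ℝ) := by
  have : (1 : Equiv.Perm X) ∈ permOn U := by simp [mem_permOn]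
  exact_mod_cast Finset.card_pos.mpr ⟨_, this⟩

theorem permOn_mul {U : Finset X} {g h : Equiv.Perm X} (hg : g ∈ permOn U) (hh : h ∈ permOn U) :
    g * h ∈ permOn U := by
  rw [mem_permOn] at *
  intro x hx
  rw [Equiv.Perm.mul_apply, hh x hx, hg x hx]

theorem permOn_inv {U : Finset X} {g : Equiv.Perm X} (hg : g ∈ permOn U) :
    g⁻¹ ∈ permOn U := by
  rw [mem_permOn] at *
  intro x hx
  rw [Equiv.Perm.inv_eq_iff_eq, hg x hx]

theorem permOn_maps {U : Finset X} {g : Equiv.Perm X} (hg : g ∈ permOn U) {x : X} :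
    g x ∈ U ↔ x ∈ U := by
  constructor
  · intro h
    by_contra hx
    rw [mem_permOn.1 hg x hx] at h
    exact hx h
  · intro h
    by_contra hx
    have := mem_permOn.1 hg _ hx
    exact hx ((g.injective this).symm ▸ h)

theorem sum_trans (g : Equiv.Perm X) (F : (X ≃ K) → ℝ) :
    ∑ p : X ≃ K, F (g.trans p) = ∑ p, F p := by
  refine Fintype.sum_equiv ⟨fun p => g.trans p, fun p => g.symm.trans p, ?_, ?_⟩ _ _ ?_
  · intro p; ext x; simp
  · intro p; ext x; simp
  · intro p; rfl

/-- The average of `F (p ∘ g)` over the permutations `g` supported on `U`. -/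
noncomputable def gav (U : Finset X) (F : (X ≃ K) → ℝ) (p : X ≃ K) : ℝ :=
  (∑ g ∈ permOn U, F (g.trans p)) / ((permOn U).card : ℝ)

/-- Invariance under the permutations supported on `U`. -/
def GInv (U : Finset X) (F : (X ≃ K) → ℝ) : Prop :=
  ∀ g ∈ permOn U, ∀ p, F (g.trans p) = F p

theorem GInv.mono {U U' : Finset X} (h : U ⊆ U') {F : (X ≃ K) → ℝ} (hF : GInv U' F) :
    GInv U F := by
  intro g hg p
  apply hF
  rw [mem_permOn] at *
  exact fun x hx => hg x (fun h' => hx (h h'))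

theorem gav_inv (U : Finset X) (F : (X ≃ K) → ℝ) : GInv U (gav U F) := by
  intro h hh p
  unfold gav
  congr 1
  refine Finset.sum_bij' (fun g _ => h * g) (fun g _ => h⁻¹ * g) ?_ ?_ ?_ ?_ ?_
  · intro g hg; exact permOn_mul hh hg
  · intro g hg; exact permOn_mul (permOn_inv hh) hg
  · intro g hg; simp
  · intro g hg; simp
  · intro g hg; rfl

/-- `gav U` is self-adjoint, tested against invariant functions. -/
theorem sum_gav_mul (U : Finset X) (F H : (X ≃ K) → ℝ) (hH : GInv U H) :
    ∑ p, gav U F p * H p = ∑ p, F p * H p := by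
  have h1 : ∀ p, gav U F p * H p
      = (∑ g ∈ permOn U, F (g.trans p) * H (g.trans p)) / ((permOn U).card : ℝ) := by
    intro p
    unfold gav
    rw [div_mul_eq_mul_div, Finset.sum_mul]
    congr 1
    refine Finset.sum_congr rfl fun g hg => ?_
    rw [hH g hg]
  simp_rw [h1]
  rw [← Finset.sum_div, Finset.sum_comm]
  simp_rw [sum_trans (F := fun p => F p * H p)]
  rw [Finset.sum_const, nsmul_eq_mul, mul_div_cancel_left₀]
  exact (permOn_card_pos U).ne'

theorem gav_pyth (U : Finset X) (F H : (X ≃ K) → ℝ) (hH : GInv U H) :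
    ∑ p, (F p - H p) ^ 2 = ∑ p, (F p - gav U F p) ^ 2 + ∑ p, (gav U F p - H p) ^ 2 := by
  have h : GInv U fun p => gav U F p - H p := fun g hg p => by
    simp only [gav_inv U F g hg p, hH g hg p]
  have h1 := sum_gav_mul U F _ h
  have h2 : ∑ p, (F p - gav U F p) * (gav U F p - H p) = 0 := by
    simp_rw [sub_mul (F _)]
    rw [Finset.sum_sub_distrib, h1, sub_self]
  rw [← Finset.sum_add_distrib]
  have h3 : ∀ p, (F p - H p) ^ 2 = ((F p - gav U F p) ^ 2 + (gav U F p - H p) ^ 2)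
      + 2 * ((F p - gav U F p) * (gav U F p - H p)) := fun p => by ring
  simp_rw [h3]
  rw [Finset.sum_add_distrib, ← Finset.mul_sum, h2]
  ring

/-- Each element of the bigger group is uniquely a swap times an element of the smaller one. -/
theorem sum_permOn_insert {U : Finset X} {i : X} (hi : i ∉ U) (φ : Equiv.Perm X → ℝ) :
    ∑ g ∈ permOn (insert i U), φ g
      = ∑ b ∈ insert i U, ∑ h ∈ permOn U, φ (Equiv.swap i b * h) := by
  rw [← Finset.sum_product']
  symm
  refine Finset.sum_bij' (fun x _ => Equiv.swap i x.1 * x.2)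
    (fun g _ => (g i, Equiv.swap i (g i) * g)) ?_ ?_ ?_ ?_ ?_
  · rintro ⟨b, h⟩ hbh
    simp only [mem_product, mem_permOn] at hbh
    rw [mem_permOn]
    intro x hx
    simp only [mem_insert, not_or] at hx
    rw [Equiv.Perm.mul_apply, hbh.2 x hx.2, Equiv.swap_apply_of_ne_of_ne hx.1]
    rintro rfl
    have := hbh.1
    simp [hx.1, hx.2] at this
  · intro g hg
    simp only [mem_product]
    refine ⟨(permOn_maps hg).2 (mem_insert_self _ _), ?_⟩
    rw [mem_permOn]
    intro x hx
    rw [Equiv.Perm.mul_apply]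
    by_cases hxi : x = i
    · subst hxi; simp
    · rw [mem_permOn.1 hg x (by simp [hxi, hx]), Equiv.swap_apply_of_ne_of_ne hxi]
      intro h
      have : g x = x := mem_permOn.1 hg x (by simp [hxi, hx])
      rw [← this] at h
      exact hxi (by simpa [this] using g.injective h)
  · rintro ⟨b, h⟩ hbh
    simp only [mem_product, mem_permOn] at hbh
    have : h i = i := hbh.2 i hi
    simp [this, ← mul_assoc]
  · intro g hg
    simp [← mul_assoc]
  · intro g hg; rfl

theorem gav_insert {U : Finset X} {i : X} (hi : i ∉ U) (F : (X ≃ K) → ℝ) (p : X ≃ K) :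
    gav (insert i U) F p
      = (∑ b ∈ insert i U, gav U F ((Equiv.swap i b).trans p)) / ((U.card : ℝ) + 1) := by
  have hc : ((permOn (insert i U)).card : ℝ) = ((U.card : ℝ) + 1) * (permOn U).card := by
    have := sum_permOn_insert hi (fun _ => (1 : ℝ))
    simpa [Finset.card_insert_of_notMem hi] using this
  unfold gav
  rw [sum_permOn_insert hi, hc, ← Finset.sum_div, div_div, mul_comm ((U.card : ℝ) + 1)]
  rfl

theorem sq_sum_div_le {ι : Type*} (s : Finset ι) (f : ι → ℝ) (m : ℝ) (hm : (s.card : ℝ) ≤ m)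
    (hm0 : 0 < m) : ((∑ i ∈ s, f i) / m) ^ 2 ≤ (∑ i ∈ s, f i ^ 2) / m := by
  have h := sq_sum_le_card_mul_sum_sq (s := s) (f := f)
  have h0 : 0 ≤ ∑ i ∈ s, f i ^ 2 := Finset.sum_nonneg fun i _ => sq_nonneg _
  rw [div_pow, div_le_div_iff₀ (by positivity) hm0]
  have : (s.card : ℝ) * ∑ i ∈ s, f i ^ 2 ≤ m * ∑ i ∈ s, f i ^ 2 :=
    mul_le_mul_of_nonneg_right hm h0
  nlinarith

/-- Jensen for the averages `gav U`: averaging over permutations of `U` permutes the swaps of `i` with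
points of `U` among themselves, so their total energy does not increase. -/
theorem sum_gav_sub_swap_le {U : Finset X} {i : X} (hi : i ∉ U) (F : (X ≃ K) → ℝ) :
    ∑ b ∈ U, ∑ p, (gav U F p - gav U F ((Equiv.swap i b).trans p)) ^ 2
      ≤ ∑ b ∈ U, ∑ p, (F p - F ((Equiv.swap i b).trans p)) ^ 2 := by
  have h1 : ∀ b p, (gav U F p - gav U F ((Equiv.swap i b).trans p)) ^ 2
      ≤ (∑ g ∈ permOn U, (F (g.trans p) - F (g.trans ((Equiv.swap i b).trans p))) ^ 2)
        / ((permOn U).card : ℝ) := by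
    intro b p
    unfold gav
    rw [← sub_div, ← Finset.sum_sub_distrib]
    exact sq_sum_div_le _ _ _ le_rfl (permOn_card_pos U)
  have h2 : ∀ g ∈ permOn U, ∀ b ∈ U,
      ∑ p : X ≃ K, (F (g.trans p) - F (g.trans ((Equiv.swap i b).trans p))) ^ 2
      = ∑ p : X ≃ K, (F p - F ((Equiv.swap i (g⁻¹ b)).trans p)) ^ 2 := by
    intro g hg b hb
    rw [← sum_trans g (fun p => (F p - F ((Equiv.swap i (g⁻¹ b)).trans p)) ^ 2)]
    refine Finset.sum_congr rfl fun p _ => ?_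
    have : (g.trans ((Equiv.swap i b).trans p)) = (Equiv.swap i (g⁻¹ b)).trans (g.trans p) := by
      rw [← Equiv.trans_assoc, ← Equiv.trans_assoc]
      congr 1
      have hgi : g i = i := mem_permOn.1 hg i hi
      ext x
      simp only [Equiv.trans_apply]
      have := Equiv.swap_apply_apply g i (g⁻¹ b)
      rw [hgi, show g (g⁻¹ b) = b from g.apply_symm_apply b] at this
      rw [this]
      simp
    rw [this]
  calc ∑ b ∈ U, ∑ p, (gav U F p - gav U F ((Equiv.swap i b).trans p)) ^ 2
      ≤ ∑ b ∈ U, ∑ p, (∑ g ∈ permOn U,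
          (F (g.trans p) - F (g.trans ((Equiv.swap i b).trans p))) ^ 2)
        / ((permOn U).card : ℝ) :=
        Finset.sum_le_sum fun b _ => Finset.sum_le_sum fun p _ => h1 b p
    _ = (∑ g ∈ permOn U, ∑ b ∈ U, ∑ p, (F p - F ((Equiv.swap i (g⁻¹ b)).trans p)) ^ 2)
        / ((permOn U).card : ℝ) := by
        simp_rw [← Finset.sum_div]
        congr 1
        rw [Finset.sum_comm]
        rw [Finset.sum_comm' (s := permOn U) (t := fun _ => U) (t' := U) (s' := fun _ => permOn U)
          (by simp [and_comm])]
        rw [Finset.sum_comm]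
        refine Finset.sum_congr rfl fun b hb => ?_
        rw [Finset.sum_comm]
        exact Finset.sum_congr rfl fun g hg => h2 g hg b hb
    _ = (∑ g ∈ permOn U, ∑ b ∈ U, ∑ p, (F p - F ((Equiv.swap i b).trans p)) ^ 2)
        / ((permOn U).card : ℝ) := by
        congr 1
        refine Finset.sum_congr rfl fun g hg => ?_
        refine Finset.sum_bij' (fun b _ => g⁻¹ b) (fun b _ => g b) ?_ ?_ ?_ ?_ ?_
        · intro b hb; exact (permOn_maps (permOn_inv hg)).2 hb
        · intro b hb; exact (permOn_maps hg).2 hb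
        · intro b hb; simp
        · intro b hb; simp
        · intro b hb; rfl
    _ = _ := by
        rw [Finset.sum_const, nsmul_eq_mul, mul_div_cancel_left₀]
        exact (permOn_card_pos U).ne'

/-- Enlarging the averaging set by one point `i` costs only `1/(|U|+1)` of the energy of the swaps
of `i` with `U`. -/
theorem swap_lemma {U : Finset X} {i : X} (hi : i ∉ U) (F : (X ≃ K) → ℝ) :
    ∑ p, (gav U F p - gav (insert i U) F p) ^ 2
      ≤ (∑ b ∈ U, ∑ p, (F p - F ((Equiv.swap i b).trans p)) ^ 2) / ((U.card : ℝ) + 1) := by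
  refine le_trans ?_ (div_le_div_of_nonneg_right (sum_gav_sub_swap_le hi F) (by positivity))
  rw [Finset.sum_comm, Finset.sum_div]
  refine Finset.sum_le_sum fun p _ => ?_
  have h1 : gav U F p - gav (insert i U) F p
      = (∑ b ∈ U, (gav U F p - gav U F ((Equiv.swap i b).trans p))) / ((U.card : ℝ) + 1) := by
    rw [gav_insert hi, Finset.sum_insert hi, Finset.sum_sub_distrib, Finset.sum_const, nsmul_eq_mul]
    have : (Equiv.swap i i).trans p = p := by ext x; simp
    rw [this]
    have : ((U.card : ℝ) + 1) ≠ 0 := by positivity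
    field_simp
    ring
  rw [h1]
  exact sq_sum_div_le _ _ _ (by linarith) (by positivity)

/-- Energy of the swap of `a` and `b`. -/
noncomputable def swapE (F : (X ≃ K) → ℝ) (a b : X) : ℝ :=
  ∑ p, (F p - F ((Equiv.swap a b).trans p)) ^ 2

theorem swapE_nonneg (F : (X ≃ K) → ℝ) (a b : X) : 0 ≤ swapE F a b :=
  Finset.sum_nonneg fun _ _ => sq_nonneg _

theorem swapE_three (F : (X ≃ K) → ℝ) {o i b : X} (hoi : o ≠ i) (hob : o ≠ b) (hib : i ≠ b) :
    swapE F i b ≤ 6 * swapE F o i + 3 * swapE F o b := by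
  have key : ∀ p : X ≃ K, (Equiv.swap i b).trans p
      = (Equiv.swap o i).trans ((Equiv.swap o b).trans ((Equiv.swap o i).trans p)) := by
    intro p
    rw [← Equiv.trans_assoc, ← Equiv.trans_assoc]
    congr 1
    have h := Equiv.swap_apply_apply (Equiv.swap o i) o b
    rw [Equiv.swap_apply_left, Equiv.swap_apply_of_ne_of_ne hob.symm hib.symm] at h
    rw [h]
    ext x
    simp
  set s := Equiv.swap o i
  set t := Equiv.swap o b
  have e1 : swapE F o i = ∑ p : X ≃ K, (F (t.trans (s.trans p)) - F (s.trans (t.trans (s.trans p)))) ^ 2 := by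
    unfold swapE
    rw [← sum_trans t, ← sum_trans s]
  have e2 : swapE F o b = ∑ p : X ≃ K, (F (s.trans p) - F (t.trans (s.trans p))) ^ 2 := by
    unfold swapE
    rw [← sum_trans s]
  have e3 : swapE F o i = ∑ p : X ≃ K, (F p - F (s.trans p)) ^ 2 := rfl
  have : 6 * swapE F o i + 3 * swapE F o b = 3 * swapE F o i + 3 * swapE F o b + 3 * swapE F o i := by
    ring
  rw [this]
  nth_rewrite 2 [e1]
  rw [e2, e3]
  unfold swapE
  rw [Finset.mul_sum, Finset.mul_sum, Finset.mul_sum, ← Finset.sum_add_distrib,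
    ← Finset.sum_add_distrib]
  refine Finset.sum_le_sum fun p _ => ?_
  rw [key p]
  nlinarith [sq_nonneg ((F p - F (s.trans p)) - (F (s.trans p) - F (t.trans (s.trans p)))),
    sq_nonneg ((F p - F (s.trans p)) - (F (t.trans (s.trans p)) - F (s.trans (t.trans (s.trans p))))),
    sq_nonneg ((F (s.trans p) - F (t.trans (s.trans p))) - (F (t.trans (s.trans p)) - F (s.trans (t.trans (s.trans p)))))]

/-- Poincaré inequality for the star transpositions `swap o x`, with a constant independent
of the size. -/
theorem star_lemma (F : (X ≃ K) → ℝ) (o : X) (n : ℕ) : ∀ U : Finset X, U.card = n → o ∉ U →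
    ∑ p, (F p - gav (insert o U) F p) ^ 2 ≤ 9 * ∑ x ∈ U, swapE F o x := by
  induction n with
  | zero =>
    intro U hU ho
    rw [Finset.card_eq_zero] at hU
    subst hU
    have h1 : permOn ({o} : Finset X) = {1} := by
      ext g
      simp only [mem_permOn, mem_singleton]
      constructor
      · intro h
        ext x
        by_cases hx : x = o
        · subst hx
          by_contra hne
          have h2 : g (g x) = g x := h _ (by simpa using hne)
          exact hne (g.injective h2)
        · exact h x hx
      · rintro rfl; simp
    have h2 : ∀ p, gav (insert o ∅) F p = F p := by
      intro p
      simp only [insert_empty_eq, gav, h1, sum_singleton, card_singleton]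
      simp
      rfl
    simp only [h2, sub_self, ne_eq, OfNat.ofNat_ne_zero, not_false_eq_true, zero_pow,
      sum_const_zero, sum_empty, mul_zero, le_refl]
  | succ m ih =>
    intro U hU ho
    have step : ∀ i ∈ U, ∑ p, (F p - gav (insert o U) F p) ^ 2
        ≤ 9 * (∑ x ∈ U, swapE F o x - swapE F o i)
          + ((6 * (m : ℝ) + 1) * swapE F o i + 3 * (∑ x ∈ U, swapE F o x - swapE F o i))
            / ((m : ℝ) + 2) := by
      intro i hi
      have hoi : o ≠ i := fun h => ho (h ▸ hi)
      set V := U.erase i with hV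
      have hVc : V.card = m := by rw [hV, Finset.card_erase_of_mem hi, hU]; rfl
      have hoV : o ∉ V := fun h => ho (Finset.mem_of_mem_erase h)
      have hins : insert o U = insert i (insert o V) := by
        rw [hV, Finset.insert_comm, Finset.insert_erase hi]
      have hiV : i ∉ insert o V := by simp [hV, hoi.symm]
      have hsum : ∑ x ∈ V, swapE F o x = ∑ x ∈ U, swapE F o x - swapE F o i := by
        rw [hV, ← Finset.sum_erase_add _ _ hi]; ring
      rw [hins, gav_pyth (insert o V) F (gav (insert i (insert o V)) F)
        ((gav_inv _ F).mono (Finset.subset_insert _ _))]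
      have h1 := ih V hVc hoV
      have h2 := swap_lemma hiV F
      rw [hsum] at h1
      refine add_le_add h1 (h2.trans ?_)
      rw [Finset.card_insert_of_notMem hoV, hVc]
      push_cast
      rw [show (m : ℝ) + 1 + 1 = (m : ℝ) + 2 by ring]
      refine div_le_div_of_nonneg_right ?_ (by positivity)
      rw [Finset.sum_insert hoV]
      have h3 : ∑ p, (F p - F ((Equiv.swap i o).trans p)) ^ 2 = swapE F o i := by
        unfold swapE; rw [Equiv.swap_comm]
      rw [h3]
      have h4 : ∑ b ∈ V, ∑ p, (F p - F ((Equiv.swap i b).trans p)) ^ 2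
          ≤ ∑ b ∈ V, (6 * swapE F o i + 3 * swapE F o b) := by
        refine Finset.sum_le_sum fun b hb => ?_
        refine swapE_three F hoi (fun h => hoV (h ▸ hb)) ?_
        rintro rfl
        simp [hV] at hb
      rw [Finset.sum_add_distrib, Finset.sum_const, hVc, nsmul_eq_mul, ← Finset.mul_sum, hsum] at h4
      linarith
    have hs := Finset.sum_le_sum step
    rw [Finset.sum_const, hU, nsmul_eq_mul, Finset.sum_add_distrib, ← Finset.mul_sum,
      ← Finset.sum_div, Finset.sum_add_distrib, ← Finset.mul_sum, ← Finset.mul_sum,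
      Finset.sum_sub_distrib, Finset.sum_const, hU, nsmul_eq_mul] at hs
    set S := ∑ x ∈ U, swapE F o x with hS
    have hS0 : 0 ≤ S := Finset.sum_nonneg fun x _ => swapE_nonneg F o x
    push_cast at hs
    have hm : (0 : ℝ) ≤ m := by positivity
    have h5 : ((6 * (m : ℝ) + 1) * S + 3 * (((m : ℝ) + 1) * S - S)) / ((m : ℝ) + 2) ≤ 9 * S := by
      rw [div_le_iff₀ (by positivity)]
      nlinarith
    have h6 : ((m : ℝ) + 1) * ∑ p, (F p - gav (insert o U) F p) ^ 2 ≤ ((m : ℝ) + 1) * (9 * S) := by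
      nlinarith
    exact le_of_mul_le_mul_left h6 (by positivity)

theorem gav_eq_of_agree {U : Finset X} {F : (X ≃ K) → ℝ} (hF : GInv U F) {p p' : X ≃ K}
    (h : ∀ x, x ∉ U → p x = p' x) : F p = F p' := by
  have := hF (p.trans p'.symm) (by
    rw [mem_permOn]
    intro x hx
    simp [h x hx]) p'
  rw [← this]
  congr 1
  ext x
  simp

end Perm

/-! ### Light children: product spaces glued along a permutation -/

section Light

variable {X K J : Type*} [Fintype X] [DecidableEq X] [Fintype K] [DecidableEq K]
  [Fintype J] [DecidableEq J] {Z : J → Type*} [∀ j, Fintype (Z j)] [∀ j, Nonempty (Z j)]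

/-- The arithmetic mean of a real function on a finite type. -/
noncomputable def mean {Y : Type*} [Fintype Y] (u : Y → ℝ) : ℝ :=
  (∑ w, u w) / (Fintype.card Y : ℝ)

theorem card_pos_real (Y : Type*) [Fintype Y] [Nonempty Y] : (0 : ℝ) < (Fintype.card Y : ℝ) := by
  exact_mod_cast Fintype.card_pos

theorem card_mul_mean {Y : Type*} [Fintype Y] [Nonempty Y] (u : Y → ℝ) :
    (Fintype.card Y : ℝ) * mean u = ∑ w, u w := by
  unfold mean
  rw [mul_div_cancel₀]
  exact (card_pos_real Y).ne'

theorem mean_pyth {Y : Type*} [Fintype Y] [Nonempty Y] (u : Y → ℝ) (c : ℝ) :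
    ∑ y, (u y - c) ^ 2 = ∑ y, (u y - mean u) ^ 2 + (Fintype.card Y : ℝ) * (mean u - c) ^ 2 := by
  have h : ∀ y, (u y - c) ^ 2
      = ((u y - mean u) ^ 2 + (mean u - c) ^ 2) + 2 * (mean u - c) * (u y - mean u) :=
    fun y => by ring
  have h0 : ∑ y, (u y - mean u) = 0 := by
    rw [Finset.sum_sub_distrib, Finset.sum_const, nsmul_eq_mul, Finset.card_univ, card_mul_mean,
      sub_self]
  simp_rw [h]
  rw [Finset.sum_add_distrib, ← Finset.mul_sum, h0, Finset.sum_add_distrib, Finset.sum_const,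
    nsmul_eq_mul, Finset.card_univ]
  ring

theorem mean_sub {Y : Type*} [Fintype Y] (u v : Y → ℝ) :
    mean (fun y => u y - v y) = mean u - mean v := by
  unfold mean
  rw [Finset.sum_sub_distrib, sub_div]

theorem mean_sq_le {Y : Type*} [Fintype Y] [Nonempty Y] (u : Y → ℝ) :
    (Fintype.card Y : ℝ) * (mean u) ^ 2 ≤ ∑ y, u y ^ 2 := by
  have := mean_pyth u 0
  simp only [sub_zero] at this
  rw [this]
  have : 0 ≤ ∑ y, (u y - mean u) ^ 2 := Finset.sum_nonneg fun _ _ => sq_nonneg _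
  linarith

/-- Two-colour inequality for a light child with hidden coordinate in `Y`. -/
def TwoCol {Y : Type*} [Fintype Y] (k : K → Y → K → Y → ℝ) : Prop :=
  ∀ a b, a ≠ b → ∀ u v : Y → ℝ,
    ∑ w, (u w - mean u) ^ 2 + ∑ w, (v w - mean v) ^ 2
      + 3 * (Fintype.card Y : ℝ) * (mean u - mean v) ^ 2
    ≤ ∑ w, ∑ w', (k a w a w' * (u w - u w') ^ 2 + k a w b w' * (u w - v w') ^ 2
        + k b w a w' * (v w - u w') ^ 2 + k b w b w' * (v w - v w') ^ 2)

theorem sum_update_swap (j : J) (h : (∀ j, Z j) → Z j → ℝ) :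
    ∑ z : ∀ j, Z j, ∑ w : Z j, h (Function.update z j w) (z j) = ∑ z, ∑ w, h z w := by
  rw [← Fintype.sum_prod_type', ← Fintype.sum_prod_type']
  refine Fintype.sum_equiv
    ⟨fun x => (Function.update x.1 j x.2, x.1 j), fun x => (Function.update x.1 j x.2, x.1 j),
      ?_, ?_⟩ _ _ ?_
  · rintro ⟨z, w⟩; simp
  · rintro ⟨z, w⟩; simp
  · rintro ⟨z, w⟩; rfl

theorem sum_update (j : J) (h : (∀ j, Z j) → ℝ) :
    ∑ z : ∀ j, Z j, ∑ w : Z j, h (Function.update z j w) = (Fintype.card (Z j) : ℝ) * ∑ z, h z := by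
  rw [sum_update_swap j (fun z _ => h z), Finset.mul_sum]
  simp

/-- Resampling of coordinate `j`. -/
noncomputable def cav (j : J) (f : (∀ j, Z j) → ℝ) (z : ∀ j, Z j) : ℝ :=
  mean fun w => f (Function.update z j w)

theorem cav_update (j : J) (f : (∀ j, Z j) → ℝ) (z : ∀ j, Z j) (w : Z j) :
    cav j f (Function.update z j w) = cav j f z := by
  unfold cav
  simp

theorem sum_cav (j : J) (f : (∀ j, Z j) → ℝ) : ∑ z, cav j f z = ∑ z, f z := by
  unfold cav mean
  rw [← Finset.sum_div, sum_update, mul_div_cancel_left₀]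
  exact (card_pos_real (Z j)).ne'

theorem cav_pyth (j : J) (f H : (∀ j, Z j) → ℝ) (hH : ∀ z w, H (Function.update z j w) = H z) :
    ∑ z, (f z - H z) ^ 2 = ∑ z, (f z - cav j f z) ^ 2 + ∑ z, (cav j f z - H z) ^ 2 := by
  have hc := card_pos_real (Z j)
  apply mul_left_cancel₀ hc.ne'
  rw [mul_add, ← sum_update j, ← sum_update j, Finset.mul_sum, ← Finset.sum_add_distrib]
  refine Finset.sum_congr rfl fun z _ => ?_
  simp_rw [hH, cav_update]
  exact mean_pyth _ _

theorem cav_contr (j : J) (f : (∀ j, Z j) → ℝ) : ∑ z, (cav j f z) ^ 2 ≤ ∑ z, f z ^ 2 := by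
  have := cav_pyth j f (fun _ => 0) (fun _ _ => rfl)
  simp only [sub_zero] at this
  rw [this]
  have : 0 ≤ ∑ z, (f z - cav j f z) ^ 2 := Finset.sum_nonneg fun _ _ => sq_nonneg _
  linarith

theorem cav_sub (j : J) (f g : (∀ j, Z j) → ℝ) (z) :
    cav j (fun z => f z - g z) z = cav j f z - cav j g z := by
  unfold cav; rw [mean_sub]

/-- Successive resampling of the coordinates in a list. -/
noncomputable def cavs : List J → ((∀ j, Z j) → ℝ) → (∀ j, Z j) → ℝ
  | [], f => f
  | j :: l, f => cav j (cavs l f)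

theorem cavs_sum (l : List J) (f : (∀ j, Z j) → ℝ) : ∑ z, cavs l f z = ∑ z, f z := by
  induction l with
  | nil => rfl
  | cons j l ih => rw [← ih]; exact sum_cav j _

theorem cavs_indep (l : List J) (f : (∀ j, Z j) → ℝ) : ∀ i ∈ l, ∀ z w,
    cavs l f (Function.update z i w) = cavs l f z := by
  induction l with
  | nil => simp
  | cons j l ih =>
    intro i hi z w
    by_cases hij : i = j
    · subst hij; exact cav_update _ _ _ _
    · have hil : i ∈ l := by simpa [hij] using hi
      simp only [cavs, cav]
      congr 1
      ext v
      rw [Function.update_comm hij]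
      exact ih i hil _ _

theorem cavs_ineq (l : List J) (f : (∀ j, Z j) → ℝ) :
    ∑ z, (f z - cavs l f z) ^ 2 ≤ (l.map fun j => ∑ z, (f z - cav j f z) ^ 2).sum := by
  induction l with
  | nil => simp [cavs]
  | cons j l ih =>
    simp only [List.map_cons, List.sum_cons]
    rw [cav_pyth j f (cavs (j :: l) f) (fun z w => cav_update _ _ _ _)]
    refine add_le_add le_rfl (le_trans ?_ ih)
    simp only [cavs]
    simp_rw [← cav_sub]
    exact cav_contr j _

theorem eq_of_indep (g : (∀ j, Z j) → ℝ) (hg : ∀ i z w, g (Function.update z i w) = g z)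
    (z z' : ∀ j, Z j) : g z = g z' := by
  have : ∀ s : Finset J, g (fun j => if j ∈ s then z j else z' j) = g z' := by
    intro s
    induction s using Finset.induction_on with
    | empty => simp
    | insert i s hi ih =>
      rw [← ih, ← hg i (fun j => if j ∈ s then z j else z' j) (z i)]
      congr 1
      ext j
      by_cases hj : j = i
      · subst hj; simp
      · simp [hj]
  simpa using this univ

/-- The Efron–Stein inequality on a finite product. -/
theorem efron_stein (f : (∀ j, Z j) → ℝ) :
    ∑ z, (f z - mean f) ^ 2 ≤ ∑ j, ∑ z, (f z - cav j f z) ^ 2 := by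
  have h := cavs_ineq (univ : Finset J).toList f
  rw [Finset.sum_map_toList] at h
  have h2 : ∀ z, cavs (univ : Finset J).toList f z = mean f := by
    intro z
    have h3 : ∀ z', cavs (univ : Finset J).toList f z' = cavs (univ : Finset J).toList f z :=
      fun z' => eq_of_indep _ (fun i => cavs_indep _ f i (by simp)) _ _
    have h4 := cavs_sum (univ : Finset J).toList f
    simp_rw [h3] at h4
    unfold mean
    rw [← h4, Finset.sum_const, nsmul_eq_mul, Finset.card_univ, mul_div_cancel_left₀]
    exact (card_pos_real (∀ j, Z j)).ne'
  simpa [h2] using h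

variable (ι : J → X) (o : X)

/-- The part of the energy of the moves inside light child `j` that changes only its hidden
coordinate. -/
noncomputable def lightIn (k : ∀ j, K → Z j → K → Z j → ℝ) (j : J)
    (f : (X ≃ K) → (∀ j, Z j) → ℝ) (p : X ≃ K) (z : ∀ j, Z j) : ℝ :=
  ∑ w, k j (p (ι j)) (z j) (p (ι j)) w * (f p z - f p (Function.update z j w)) ^ 2

/-- The energy of the moves exchanging the root colour of light child `j` with the hole `o`. -/
noncomputable def lightOut (k : ∀ j, K → Z j → K → Z j → ℝ) (j : J)
    (f : (X ≃ K) → (∀ j, Z j) → ℝ) (p : X ≃ K) (z : ∀ j, Z j) : ℝ :=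
  ∑ w, k j (p (ι j)) (z j) (p o) w
    * (f p z - f ((Equiv.swap o (ι j)).trans p) (Function.update z j w)) ^ 2

/-- Total energy of light child `j`. -/
noncomputable def lightE (k : ∀ j, K → Z j → K → Z j → ℝ) (j : J)
    (f : (X ≃ K) → (∀ j, Z j) → ℝ) : ℝ :=
  ∑ p, ∑ z, (lightIn ι k j f p z + lightOut ι o k j f p z)

/-- `TwoCol` at light child `j`, summed over all states: each pair of states exchanged by the swap of
`j` with the hole is compared through the two colours involved. -/
theorem light_S0 (k : ∀ j, K → Z j → K → Z j → ℝ) (j : J) (hk : TwoCol (k j)) (hj : ι j ≠ o)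
    (f : (X ≃ K) → (∀ j, Z j) → ℝ) :
    ∑ p, ∑ z, (f p z - cav j (f p) z) ^ 2
      + 3 / 2 * ∑ p, ∑ z, (cav j (f p) z - cav j (f ((Equiv.swap o (ι j)).trans p)) z) ^ 2
    ≤ lightE ι o k j f := by
  set s := Equiv.swap o (ι j) with hs
  have hc := card_pos_real (Z j)
  have hss : ∀ p : X ≃ K, s.trans (s.trans p) = p := by
    intro p; ext x; simp [hs]
  have h1 : ∀ (p : X ≃ K) (z : ∀ j, Z j),
      ∑ w, (f p (Function.update z j w) - cav j (f p) (Function.update z j w)) ^ 2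
      + ∑ w, (f (s.trans p) (Function.update z j w)
          - cav j (f (s.trans p)) (Function.update z j w)) ^ 2
      + 3 * (Fintype.card (Z j) : ℝ) * (cav j (f p) z - cav j (f (s.trans p)) z) ^ 2
      ≤ ∑ w, (lightIn ι k j f p (Function.update z j w)
          + lightOut ι o k j f p (Function.update z j w))
        + ∑ w, (lightIn ι k j f (s.trans p) (Function.update z j w)
          + lightOut ι o k j f (s.trans p) (Function.update z j w)) := by
    intro p z
    have := hk (p (ι j)) (p o) (fun h => hj (p.injective h))
      (fun w => f p (Function.update z j w)) (fun w => f (s.trans p) (Function.update z j w))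
    simp_rw [cav_update]
    refine le_trans this (le_of_eq ?_)
    rw [← Finset.sum_add_distrib]
    refine Finset.sum_congr rfl fun w _ => ?_
    unfold lightIn lightOut
    rw [← hs, ← Finset.sum_add_distrib, ← Finset.sum_add_distrib, ← Finset.sum_add_distrib]
    refine Finset.sum_congr rfl fun w' _ => ?_
    rw [hss]
    have e1 : (s.trans p) (ι j) = p o := by simp [hs]
    have e2 : (s.trans p) o = p (ι j) := by simp [hs]
    rw [e1, e2]
    simp only [Function.update_self, Function.update_idem]
    ring
  have h2' : ∀ p : X ≃ K, (Fintype.card (Z j) : ℝ) * ∑ z, (f p z - cav j (f p) z) ^ 2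
      + (Fintype.card (Z j) : ℝ) * ∑ z, (f (s.trans p) z - cav j (f (s.trans p)) z) ^ 2
      + 3 * (Fintype.card (Z j) : ℝ) * ∑ z, (cav j (f p) z - cav j (f (s.trans p)) z) ^ 2
      ≤ (Fintype.card (Z j) : ℝ) * ∑ z, (lightIn ι k j f p z + lightOut ι o k j f p z)
        + (Fintype.card (Z j) : ℝ)
          * ∑ z, (lightIn ι k j f (s.trans p) z + lightOut ι o k j f (s.trans p) z) := by
    intro p
    rw [← sum_update j (fun z => (f p z - cav j (f p) z) ^ 2),
      ← sum_update j (fun z => (f (s.trans p) z - cav j (f (s.trans p)) z) ^ 2),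
      ← sum_update j (fun z => lightIn ι k j f p z + lightOut ι o k j f p z),
      ← sum_update j (fun z => lightIn ι k j f (s.trans p) z + lightOut ι o k j f (s.trans p) z),
      Finset.mul_sum, ← Finset.sum_add_distrib, ← Finset.sum_add_distrib,
      ← Finset.sum_add_distrib]
    exact Finset.sum_le_sum fun z _ => h1 p z
  have h2 := Finset.sum_le_sum fun p (_ : p ∈ (univ : Finset (X ≃ K))) => h2' p
  rw [Finset.sum_add_distrib, Finset.sum_add_distrib, Finset.sum_add_distrib, ← Finset.mul_sum,
    ← Finset.mul_sum, ← Finset.mul_sum, ← Finset.mul_sum, ← Finset.mul_sum,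
    sum_trans s (fun p => ∑ z, (f p z - cav j (f p) z) ^ 2),
    sum_trans s (fun p => ∑ z, (lightIn ι k j f p z + lightOut ι o k j f p z))] at h2
  unfold lightE
  have h3 : (Fintype.card (Z j) : ℝ) * (∑ p, ∑ z, (f p z - cav j (f p) z) ^ 2
      + 3 / 2 * ∑ p, ∑ z, (cav j (f p) z - cav j (f (s.trans p)) z) ^ 2)
      ≤ (Fintype.card (Z j) : ℝ) *
        (∑ p, ∑ z, (lightIn ι k j f p z + lightOut ι o k j f p z)) := by
    linarith
  exact le_of_mul_le_mul_left h3 hc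

/-- `|Z|` times the swap energy of the averaged function is controlled by the light energy. -/
theorem light_swapE (k : ∀ j, K → Z j → K → Z j → ℝ) (j : J) (hk : TwoCol (k j)) (hj : ι j ≠ o)
    (f : (X ≃ K) → (∀ j, Z j) → ℝ) :
    (Fintype.card (∀ j, Z j) : ℝ) * (3 / 2 * swapE (fun p => mean (f p)) o (ι j))
      + ∑ p, ∑ z, (f p z - cav j (f p) z) ^ 2 ≤ lightE ι o k j f := by
  have h := light_S0 ι o k j hk hj f
  refine le_trans ?_ h
  rw [add_comm]
  refine add_le_add le_rfl ?_
  rw [mul_left_comm]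
  refine mul_le_mul_of_nonneg_left ?_ (by norm_num)
  unfold swapE
  rw [Finset.mul_sum]
  refine Finset.sum_le_sum fun p _ => ?_
  have h2 : ∀ p : X ≃ K, mean (f p) = mean (cav j (f p)) := by
    intro p; unfold mean; rw [sum_cav]
  simp only [h2]
  rw [← mean_sub]
  exact mean_sq_le _

theorem light_S1 (hι : Function.Injective ι) (ho : ∀ j, ι j ≠ o)
    (k : ∀ j, K → Z j → K → Z j → ℝ) (hk : ∀ j, TwoCol (k j))
    (f : (X ≃ K) → (∀ j, Z j) → ℝ) :
    ∑ p, ∑ z, (f p z - gav (insert o (univ.image ι)) (fun p => mean (f p)) p) ^ 2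
      ≤ 7 * ∑ j, lightE ι o k j f := by
  set F := fun p => mean (f p) with hF
  have hoU : o ∉ (univ.image ι) := by simpa using ho
  have h1 := star_lemma F o _ (univ.image ι) rfl hoU
  rw [Finset.sum_image (fun a _ b _ h => hι h)] at h1
  have hc := card_pos_real (∀ j, Z j)
  have h2 := Finset.sum_le_sum fun j (_ : j ∈ (univ : Finset J)) =>
    light_swapE ι o k j (hk j) (ho j) f
  rw [Finset.sum_add_distrib, ← Finset.mul_sum, ← Finset.mul_sum] at h2
  have h3 : ∑ p, ∑ z, (f p z - F p) ^ 2 ≤ ∑ j, ∑ p, ∑ z, (f p z - cav j (f p) z) ^ 2 := by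
    rw [Finset.sum_comm (s := (univ : Finset J))]
    exact Finset.sum_le_sum fun p _ => efron_stein (f p)
  have h4 : 0 ≤ ∑ j, swapE F o (ι j) := Finset.sum_nonneg fun j _ => swapE_nonneg _ _ _
  have h5 : 0 ≤ ∑ j, ∑ p, ∑ z, (f p z - cav j (f p) z) ^ 2 :=
    Finset.sum_nonneg fun _ _ => Finset.sum_nonneg fun _ _ => Finset.sum_nonneg fun _ _ =>
      sq_nonneg _
  simp_rw [mean_pyth (f _) (gav (insert o (univ.image ι)) F _)]
  rw [Finset.sum_add_distrib, ← Finset.mul_sum]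
  have h6 := mul_le_mul_of_nonneg_left h1 hc.le
  change ∑ p, ∑ z, (f p z - F p) ^ 2 + _ * ∑ p, (F p - _) ^ 2 ≤ _
  nlinarith

theorem light_S2 (hι : Function.Injective ι) (ho : ∀ j, ι j ≠ o)
    (k : ∀ j, K → Z j → K → Z j → ℝ) (hk : ∀ j, TwoCol (k j))
    (f : (X ≃ K) → (∀ j, Z j) → ℝ) :
    (Fintype.card (∀ j, Z j) : ℝ) * ∑ p, (gav (univ.image ι) (fun p => mean (f p)) p
        - gav (insert o (univ.image ι)) (fun p => mean (f p)) p) ^ 2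
      ≤ (∑ j, lightE ι o k j f) / ((Fintype.card J : ℝ) + 1) := by
  set F := fun p => mean (f p) with hF
  have hoU : o ∉ (univ.image ι) := by simpa using ho
  have h1 := swap_lemma hoU F
  rw [Finset.sum_image (fun a _ b _ h => hι h), Finset.card_image_of_injective _ hι,
    Finset.card_univ] at h1
  have hc := card_pos_real (∀ j, Z j)
  have h2 := Finset.sum_le_sum fun j (_ : j ∈ (univ : Finset J)) =>
    light_swapE ι o k j (hk j) (ho j) f
  rw [Finset.sum_add_distrib, ← Finset.mul_sum, ← Finset.mul_sum] at h2
  have h4 : 0 ≤ ∑ j, swapE F o (ι j) := Finset.sum_nonneg fun j _ => swapE_nonneg _ _ _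
  have h5 : 0 ≤ ∑ j, ∑ p, ∑ z, (f p z - cav j (f p) z) ^ 2 :=
    Finset.sum_nonneg fun _ _ => Finset.sum_nonneg fun _ _ => Finset.sum_nonneg fun _ _ =>
      sq_nonneg _
  have h6 := mul_le_mul_of_nonneg_left h1 hc.le
  refine h6.trans ?_
  rw [← mul_div_assoc]
  refine div_le_div_of_nonneg_right ?_ (by positivity)
  change _ * ∑ j, swapE F o (ι j) ≤ _
  nlinarith [mul_nonneg hc.le h4]

end Light

/-! ### Counting star colourings and the root-colour inequality -/

section Count

variable {X K : Type*} [Fintype X] [DecidableEq X] [Fintype K] [DecidableEq K]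

theorem exists_perm_triple {a b c a' b' c' : K} (hab : a ≠ b) (hac : a ≠ c) (hbc : b ≠ c)
    (hab' : a' ≠ b') (hac' : a' ≠ c') (hbc' : b' ≠ c') :
    ∃ g : Equiv.Perm K, g a = a' ∧ g b = b' ∧ g c = c' := by
  have hi : Function.Injective ![a, b, c] := by
    intro i j h
    fin_cases i <;> fin_cases j <;> simp_all
  have hi' : Function.Injective ![a', b', c'] := by
    intro i j h
    fin_cases i <;> fin_cases j <;> simp_all
  obtain ⟨g, hg⟩ := (Equiv.Perm.isMultiplyPretransitive K 3).exists_smul_eq ⟨_, hi⟩ ⟨_, hi'⟩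
  refine ⟨g, ?_, ?_, ?_⟩
  · simpa using congrArg (fun e : Fin 3 ↪ K => e 0) hg
  · simpa using congrArg (fun e : Fin 3 ↪ K => e 1) hg
  · simpa using congrArg (fun e : Fin 3 ↪ K => e 2) hg

/-- Any three positions of a uniform bijection see a uniform injective triple. -/
theorem sum_triple [Nonempty (X ≃ K)] {r h o : X} (hrh : r ≠ h) (hro : r ≠ o) (hho : h ≠ o) :
    ∃ N : ℝ, 0 < N ∧ ∀ φ : K → K → K → ℝ, ∑ p : X ≃ K, φ (p r) (p h) (p o)
      = N * ∑ a, ∑ b ∈ univ.erase a, ∑ c ∈ (univ.erase a).erase b, φ a b c := by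
  obtain ⟨p0⟩ := ‹Nonempty (X ≃ K)›
  let cnt : K → K → K → ℕ := fun a b c =>
    (univ.filter fun p : X ≃ K => p r = a ∧ p h = b ∧ p o = c).card
  refine ⟨cnt (p0 r) (p0 h) (p0 o), ?_, ?_⟩
  · have : 0 < cnt (p0 r) (p0 h) (p0 o) := Finset.card_pos.mpr ⟨p0, by simp⟩
    exact_mod_cast this
  intro φ
  have h1 : ∀ p : X ≃ K, φ (p r) (p h) (p o)
      = ∑ a, ∑ b ∈ univ.erase a, ∑ c ∈ (univ.erase a).erase b,
        if p r = a ∧ p h = b ∧ p o = c then φ a b c else 0 := by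
    intro p
    rw [Finset.sum_eq_single (p r), Finset.sum_eq_single (p h), Finset.sum_eq_single (p o)]
    · simp
    · intro c _ hc; simp [hc.symm]
    · intro hc; exfalso; apply hc; simp [hro.symm, hho.symm]
    · intro c _ hc; simp [hc.symm]
    · intro hc; exfalso; apply hc; simp [hrh.symm]
    · intro c _ hc; simp [hc.symm]
    · simp
  simp_rw [h1]
  rw [Finset.mul_sum, Finset.sum_comm]
  refine Finset.sum_congr rfl fun a _ => ?_
  rw [Finset.mul_sum, Finset.sum_comm]
  refine Finset.sum_congr rfl fun b hb => ?_
  rw [Finset.mul_sum, Finset.sum_comm]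
  refine Finset.sum_congr rfl fun c hc => ?_
  rw [← Finset.sum_filter, Finset.sum_const, nsmul_eq_mul]
  congr 2
  simp only [mem_erase, mem_univ, and_true] at hb hc
  obtain ⟨g, hg1, hg2, hg3⟩ := exists_perm_triple (a := a) (b := b) (c := c)
    (a' := p0 r) (b' := p0 h) (c' := p0 o) hb.symm hc.2.symm hc.1.symm (by simpa using hrh)
    (by simpa using hro) (by simpa using hho)
  refine Finset.card_bij' (fun p _ => p.trans g) (fun p _ => p.trans g.symm) ?_ ?_ ?_ ?_
  · intro p hp; simp at hp ⊢; rw [hp.1, hp.2.1, hp.2.2]; exact ⟨hg1, hg2, hg3⟩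
  · intro p hp; simp at hp ⊢; rw [hp.1, hp.2.1, hp.2.2, ← hg1, ← hg2, ← hg3]; simp
  · intro p hp; ext; simp
  · intro p hp; ext; simp

theorem sum_erase_erase_const {d : ℕ} (hK : Fintype.card K = d + 1) {a b : K} (hb : b ∈ univ.erase a)
    (x : ℝ) : ∑ c ∈ (univ.erase a).erase b, x = ((d : ℝ) - 1) * x := by
  rw [Finset.sum_const, nsmul_eq_mul, Finset.card_erase_of_mem hb,
    Finset.card_erase_of_mem (mem_univ _), Finset.card_univ, hK]
  have : 1 ≤ d := by
    have : 0 < (univ.erase a : Finset K).card := Finset.card_pos.mpr ⟨b, hb⟩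
    rw [Finset.card_erase_of_mem (mem_univ _), Finset.card_univ, hK] at this
    omega
  congr 1
  push_cast [Nat.add_sub_cancel, Nat.cast_sub this]
  ring

theorem sum_erase_const {d : ℕ} (hK : Fintype.card K = d + 1) (a : K)
    (x : ℝ) : ∑ c ∈ univ.erase a, x = (d : ℝ) * x := by
  rw [Finset.sum_const, nsmul_eq_mul, Finset.card_erase_of_mem (mem_univ _), Finset.card_univ, hK]
  simp

theorem sum_erase_eq_sub' {A : Finset K} {a : K} (ha : a ∈ A) (f : K → ℝ) :
    ∑ x ∈ A.erase a, f x = ∑ x ∈ A, f x - f a := by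
  rw [← Finset.sum_erase_add _ _ ha]; ring

/-- Fluctuations of the row means `φ c` of an off-diagonal array `ψ` are controlled by row-to-row
differences and by the fluctuations inside rows. -/
theorem row_mean_ineq {d : ℕ} (hd : 3 ≤ d) (hK : Fintype.card K = d + 1) (ψ : K → K → ℝ) (φ : K → ℝ)
    (hφ : ∀ c, (d : ℝ) * φ c = ∑ x ∈ univ.erase c, ψ c x) (A : Finset K) (hA : 2 ≤ A.card) :
    3 * ∑ c ∈ A, ∑ c' ∈ A, (φ c - φ c') ^ 2
      ≤ 30 / ((d : ℝ) - 1) * ∑ c ∈ A, ∑ c' ∈ A.erase c, ∑ x ∈ (univ.erase c).erase c',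
            (ψ c x - ψ c' x) ^ 2
        + 5 * (A.card : ℝ) / d * ∑ c ∈ A, ∑ x ∈ univ.erase c, (ψ c x - φ c) ^ 2 := by
  have hd' : (3 : ℝ) ≤ d := by exact_mod_cast hd
  have hA' : (2 : ℝ) ≤ A.card := by exact_mod_cast hA
  have hd1 : (0 : ℝ) < (d : ℝ) - 1 := by linarith
  have key : ∀ c c', c' ≠ c → (φ c - φ c') ^ 2
      ≤ 10 / ((d : ℝ) - 1) * ∑ x ∈ (univ.erase c).erase c', (ψ c x - ψ c' x) ^ 2
        + 20 / 9 / ((d : ℝ) - 1) ^ 2 * ((ψ c c' - φ c) ^ 2 + (ψ c' c - φ c') ^ 2) := by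
    intro c c' hcc
    set D := ∑ x ∈ (univ.erase c).erase c', (ψ c x - ψ c' x) with hD
    have hc1 : c' ∈ univ.erase c := by simp [hcc]
    have hc2 : c ∈ univ.erase c' := by simp [hcc.symm]
    have e1 : ((d : ℝ) - 1) * (φ c - φ c') = D + ((ψ c c' - φ c) - (ψ c' c - φ c')) := by
      have e2 : D = (d * φ c - ψ c c') - (d * φ c' - ψ c' c) := by
        rw [hD, Finset.sum_sub_distrib, sum_erase_eq_sub' hc1, ← hφ, Finset.erase_right_comm,
          sum_erase_eq_sub' hc2, ← hφ]
      rw [e2]; ring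
    have e3 : D ^ 2 ≤ ((d : ℝ) - 1) * ∑ x ∈ (univ.erase c).erase c', (ψ c x - ψ c' x) ^ 2 := by
      have h := sq_sum_le_card_mul_sum_sq (s := (univ.erase c).erase c')
        (f := fun x => ψ c x - ψ c' x)
      have h1 := sum_erase_erase_const hK hc1 1
      rw [Finset.sum_const, nsmul_eq_mul, mul_one, mul_one] at h1
      rwa [h1] at h
    set S := ∑ x ∈ (univ.erase c).erase c', (ψ c x - ψ c' x) ^ 2
    set u := ψ c c' - φ c
    set v := ψ c' c - φ c'
    have e4 : ((d : ℝ) - 1) ^ 2 * (φ c - φ c') ^ 2 ≤ 10 * (((d : ℝ) - 1) * S)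
        + 20 / 9 * (u ^ 2 + v ^ 2) := by
      rw [← mul_pow, e1]
      nlinarith [sq_nonneg (9 * D - (u - v)), sq_nonneg (u + v)]
    have e5 : (10 / ((d : ℝ) - 1) * S + 20 / 9 / ((d : ℝ) - 1) ^ 2 * (u ^ 2 + v ^ 2))
        = (10 * (((d : ℝ) - 1) * S) + 20 / 9 * (u ^ 2 + v ^ 2)) / ((d : ℝ) - 1) ^ 2 := by
      field_simp
    rw [e5, le_div_iff₀ (by positivity)]
    linarith
  have h1 : ∑ c ∈ A, ∑ c' ∈ A, (φ c - φ c') ^ 2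
      = ∑ c ∈ A, ∑ c' ∈ A.erase c, (φ c - φ c') ^ 2 := by
    refine Finset.sum_congr rfl fun c hc => ?_
    rw [sum_erase_eq_sub' hc]; simp
  have h2 : ∑ c ∈ A, ∑ c' ∈ A.erase c, (φ c - φ c') ^ 2
      ≤ ∑ c ∈ A, ∑ c' ∈ A.erase c,
        (10 / ((d : ℝ) - 1) * ∑ x ∈ (univ.erase c).erase c', (ψ c x - ψ c' x) ^ 2
        + 20 / 9 / ((d : ℝ) - 1) ^ 2 * ((ψ c c' - φ c) ^ 2 + (ψ c' c - φ c') ^ 2)) :=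
    Finset.sum_le_sum fun c _ => Finset.sum_le_sum fun c' hc' =>
      key c c' (Finset.ne_of_mem_erase hc')
  simp_rw [Finset.sum_add_distrib, ← Finset.mul_sum, Finset.sum_add_distrib] at h2
  have h3 : ∑ c ∈ A, ∑ c' ∈ A.erase c, (ψ c' c - φ c') ^ 2
      = ∑ c ∈ A, ∑ c' ∈ A.erase c, (ψ c c' - φ c) ^ 2 := by
    refine Finset.sum_comm' ?_
    intro x y; simp only [mem_erase]; tauto
  have h4 : ∑ c ∈ A, ∑ c' ∈ A.erase c, (ψ c c' - φ c) ^ 2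
      ≤ ∑ c ∈ A, ∑ x ∈ univ.erase c, (ψ c x - φ c) ^ 2 := by
    refine Finset.sum_le_sum fun c _ => ?_
    refine Finset.sum_le_sum_of_subset_of_nonneg (Finset.erase_subset_erase _ (subset_univ _)) ?_
    intros; positivity
  rw [h3] at h2
  rw [h1]
  set T := ∑ c ∈ A, ∑ c' ∈ A.erase c, ∑ x ∈ (univ.erase c).erase c', (ψ c x - ψ c' x) ^ 2
  set W := ∑ c ∈ A, ∑ x ∈ univ.erase c, (ψ c x - φ c) ^ 2
  set W0 := ∑ c ∈ A, ∑ c' ∈ A.erase c, (ψ c c' - φ c) ^ 2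
  have hW0 : 0 ≤ W0 := by positivity
  have h5 : 3 * (20 / 9 / ((d : ℝ) - 1) ^ 2 * (W0 + W0)) ≤ 5 * (A.card : ℝ) / d * W := by
    have h6 : 3 * (20 / 9 / ((d : ℝ) - 1) ^ 2 * (W0 + W0)) = (40 / 3 / ((d : ℝ) - 1) ^ 2) * W0 := by
      ring
    rw [h6]
    refine mul_le_mul ?_ h4 hW0 (by positivity)
    rw [div_le_div_iff₀ (by positivity) (by positivity)]
    nlinarith [mul_nonneg (sub_nonneg.2 hA') (sq_nonneg ((d : ℝ) - 1))]
  have h7 : 3 * (10 / ((d : ℝ) - 1) * T) = 30 / ((d : ℝ) - 1) * T := by ring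
  linarith

end Count

/-! ### One recursive step: a root edge, one heavy child and the light children -/

section Step

variable {X K J Y : Type*} [Fintype X] [DecidableEq X] [Fintype K] [DecidableEq K]
  [Fintype J] [DecidableEq J] {Z : J → Type*} [∀ j, Fintype (Z j)] [∀ j, Nonempty (Z j)]
  [Fintype Y] [DecidableEq Y] [Nonempty Y]

theorem gav_sq_le (U : Finset X) (F : (X ≃ K) → ℝ) (p : X ≃ K) :
    (gav U F p) ^ 2 ≤ gav U (fun p => F p ^ 2) p :=
  sq_sum_div_le _ _ _ le_rfl (permOn_card_pos U)

theorem gav_sub (U : Finset X) (F H : (X ≃ K) → ℝ) (p : X ≃ K) :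
    gav U (fun p => F p - H p) p = gav U F p - gav U H p := by
  unfold gav; rw [Finset.sum_sub_distrib, sub_div]

/-- Jensen's inequality for `gav U`, with an invariant weight and a commuting permutation. -/
theorem gav_window (U : Finset X) (w : (X ≃ K) → ℝ) (hw : GInv U w) (hw0 : ∀ p, 0 ≤ w p)
    (t : Equiv.Perm X) (ht : ∀ g ∈ permOn U, g * t = t * g) (F H : (X ≃ K) → ℝ) :
    ∑ p, w p * (gav U F p - gav U H (t.trans p)) ^ 2
      ≤ ∑ p, w p * (F p - H (t.trans p)) ^ 2 := by
  have h1 : ∀ p, gav U H (t.trans p) = gav U (fun p => H (t.trans p)) p := by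
    intro p
    unfold gav
    congr 1
    refine Finset.sum_congr rfl fun g hg => ?_
    congr 1
    have := ht g hg
    rw [← Equiv.trans_assoc, ← Equiv.trans_assoc]
    congr 1
    exact this.symm
  simp_rw [h1, ← gav_sub]
  calc ∑ p, w p * (gav U (fun p => F p - H (t.trans p)) p) ^ 2
      ≤ ∑ p, gav U (fun p => (F p - H (t.trans p)) ^ 2) p * w p := by
        refine Finset.sum_le_sum fun p _ => ?_
        rw [mul_comm]
        exact mul_le_mul_of_nonneg_right (gav_sq_le U _ p) (hw0 p)
    _ = ∑ p, w p * (F p - H (t.trans p)) ^ 2 := by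
        rw [sum_gav_mul U _ w hw]
        exact Finset.sum_congr rfl fun p _ => mul_comm _ _

theorem three_sq (a b c e : ℝ) : (a - e) ^ 2 ≤ 3 * (b - a) ^ 2 + 3 * (b - c) ^ 2 + 3 * (c - e) ^ 2 := by
  nlinarith [sq_nonneg ((a - b) - (b - c)), sq_nonneg ((a - b) - (c - e)),
    sq_nonneg ((b - c) - (c - e))]

/-- Comparison of the fully averaged function along moves `t`, through the partially averaged
one. -/
theorem window (U U' : Finset X) (w : (X ≃ K) → Y → Y → ℝ) (hw0 : ∀ p y y', 0 ≤ w p y y')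
    (hw : ∀ y y', GInv U fun p => w p y y')
    (hw1 : ∀ p y, ∑ y', w p y y' ≤ 1) (hw2 : ∀ p y', ∑ y, w p y y' ≤ 1)
    (t : Equiv.Perm X) (ht : ∀ g ∈ permOn U, g * t = t * g)
    (f : (X ≃ K) → Y → (∀ j, Z j) → ℝ) :
    (Fintype.card (∀ j, Z j) : ℝ) * ∑ p, ∑ y, ∑ y', w p y y' *
      (gav U' (fun p => mean (f p y)) p - gav U' (fun p => mean (f p y')) (t.trans p)) ^ 2
    ≤ 6 * ((Fintype.card (∀ j, Z j) : ℝ) * ∑ p, ∑ y,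
        (gav U (fun p => mean (f p y)) p - gav U' (fun p => mean (f p y)) p) ^ 2)
      + 3 * ∑ p, ∑ y, ∑ y', ∑ z, w p y y' * (f p y z - f (t.trans p) y' z) ^ 2 := by
  set M := (Fintype.card (∀ j, Z j) : ℝ) with hM
  have hM0 : 0 < M := card_pos_real _
  set Q := fun (p : X ≃ K) y => gav U (fun p => mean (f p y)) p with hQ
  set G := fun (p : X ≃ K) y => gav U' (fun p => mean (f p y)) p with hG
  change M * ∑ p, ∑ y, ∑ y', w p y y' * (G p y - G (t.trans p) y') ^ 2
    ≤ 6 * (M * ∑ p, ∑ y, (Q p y - G p y) ^ 2) + _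
  have h1 : ∑ p, ∑ y, ∑ y', w p y y' * (G p y - G (t.trans p) y') ^ 2
      ≤ 3 * ∑ p, ∑ y, ∑ y', w p y y' * (Q p y - G p y) ^ 2
        + 3 * ∑ p, ∑ y, ∑ y', w p y y' * (Q p y - Q (t.trans p) y') ^ 2
        + 3 * ∑ p, ∑ y, ∑ y', w p y y' * (Q (t.trans p) y' - G (t.trans p) y') ^ 2 := by
    simp_rw [Finset.mul_sum, ← Finset.sum_add_distrib]
    refine Finset.sum_le_sum fun p _ => Finset.sum_le_sum fun y _ => Finset.sum_le_sum fun y' _ => ?_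
    have := mul_le_mul_of_nonneg_left
      (three_sq (G p y) (Q p y) (Q (t.trans p) y') (G (t.trans p) y')) (hw0 p y y')
    linarith
  have h2 : ∑ p, ∑ y, ∑ y', w p y y' * (Q p y - G p y) ^ 2 ≤ ∑ p, ∑ y, (Q p y - G p y) ^ 2 := by
    refine Finset.sum_le_sum fun p _ => Finset.sum_le_sum fun y _ => ?_
    rw [← Finset.sum_mul]
    exact mul_le_of_le_one_left (sq_nonneg _) (hw1 p y)
  have h3 : ∑ p, ∑ y, ∑ y', w p y y' * (Q (t.trans p) y' - G (t.trans p) y') ^ 2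
      ≤ ∑ p, ∑ y, (Q p y - G p y) ^ 2 := by
    rw [← sum_trans t (fun p => ∑ y, (Q p y - G p y) ^ 2)]
    refine Finset.sum_le_sum fun p _ => ?_
    rw [Finset.sum_comm]
    refine Finset.sum_le_sum fun y _ => ?_
    rw [← Finset.sum_mul]
    exact mul_le_of_le_one_left (sq_nonneg _) (hw2 p y)
  have h4 : M * ∑ p, ∑ y, ∑ y', w p y y' * (Q p y - Q (t.trans p) y') ^ 2
      ≤ ∑ p, ∑ y, ∑ y', ∑ z, w p y y' * (f p y z - f (t.trans p) y' z) ^ 2 := by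
    have h5 : ∑ p, ∑ y, ∑ y', w p y y' * (Q p y - Q (t.trans p) y') ^ 2
        ≤ ∑ p, ∑ y, ∑ y', w p y y' * (mean (f p y) - mean (f (t.trans p) y')) ^ 2 := by
      rw [Finset.sum_comm, Finset.sum_comm (s := (univ : Finset (X ≃ K)))]
      refine Finset.sum_le_sum fun y _ => ?_
      rw [Finset.sum_comm, Finset.sum_comm (s := (univ : Finset (X ≃ K)))]
      refine Finset.sum_le_sum fun y' _ => ?_
      exact gav_window U (fun p => w p y y') (hw y y') (fun p => hw0 p y y') t ht
        (fun p => mean (f p y)) (fun p => mean (f p y'))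
    refine (mul_le_mul_of_nonneg_left h5 hM0.le).trans ?_
    simp_rw [Finset.mul_sum (a := M)]
    refine Finset.sum_le_sum fun p _ => Finset.sum_le_sum fun y _ => Finset.sum_le_sum fun y' _ => ?_
    rw [mul_left_comm, ← Finset.mul_sum, ← mean_sub]
    exact mul_le_mul_of_nonneg_left (mean_sq_le _) (hw0 p y y')
  have h6 := mul_le_mul_of_nonneg_left h1 hM0.le
  have h7 := mul_le_mul_of_nonneg_left h2 hM0.le
  have h8 := mul_le_mul_of_nonneg_left h3 hM0.le
  linarith

/-- The inequality propagated up the tree, for states `(root colour, hidden coordinate)`: `E` is the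
energy of moves keeping the root colour, `R` of moves changing it, `d` the degree and `t` the least
number of root colours allowed. -/
def PIT (d : ℝ) (t : ℕ) (E : K → Y → Y → ℝ) (R : K → Y → K → Y → ℝ) : Prop :=
  ∀ A : Finset K, t ≤ A.card → ∀ g : K → Y → ℝ,
    ∑ c ∈ A, ∑ y, (g c y - mean (g c)) ^ 2
      + 3 * (Fintype.card Y : ℝ) / A.card * ∑ c ∈ A, ∑ c' ∈ A, (mean (g c) - mean (g c')) ^ 2
    ≤ ∑ c ∈ A, ∑ y, ∑ y', E c y y' * (g c y - g c y') ^ 2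
      + 90 * (d / A.card) * ∑ c ∈ A, ∑ c' ∈ A.erase c, ∑ y, ∑ y',
          R c y c' y' * (g c y - g c' y') ^ 2

theorem sum_pair_sq {ι : Type*} (s : Finset ι) (u : ι → ℝ) (m : ℝ)
    (hm : (s.card : ℝ) * m = ∑ i ∈ s, u i) :
    ∑ i ∈ s, ∑ j ∈ s, (u i - u j) ^ 2 = 2 * (s.card : ℝ) * ∑ i ∈ s, (u i - m) ^ 2 := by
  have h0 : ∑ i ∈ s, (u i - m) = 0 := by
    rw [Finset.sum_sub_distrib, Finset.sum_const, nsmul_eq_mul, hm, sub_self]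
  have h1 : ∀ i j, (u i - u j) ^ 2 = ((u i - m) ^ 2 + (u j - m) ^ 2) - 2 * (u i - m) * (u j - m) :=
    fun i j => by ring
  simp_rw [h1, Finset.sum_sub_distrib, Finset.sum_add_distrib, ← Finset.mul_sum, h0]
  simp
  rw [← Finset.mul_sum]
  ring

end Step

section Step

variable {X K J Y : Type*} [Fintype X] [DecidableEq X] [Fintype K] [DecidableEq K]
  [Fintype J] [DecidableEq J] {Z : J → Type*} [∀ j, Fintype (Z j)] [∀ j, Nonempty (Z j)]
  [Fintype Y] [DecidableEq Y] [Nonempty Y]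

/-- The positions around a vertex: root edge `r`, heavy child `h`, missing colour `o`, and the
light children `ι j`. -/
structure StarPos (r h o : X) (ι : J → X) : Prop where
  inj : Function.Injective ι
  rh : r ≠ h
  ro : r ≠ o
  ho : h ≠ o
  ιr : ∀ j, ι j ≠ r
  ιh : ∀ j, ι j ≠ h
  ιo : ∀ j, ι j ≠ o
  cover : ∀ x, x = r ∨ x = h ∨ x = o ∨ ∃ j, x = ι j

theorem permOn_swap_comm {U : Finset X} {a b : X} (ha : a ∉ U) (hb : b ∉ U) :
    ∀ g ∈ permOn U, g * Equiv.swap a b = Equiv.swap a b * g := by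
  intro g hg
  have h := Equiv.mul_swap_eq_swap_mul g a b
  rw [h, mem_permOn.1 hg a ha, mem_permOn.1 hg b hb]

theorem step_arith1 (N d Y M s T V : ℝ) (hd : d ≠ 0) (hs : s ≠ 0) (ha : d - 1 ≠ 0) :
    N * (d - 1) * d * Y * M / s * (30 / (d - 1) * T + 5 * s / d * V)
      = 30 * (d / s) * (M * N * (Y * T)) + 5 * Y * (M * (N * (d - 1))) * V := by
  field_simp

theorem step_arith2 (d s L e : ℝ) : 30 * (d / s) * (6 * (L / e)) = 180 * (d / s / e) * L := by
  ring

set_option maxHeartbeats 1000000 in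
/-- The one-step inequality, for a function supported on root colours in `A`. -/
theorem one_step_core {d : ℕ} (hd : 3 ≤ d) (hK : Fintype.card K = d + 1)
    (hJ : Fintype.card J + 2 = d) [Nonempty (X ≃ K)]
    {r h o : X} {ι : J → X} (hX : StarPos r h o ι)
    (N1 : ℝ) (hN1 : ∀ c, ((univ.filter fun p : X ≃ K => p r = c).card : ℝ) = N1)
    (E : K → Y → Y → ℝ) (R : K → Y → K → Y → ℝ) (hE0 : ∀ c y y', 0 ≤ E c y y')
    (hR0 : ∀ c y c' y', 0 ≤ R c y c' y')
    (hR1 : ∀ c y c', ∑ y', R c y c' y' ≤ 1) (hR2 : ∀ c c' y', ∑ y, R c y c' y' ≤ 1)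
    (hPI : PIT (d : ℝ) 3 E R)
    (k : ∀ j, K → Z j → K → Z j → ℝ) (hk : ∀ j, TwoCol (k j))
    (A : Finset K) (hA : 2 ≤ A.card)
    (f : (X ≃ K) → Y → (∀ j, Z j) → ℝ) (hf : ∀ p, p r ∉ A → ∀ y z, f p y z = 0)
    (Φ : K → ℝ)
    (hΦ : ∀ c, N1 * (Fintype.card Y : ℝ) * (Fintype.card (∀ j, Z j) : ℝ) * Φ c
      = ∑ p ∈ univ.filter (fun p : X ≃ K => p r = c), ∑ y, ∑ z, f p y z) :
    ∑ p, ∑ y, ∑ z, (f p y z - Φ (p r)) ^ 2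
      + 3 * (N1 * (Fintype.card Y : ℝ) * (Fintype.card (∀ j, Z j) : ℝ)) / A.card
        * ∑ c ∈ A, ∑ c' ∈ A, (Φ c - Φ c') ^ 2
    ≤ ∑ p, ∑ y, ∑ y', ∑ z, E (p h) y y' * (f p y z - f p y' z) ^ 2
      + 270 * ((d : ℝ) - 1) * ∑ p, ∑ y, ∑ y', ∑ z, R (p h) y (p o) y'
          * (f p y z - f ((Equiv.swap h o).trans p) y' z) ^ 2
      + 700 * ∑ y, ∑ j, lightE ι o k j (fun p => f p y)
      + 90 * ((d : ℝ) / A.card) * ∑ p ∈ univ.filter (fun p : X ≃ K => p r ∈ A ∧ p o ∈ A),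
          ∑ y, ∑ z, (f p y z - f ((Equiv.swap r o).trans p) y z) ^ 2 := by
  have hd' : (3 : ℝ) ≤ d := by exact_mod_cast hd
  have hA' : (2 : ℝ) ≤ A.card := by exact_mod_cast hA
  have hJ' : (Fintype.card J : ℝ) + 1 = (d : ℝ) - 1 := by
    have : (Fintype.card J : ℝ) + 2 = d := by exact_mod_cast hJ
    linarith
  set M := (Fintype.card (∀ j, Z j) : ℝ) with hM
  have hM0 : 0 < M := card_pos_real _
  set cY := (Fintype.card Y : ℝ) with hYc
  have hcY0 : 0 < cY := card_pos_real _
  set U : Finset X := univ.image ι with hU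
  set U' : Finset X := insert o U with hU'
  have hoU : o ∉ U := by simpa [hU] using hX.ιo
  have hhU : h ∉ U := by simpa [hU] using hX.ιh
  have hrU : r ∉ U := by simpa [hU] using hX.ιr
  have hhU' : h ∉ U' := by simp [hU', hhU, hX.ho]
  have hrU' : r ∉ U' := by simp [hU', hrU, hX.ro]
  have fixg : ∀ {W : Finset X} {x : X}, x ∉ W → ∀ q ∈ permOn W, ∀ p : X ≃ K, (q.trans p) x = p x := by
    intro W x hx q hq p
    rw [Equiv.trans_apply, mem_permOn.1 hq x hx]
  set G : (X ≃ K) → Y → ℝ := fun p y => gav U' (fun p => mean (f p y)) p with hG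
  set Q : (X ≃ K) → Y → ℝ := fun p y => gav U (fun p => mean (f p y)) p with hQ
  -- the averaged function depends on the colours of the root edge and the heavy child only
  obtain ⟨g, hGg⟩ : ∃ g : K → K → Y → ℝ, ∀ p y, G p y = g (p r) (p h) y := by
    refine ⟨fun c a y => if hh : ∃ p : X ≃ K, p r = c ∧ p h = a then G hh.choose y else 0, ?_⟩
    intro p y
    have hh : ∃ p' : X ≃ K, p' r = p r ∧ p' h = p h := ⟨p, rfl, rfl⟩
    simp only [dif_pos hh]
    refine gav_eq_of_agree (gav_inv U' _) ?_
    intro x hx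
    rcases hX.cover x with rfl | rfl | rfl | ⟨j, rfl⟩
    · exact hh.choose_spec.1.symm
    · exact hh.choose_spec.2.symm
    · simp [hU'] at hx
    · simp [hU', hU] at hx
  obtain ⟨N3, hN3, s3⟩ := sum_triple (X := X) (K := K) hX.rh hX.ro hX.ho
  have s2 : ∀ φ : K → K → ℝ, ∑ p : X ≃ K, φ (p r) (p h)
      = N3 * ((d : ℝ) - 1) * ∑ a, ∑ b ∈ univ.erase a, φ a b := by
    intro φ
    rw [s3 (fun a b _ => φ a b), mul_assoc, Finset.mul_sum (a := (d : ℝ) - 1)]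
    congr 1
    refine Finset.sum_congr rfl fun a _ => ?_
    rw [Finset.mul_sum]
    exact Finset.sum_congr rfl fun b hb => sum_erase_erase_const hK hb _
  have hN1' : N1 = N3 * ((d : ℝ) - 1) * d := by
    obtain ⟨p0⟩ := ‹Nonempty (X ≃ K)›
    have e := s2 (fun a _ => if a = p0 r then 1 else 0)
    simp_rw [sum_erase_const hK] at e
    simp at e
    rw [← hN1 (p0 r)]
    simpa using e
  have hd1 : (0 : ℝ) < (d : ℝ) - 1 := by linarith
  set ψ : K → K → ℝ := fun c a => mean (g c a) with hψ
  have hΦψ : ∀ c, (d : ℝ) * Φ c = ∑ a ∈ univ.erase c, ψ c a := by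
    intro c
    have e1 : ∑ p ∈ univ.filter (fun p : X ≃ K => p r = c), ∑ y, ∑ z, f p y z
        = M * (cY * (N3 * ((d : ℝ) - 1) * ∑ a ∈ univ.erase c, ψ c a)) := by
      have e2 : ∀ y, ∑ p : X ≃ K, mean (f p y) * (if p r = c then 1 else 0)
          = N3 * ((d : ℝ) - 1) * ∑ a ∈ univ.erase c, g c a y := by
        intro y
        rw [← sum_gav_mul U' (fun p => mean (f p y)) (fun p => if p r = c then 1 else 0)
          (by intro q hq p; simp only [fixg hrU' q hq p])]
        have e3 : ∀ p : X ≃ K, gav U' (fun p => mean (f p y)) p * (if p r = c then 1 else 0)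
            = g (p r) (p h) y * (if p r = c then 1 else 0) := fun p => by rw [← hGg]
        simp_rw [e3]
        rw [s2 (fun a b => g a b y * (if a = c then 1 else 0))]
        congr 1
        rw [Finset.sum_eq_single c]
        · simp
        · intro b _ hb; simp [hb]
        · simp
      rw [Finset.sum_filter]
      have e4 : ∀ p : X ≃ K, (if p r = c then ∑ y, ∑ z, f p y z else 0)
          = ∑ y, M * (mean (f p y) * (if p r = c then 1 else 0)) := by
        intro p
        split_ifs with hp
        · refine Finset.sum_congr rfl fun y _ => ?_
          rw [mul_one, card_mul_mean]
        · simp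
      simp_rw [e4]
      rw [Finset.sum_comm]
      simp_rw [← Finset.mul_sum, e2]
      rw [← Finset.mul_sum, Finset.sum_comm]
      have e5 : ∀ a, ∑ y, g c a y = cY * ψ c a := fun a => (card_mul_mean _).symm
      simp_rw [e5]
      rw [← Finset.mul_sum]
      ring
    have e6 := hΦ c
    rw [e1, hN1'] at e6
    have : M * cY * (N3 * ((d : ℝ) - 1)) ≠ 0 := by positivity
    apply mul_left_cancel₀ this
    linarith
  set L := ∑ y, ∑ j, lightE ι o k j (fun p => f p y) with hL
  -- orthogonal decomposition of the variance
  have t1 : ∑ p, ∑ y, ∑ z, (f p y z - Φ (p r)) ^ 2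
      = ∑ y, ∑ p, ∑ z, (f p y z - G p y) ^ 2 + M * ∑ p, ∑ y, (G p y - Φ (p r)) ^ 2 := by
    rw [Finset.sum_comm, Finset.sum_comm (s := (univ : Finset (X ≃ K)))
      (f := fun p y => (G p y - Φ (p r)) ^ 2), Finset.mul_sum, ← Finset.sum_add_distrib]
    refine Finset.sum_congr rfl fun y _ => ?_
    have e1 : ∀ p : X ≃ K, ∑ z, (f p y z - Φ (p r)) ^ 2
        = ∑ z, (f p y z - mean (f p y)) ^ 2 + M * (mean (f p y) - Φ (p r)) ^ 2 :=
      fun p => mean_pyth _ _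
    have e2 : ∀ p : X ≃ K, ∑ z, (f p y z - G p y) ^ 2
        = ∑ z, (f p y z - mean (f p y)) ^ 2 + M * (mean (f p y) - G p y) ^ 2 :=
      fun p => mean_pyth _ _
    simp_rw [e1, e2]
    rw [Finset.sum_add_distrib, Finset.sum_add_distrib, ← Finset.mul_sum, ← Finset.mul_sum,
      gav_pyth U' (fun p => mean (f p y)) (fun p => Φ (p r))
        (by intro q hq p; simp only [fixg hrU' q hq p])]
    ring
  have t2 : ∑ y, ∑ p, ∑ z, (f p y z - G p y) ^ 2 ≤ 7 * L := by
    rw [hL, Finset.mul_sum]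
    exact Finset.sum_le_sum fun y _ => light_S1 ι o hX.inj hX.ιo k hk (fun p => f p y)
  have tQ : M * ∑ p, ∑ y, (Q p y - G p y) ^ 2 ≤ L / ((d : ℝ) - 1) := by
    rw [hL, Finset.sum_div, Finset.sum_comm, Finset.mul_sum]
    refine Finset.sum_le_sum fun y _ => ?_
    have := light_S2 ι o hX.inj hX.ιo k hk (fun p => f p y)
    rwa [hJ'] at this
  have hL0 : 0 ≤ L := by
    have : 0 ≤ ∑ y, ∑ p, ∑ z, (f p y z - G p y) ^ 2 := by positivity
    linarith
  have t3 : M * ∑ p, ∑ y, (G p y - Φ (p r)) ^ 2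
      = M * (N3 * ((d : ℝ) - 1)) * ∑ c, (∑ a ∈ univ.erase c, ∑ y, (g c a y - ψ c a) ^ 2
          + cY * ∑ a ∈ univ.erase c, (ψ c a - Φ c) ^ 2) := by
    simp_rw [hGg]
    rw [s2 (fun c a => ∑ y, (g c a y - Φ c) ^ 2)]
    have e1 : ∀ c a, ∑ y, (g c a y - Φ c) ^ 2
        = ∑ y, (g c a y - ψ c a) ^ 2 + cY * (ψ c a - Φ c) ^ 2 := fun c a => mean_pyth _ _
    simp_rw [e1, Finset.sum_add_distrib, ← Finset.mul_sum]
    ring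
  -- the inequality for the heavy child, at a fixed root colour
  have t4 : ∀ c, ∑ a ∈ univ.erase c, ∑ y, (g c a y - ψ c a) ^ 2
        + 6 * cY * ∑ a ∈ univ.erase c, (ψ c a - Φ c) ^ 2
      ≤ ∑ a ∈ univ.erase c, ∑ y, ∑ y', E a y y' * (g c a y - g c a y') ^ 2
        + 90 * ∑ a ∈ univ.erase c, ∑ b ∈ (univ.erase c).erase a, ∑ y, ∑ y',
            R a y b y' * (g c a y - g c b y') ^ 2 := by
    intro c
    have hcard : (univ.erase c : Finset K).card = d := by
      rw [Finset.card_erase_of_mem (mem_univ _), Finset.card_univ, hK]; rfl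
    have := hPI (univ.erase c) (by omega) (g c)
    rw [hcard, sum_pair_sq (univ.erase c) (fun a => mean (g c a)) (Φ c)
      (by rw [hcard]; exact hΦψ c), hcard] at this
    have e1 : 90 * ((d : ℝ) / d) = 90 := by field_simp
    rw [e1] at this
    refine le_trans (le_of_eq ?_) this
    rw [hψ]
    field_simp
    ring
  have t5 : M * (N3 * ((d : ℝ) - 1)) * ∑ c, ∑ a ∈ univ.erase c, ∑ y, ∑ y',
        E a y y' * (g c a y - g c a y') ^ 2
      ≤ ∑ p, ∑ y, ∑ y', ∑ z, E (p h) y y' * (f p y z - f p y' z) ^ 2 := by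
    rw [mul_assoc, ← s2 (fun c a => ∑ y, ∑ y', E a y y' * (g c a y - g c a y') ^ 2)]
    simp_rw [← hGg]
    have e1 : ∑ p : X ≃ K, ∑ y, ∑ y', E (p h) y y' * (G p y - G p y') ^ 2
        ≤ ∑ p : X ≃ K, ∑ y, ∑ y', E (p h) y y' * (mean (f p y) - mean (f p y')) ^ 2 := by
      rw [Finset.sum_comm, Finset.sum_comm (s := (univ : Finset (X ≃ K)))]
      refine Finset.sum_le_sum fun y _ => ?_
      rw [Finset.sum_comm, Finset.sum_comm (s := (univ : Finset (X ≃ K)))]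
      refine Finset.sum_le_sum fun y' _ => ?_
      exact gav_window U' (fun p => E (p h) y y') (by intro q hq p; simp only [fixg hhU' q hq p])
        (fun p => hE0 _ y y') 1 (by simp)
        (fun p => mean (f p y)) (fun p => mean (f p y'))
    refine (mul_le_mul_of_nonneg_left e1 hM0.le).trans ?_
    simp_rw [Finset.mul_sum (a := M)]
    refine Finset.sum_le_sum fun p _ => Finset.sum_le_sum fun y _ => Finset.sum_le_sum fun y' _ => ?_
    rw [mul_left_comm, ← Finset.mul_sum, ← mean_sub]
    exact mul_le_mul_of_nonneg_left (mean_sq_le _) (hE0 _ y y')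
  set RH := ∑ p, ∑ y, ∑ y', ∑ z, R (p h) y (p o) y'
          * (f p y z - f ((Equiv.swap h o).trans p) y' z) ^ 2 with hRH
  have t6 : M * (N3 * ((d : ℝ) - 1)) * ∑ c, ∑ a ∈ univ.erase c, ∑ b ∈ (univ.erase c).erase a,
        ∑ y, ∑ y', R a y b y' * (g c a y - g c b y') ^ 2
      ≤ 6 * L + 3 * ((d : ℝ) - 1) * RH := by
    have e1 := window U U' (fun p y y' => R (p h) y (p o) y') (fun p y y' => hR0 _ _ _ _)
      (by intro y y' q hq p; simp only [fixg hhU q hq p, fixg hoU q hq p])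
      (fun p y => hR1 _ _ _) (fun p y' => hR2 _ _ _) (Equiv.swap h o)
      (permOn_swap_comm hhU hoU) f
    have e2 : ∑ p : X ≃ K, ∑ y, ∑ y', R (p h) y (p o) y'
        * (G p y - G ((Equiv.swap h o).trans p) y') ^ 2
        = N3 * ∑ c, ∑ a ∈ univ.erase c, ∑ b ∈ (univ.erase c).erase a,
          ∑ y, ∑ y', R a y b y' * (g c a y - g c b y') ^ 2 := by
      rw [← s3 (fun c a b => ∑ y, ∑ y', R a y b y' * (g c a y - g c b y') ^ 2)]
      simp_rw [hGg]
      simp [Equiv.swap_apply_of_ne_of_ne hX.rh hX.ro]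
    change M * ∑ p : X ≃ K, ∑ y, ∑ y', R (p h) y (p o) y'
        * (G p y - G ((Equiv.swap h o).trans p) y') ^ 2
        ≤ 6 * (M * ∑ p, ∑ y, (Q p y - G p y) ^ 2) + 3 * RH at e1
    rw [e2] at e1
    have e3 := mul_le_mul_of_nonneg_left e1 hd1.le
    have e4 : ((d : ℝ) - 1) * (M * ∑ p, ∑ y, (Q p y - G p y) ^ 2) ≤ L := by
      have := mul_le_mul_of_nonneg_left tQ hd1.le
      rwa [mul_div_cancel₀ _ hd1.ne'] at this
    linarith
  -- fluctuations of the mean over the root colour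
  have t7 := row_mean_ineq hd hK ψ Φ hΦψ A hA
  set RO := ∑ p ∈ univ.filter (fun p : X ≃ K => p r ∈ A ∧ p o ∈ A),
          ∑ y, ∑ z, (f p y z - f ((Equiv.swap r o).trans p) y z) ^ 2 with hRO
  have t8 : M * N3 * (cY * ∑ c ∈ A, ∑ c' ∈ A.erase c, ∑ x ∈ (univ.erase c).erase c',
            (ψ c x - ψ c' x) ^ 2)
      ≤ 6 * (L / ((d : ℝ) - 1)) + 3 * RO := by
    have e1 := window U U' (fun p y y' => if (p r ∈ A ∧ p o ∈ A) ∧ y = y' then (1 : ℝ) else 0)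
      (fun p y y' => by positivity)
      (by intro y y' q hq p; simp only [fixg hrU q hq p, fixg hoU q hq p])
      (fun p y => by
        by_cases hp : p r ∈ A ∧ p o ∈ A <;> simp [hp])
      (fun p y' => by
        by_cases hp : p r ∈ A ∧ p o ∈ A <;> simp [hp]) (Equiv.swap r o)
      (permOn_swap_comm hrU hoU) f
    have e2 : ∑ p : X ≃ K, ∑ y, ∑ y', (if (p r ∈ A ∧ p o ∈ A) ∧ y = y' then (1 : ℝ) else 0)
        * (G p y - G ((Equiv.swap r o).trans p) y') ^ 2
        = N3 * ∑ c, ∑ a ∈ univ.erase c, ∑ b ∈ (univ.erase c).erase a,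
          if c ∈ A ∧ b ∈ A then ∑ y, (g c a y - g b a y) ^ 2 else 0 := by
      rw [← s3 (fun c a b => if c ∈ A ∧ b ∈ A then ∑ y, (g c a y - g b a y) ^ 2 else 0)]
      simp_rw [hGg]
      refine Finset.sum_congr rfl fun p _ => ?_
      by_cases hp : p r ∈ A ∧ p o ∈ A
      · simp [hp, Equiv.swap_apply_of_ne_of_ne hX.rh.symm hX.ho]
      · simp [hp]
    have e3 : ∑ p : X ≃ K, ∑ y, ∑ y', ∑ z,
        (if (p r ∈ A ∧ p o ∈ A) ∧ y = y' then (1 : ℝ) else 0)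
        * (f p y z - f ((Equiv.swap r o).trans p) y' z) ^ 2 = RO := by
      rw [hRO, Finset.sum_filter]
      refine Finset.sum_congr rfl fun p _ => ?_
      by_cases hp : p r ∈ A ∧ p o ∈ A
      · simp only [hp, if_true, and_self, true_and]
        refine Finset.sum_congr rfl fun y _ => ?_
        rw [Finset.sum_eq_single y]
        · simp
        · intro b _ hb; simp [hb.symm]
        · simp
      · simp [hp]
    rw [e3] at e1
    change M * ∑ p : X ≃ K, ∑ y, ∑ y', (if (p r ∈ A ∧ p o ∈ A) ∧ y = y' then (1 : ℝ) else 0)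
        * (G p y - G ((Equiv.swap r o).trans p) y') ^ 2
        ≤ 6 * (M * ∑ p, ∑ y, (Q p y - G p y) ^ 2) + 3 * RO at e1
    rw [e2] at e1
    have e4 : ∑ c, ∑ a ∈ univ.erase c, ∑ b ∈ (univ.erase c).erase a,
          (if c ∈ A ∧ b ∈ A then ∑ y, (g c a y - g b a y) ^ 2 else 0)
        = ∑ c ∈ A, ∑ c' ∈ A.erase c, ∑ x ∈ (univ.erase c).erase c', ∑ y, (g c x y - g c' x y) ^ 2 := by
      rw [← Finset.sum_subset (subset_univ A)]
      · refine Finset.sum_congr rfl fun c hc => ?_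
        rw [Finset.sum_comm' (t' := univ.erase c) (s' := fun b => (univ.erase c).erase b)
          (by intro x y; simp only [mem_erase, mem_univ, and_true]; tauto)]
        rw [← Finset.sum_subset (Finset.erase_subset_erase c (subset_univ A))]
        · refine Finset.sum_congr rfl fun b hb => ?_
          simp [hc, Finset.mem_of_mem_erase hb]
        · intro b hb hbA
          have : b ∉ A := fun hb' => hbA (by simp only [mem_erase] at hb ⊢; exact ⟨hb.1, hb'⟩)
          simp [this]
      · intro c _ hc; simp [hc]
    rw [e4] at e1
    have e5 : cY * ∑ c ∈ A, ∑ c' ∈ A.erase c, ∑ x ∈ (univ.erase c).erase c', (ψ c x - ψ c' x) ^ 2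
        ≤ ∑ c ∈ A, ∑ c' ∈ A.erase c, ∑ x ∈ (univ.erase c).erase c', ∑ y, (g c x y - g c' x y) ^ 2 := by
      simp_rw [Finset.mul_sum]
      refine Finset.sum_le_sum fun c _ => Finset.sum_le_sum fun c' _ =>
        Finset.sum_le_sum fun x _ => ?_
      rw [hψ]
      simp only
      rw [← mean_sub]
      exact mean_sq_le _
    have e6 := mul_le_mul_of_nonneg_left e5 (mul_nonneg hM0.le hN3.le)
    linarith
  have t9 : ∑ c ∈ A, ∑ x ∈ univ.erase c, (ψ c x - Φ c) ^ 2
      ≤ ∑ c, ∑ x ∈ univ.erase c, (ψ c x - Φ c) ^ 2 :=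
    Finset.sum_le_sum_of_subset_of_nonneg (subset_univ A) (fun _ _ _ => by positivity)
  have t10 := Finset.sum_le_sum fun c (_ : c ∈ (univ : Finset K)) => t4 c
  rw [Finset.sum_add_distrib, Finset.sum_add_distrib, ← Finset.mul_sum, ← Finset.mul_sum] at t10
  have hM3 : 0 ≤ M * (N3 * ((d : ℝ) - 1)) := by positivity
  have t11 := mul_le_mul_of_nonneg_left t10 hM3
  rw [Finset.sum_add_distrib, ← Finset.mul_sum] at t3
  set V1 := ∑ c, ∑ a ∈ univ.erase c, ∑ y, (g c a y - ψ c a) ^ 2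
  set V2 := ∑ c, ∑ x ∈ univ.erase c, (ψ c x - Φ c) ^ 2
  set V2A := ∑ c ∈ A, ∑ x ∈ univ.erase c, (ψ c x - Φ c) ^ 2
  set TT := ∑ c ∈ A, ∑ c' ∈ A.erase c, ∑ x ∈ (univ.erase c).erase c', (ψ c x - ψ c' x) ^ 2
  set P2 := ∑ c ∈ A, ∑ c' ∈ A, (Φ c - Φ c') ^ 2
  set RHs := ∑ c, ∑ a ∈ univ.erase c, ∑ b ∈ (univ.erase c).erase a,
        ∑ y, ∑ y', R a y b y' * (g c a y - g c b y') ^ 2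
  set EHs := ∑ c, ∑ a ∈ univ.erase c, ∑ y, ∑ y', E a y y' * (g c a y - g c a y') ^ 2
  set EHf := ∑ p, ∑ y, ∑ y', ∑ z, E (p h) y y' * (f p y z - f p y' z) ^ 2
  have u1 : 3 * (N1 * cY * M) / A.card * P2
      ≤ 5 * cY * (M * (N3 * ((d : ℝ) - 1))) * V2 + 135 * L + 90 * ((d : ℝ) / A.card) * RO := by
    have hw : 0 ≤ N1 * cY * M / A.card := by rw [hN1']; positivity
    have v1 := mul_le_mul_of_nonneg_left t7 hw
    have v2 : N1 * cY * M / A.card * (3 * P2) = 3 * (N1 * cY * M) / A.card * P2 := by ring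
    have v3 : N1 * cY * M / A.card * (30 / ((d : ℝ) - 1) * TT + 5 * (A.card : ℝ) / d * V2A)
        = 30 * ((d : ℝ) / A.card) * (M * N3 * (cY * TT))
          + 5 * cY * (M * (N3 * ((d : ℝ) - 1))) * V2A := by
      rw [hN1']
      exact step_arith1 _ _ _ _ _ _ _ (by positivity) (by positivity) hd1.ne'
    have v4 : 30 * ((d : ℝ) / A.card) * (M * N3 * (cY * TT))
        ≤ 30 * ((d : ℝ) / A.card) * (6 * (L / ((d : ℝ) - 1)) + 3 * RO) :=
      mul_le_mul_of_nonneg_left t8 (by positivity)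
    have v5 : 5 * cY * (M * (N3 * ((d : ℝ) - 1))) * V2A
        ≤ 5 * cY * (M * (N3 * ((d : ℝ) - 1))) * V2 :=
      mul_le_mul_of_nonneg_left t9 (by positivity)
    have v6 : 30 * ((d : ℝ) / A.card) * (6 * (L / ((d : ℝ) - 1))) ≤ 135 * L := by
      have w1 : (d : ℝ) / A.card / ((d : ℝ) - 1) ≤ 3 / 4 := by
        rw [div_div, div_le_iff₀ (by positivity)]
        nlinarith
      have w2 : 30 * ((d : ℝ) / A.card) * (6 * (L / ((d : ℝ) - 1)))
          = 180 * ((d : ℝ) / A.card / ((d : ℝ) - 1)) * L := by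
        exact step_arith2 _ _ _ _
      rw [w2]
      nlinarith
    linarith
  rw [t1, t3]
  linarith

end Step

/-! ### Gluing colourings around a vertex -/

section Glue

variable {I K C : Type} [DecidableEq I] [Fintype K] [DecidableEq K] [Fintype C] [DecidableEq C]

/-- Colourings of the edge set `E`, proper for the incidence relation `inc` and frozen to `μ`
outside `E`. -/
def IsCol (inc : I → I → Prop) (μ : I → K) (E : Finset I) (σ : I → K) : Prop :=
  (∀ e ∈ E, ∀ f ∈ E, inc e f → σ e ≠ σ f) ∧ ∀ e, e ∉ E → σ e = μ e

/-- `σ` and `τ` differ at `a` and nowhere else. -/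
def DiffAt (a : I) (σ τ : I → K) : Prop := σ a ≠ τ a ∧ ∀ b, b ≠ a → σ b = τ b

/-- Indicator that `σ'` arises from `σ` by an allowed recolouring of the single edge `a`. -/
noncomputable def mv (allow : I → K → K → Prop) (a : I) (σ σ' : I → K) : ℝ :=
  if DiffAt a σ σ' ∧ allow a (σ a) (σ' a) then 1 else 0

theorem mv_nonneg (allow : I → K → K → Prop) (a : I) (σ σ' : I → K) : 0 ≤ mv allow a σ σ' := by
  unfold mv; split_ifs <;> norm_num

theorem mv_le {allow : I → K → K → Prop} {a : I} {σ σ' τ τ' : I → K}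
    (h : DiffAt a σ σ' → DiffAt a τ τ') (h1 : σ a = τ a) (h2 : σ' a = τ' a) :
    mv allow a σ σ' ≤ mv allow a τ τ' := by
  unfold mv
  rw [h1, h2]
  by_cases h3 : DiffAt a σ σ' ∧ allow a (τ a) (τ' a)
  · rw [if_pos h3, if_pos ⟨h h3.1, h3.2⟩]
  · rw [if_neg h3]; split_ifs <;> norm_num

/-- `D` parametrises the colourings of `E` by the colour of the edge `r` and a hidden coordinate
in a set `Y` that does not depend on that colour. -/
structure Triv {Y : Type} (inc : I → I → Prop) (μ : I → K) (E : Finset I) (r : I)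
    (D : K → Y → I → K) : Prop where
  root : ∀ c y, D c y r = c
  col : ∀ c y, IsCol inc μ E (D c y)
  inj : ∀ c y y', D c y = D c y' → y = y'
  surj : ∀ σ, IsCol inc μ E σ → ∃ c y, D c y = σ

/-- A set `U` of edges containing `r`, and edge sets `E c` rooted at `l c`, such that the only
incidences between different sets are among `r` and the `l c`, which form a star. -/
structure StarG (inc : I → I → Prop) (U : Finset I) (r : I) (l : C → I) (E : C → Finset I) :
    Prop where
  symm : ∀ a b, inc a b → inc b a
  rU : r ∈ U
  lE : ∀ c, l c ∈ E c
  dU : ∀ c, ∀ i ∈ U, i ∉ E c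
  dE : ∀ c c', c ≠ c' → ∀ i ∈ E c, i ∉ E c'
  incU : ∀ c, ∀ i ∈ U, ∀ i' ∈ E c, (inc i i' ↔ i = r ∧ i' = l c)
  incE : ∀ c c', c ≠ c' → ∀ i ∈ E c, ∀ i' ∈ E c', (inc i i' ↔ i = l c ∧ i' = l c')

variable {inc : I → I → Prop} {μ : I → K} {U : Finset I} {r : I} {l : C → I} {E : C → Finset I}
variable {Y : C → Type}

/-- The colouring that is `u` on `U` and is given on `E c` by the root colour `p c` and the hidden
coordinate `w c`. Positions around the vertex: `none` is `r`, `some none` is the colour missing at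
the vertex, `some (some c)` is `l c`. -/
noncomputable def glue (μ : I → K) (U : Finset I) (E : C → Finset I)
    (D : ∀ c, K → Y c → I → K) (u : I → K) (p : Option (Option C) ≃ K) (w : ∀ c, Y c) : I → K :=
  fun i => if i ∈ U then u i else
    if h : ∃ c, i ∈ E c then D h.choose (p (some (some h.choose))) (w h.choose) i else μ i

variable {D : ∀ c, K → Y c → I → K}

theorem glue_U {u : I → K} {p : Option (Option C) ≃ K} {w : ∀ c, Y c} {i : I} (hi : i ∈ U) :
    glue μ U E D u p w i = u i := by
  simp [glue, hi]

theorem glue_E (hS : StarG inc U r l E) {u : I → K} {p : Option (Option C) ≃ K} {w : ∀ c, Y c}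
    {i : I} {c : C} (hi : i ∈ E c) :
    glue μ U E D u p w i = D c (p (some (some c))) (w c) i := by
  have h1 : i ∉ U := fun h => hS.dU c i h hi
  have h2 : ∃ c, i ∈ E c := ⟨c, hi⟩
  have h3 : h2.choose = c := by
    by_contra h
    exact hS.dE _ _ h i h2.choose_spec hi
  simp only [glue, h1, if_false, h2, dif_pos]
  rw [h3]

theorem glue_off {u : I → K} {p : Option (Option C) ≃ K} {w : ∀ c, Y c}
    {i : I} (hU : i ∉ U) (hi : ∀ c, i ∉ E c) :
    glue μ U E D u p w i = μ i := by
  simp [glue, hU, hi]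

theorem glue_l (hS : StarG inc U r l E) (hD : ∀ c, Triv inc μ (E c) (l c) (D c))
    {u : I → K} {p : Option (Option C) ≃ K} {w : ∀ c, Y c} (c : C) :
    glue μ U E D u p w (l c) = p (some (some c)) := by
  rw [glue_E hS (hS.lE c), (hD c).root]

theorem glue_cases (i : I) (U : Finset I) (E : C → Finset I) :
    i ∈ U ∨ (∃ c, i ∈ E c) ∨ (i ∉ U ∧ ∀ c, i ∉ E c) := by
  by_cases h : i ∈ U
  · exact Or.inl h
  by_cases h2 : ∃ c, i ∈ E c
  · exact Or.inr (Or.inl h2)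
  · exact Or.inr (Or.inr ⟨h, not_exists.1 h2⟩)

/-- All the edges involved in a star of edge sets. -/
noncomputable def starEdges (U : Finset I) (E : C → Finset I) : Finset I := U ∪ univ.biUnion E

theorem mem_starEdges {i : I} : i ∈ starEdges U E ↔ i ∈ U ∨ ∃ c, i ∈ E c := by
  simp [starEdges]

theorem glue_col (hS : StarG inc U r l E) (hD : ∀ c, Triv inc μ (E c) (l c) (D c))
    {u : I → K} {p : Option (Option C) ≃ K} {w : ∀ c, Y c} (hu : IsCol inc μ U u)
    (hp : p none = u r) : IsCol inc μ (starEdges U E) (glue μ U E D u p w) := by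
  constructor
  · intro e he f hf hef
    rw [mem_starEdges] at he hf
    rcases he with he | ⟨c, he⟩ <;> rcases hf with hf | ⟨c', hf⟩
    · rw [glue_U he, glue_U hf]; exact hu.1 e he f hf hef
    · obtain ⟨rfl, rfl⟩ := (hS.incU c' e he f hf).1 hef
      rw [glue_U he, glue_l hS hD, ← hp]
      exact fun h => by simpa using p.injective h
    · obtain ⟨rfl, rfl⟩ := (hS.incU c f hf e he).1 (hS.symm _ _ hef)
      rw [glue_U hf, glue_l hS hD, ← hp]
      exact fun h => by simpa using p.injective h
    · by_cases hc : c = c'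
      · subst hc
        rw [glue_E hS he, glue_E hS hf]
        exact ((hD c).col _ _).1 e he f hf hef
      · obtain ⟨rfl, rfl⟩ := (hS.incE c c' hc e he f hf).1 hef
        rw [glue_l hS hD, glue_l hS hD]
        exact fun h => hc (by simpa using p.injective h)
  · intro e he
    rw [mem_starEdges, not_or, not_exists] at he
    exact glue_off he.1 he.2

theorem glue_inj (hS : StarG inc U r l E) (hD : ∀ c, Triv inc μ (E c) (l c) (D c))
    {u u' : I → K} {p p' : Option (Option C) ≃ K} {w w' : ∀ c, Y c}
    (hu : IsCol inc μ U u) (hp : p none = u r) (hu' : IsCol inc μ U u') (hp' : p' none = u' r)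
    (h : glue μ U E D u p w = glue μ U E D u' p' w') : u = u' ∧ p = p' ∧ w = w' := by
  have h1 : u = u' := by
    funext i
    by_cases hi : i ∈ U
    · have := congrFun h i
      rwa [glue_U hi, glue_U hi] at this
    · rw [hu.2 i hi, hu'.2 i hi]
  have h2 : ∀ c, p (some (some c)) = p' (some (some c)) := by
    intro c
    have := congrFun h (l c)
    rwa [glue_l hS hD, glue_l hS hD] at this
  have h3 : p none = p' none := by rw [hp, hp', h1]
  have h5 : ∀ x, x ≠ some none → p x = p' x := by
    rintro (_ | _ | c) hx
    · exact h3
    · exact absurd rfl hx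
    · exact h2 c
  have h4 : p = p' := by
    ext x
    by_cases hx : x = some none
    · subst hx
      obtain ⟨x, hx⟩ := p'.surjective (p (some none))
      by_cases hx' : x = some none
      · rw [← hx, hx']
      · rw [← h5 x hx'] at hx
        exact absurd (p.injective hx) hx'
    · exact h5 x hx
  refine ⟨h1, h4, ?_⟩
  funext c
  apply (hD c).inj (p (some (some c)))
  funext i
  by_cases hi : i ∈ E c
  · have := congrFun h i
    rwa [glue_E hS hi, glue_E hS hi, ← h2] at this
  · rw [((hD c).col _ _).2 i hi, ((hD c).col _ _).2 i hi]

/-- Every colouring of the star is glued from its restriction to `U`, the bijection of positions with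
colours around the vertex, and the hidden coordinates of the child subtrees. -/
theorem glue_surj (hS : StarG inc U r l E) (hD : ∀ c, Triv inc μ (E c) (l c) (D c))
    (hC : Fintype.card C + 2 = Fintype.card K) {σ : I → K}
    (hσ : IsCol inc μ (starEdges U E) σ) :
    ∃ u p w, IsCol inc μ U u ∧ p none = u r ∧ glue μ U E D u p w = σ := by
  set u : I → K := fun i => if i ∈ U then σ i else μ i with hu
  have key : ∀ c, ∃ y : Y c, D c (σ (l c)) y = fun i => if i ∈ E c then σ i else μ i := by
    intro c
    obtain ⟨a, y, h⟩ := (hD c).surj (fun i => if i ∈ E c then σ i else μ i) (by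
      constructor
      · intro e he f hf hef
        simp only [he, hf, if_true]
        exact hσ.1 e (mem_starEdges.2 (Or.inr ⟨c, he⟩)) f (mem_starEdges.2 (Or.inr ⟨c, hf⟩)) hef
      · intro e he; simp [he])
    have h2 := congrFun h (l c)
    rw [(hD c).root] at h2
    simp only [hS.lE c, if_true] at h2
    exact ⟨y, by rw [← h2]; exact h⟩
  choose w hw using key
  have hinc : ∀ c c', c ≠ c' → inc (l c) (l c') := fun c c' h =>
    (hS.incE c c' h _ (hS.lE c) _ (hS.lE c')).2 ⟨rfl, rfl⟩
  have hincr : ∀ c, inc r (l c) := fun c => (hS.incU c r hS.rU _ (hS.lE c)).2 ⟨rfl, rfl⟩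
  have hrm : r ∈ starEdges U E := mem_starEdges.2 (Or.inl hS.rU)
  have hlm : ∀ c, l c ∈ starEdges U E := fun c => mem_starEdges.2 (Or.inr ⟨c, hS.lE c⟩)
  -- the colours around the vertex leave exactly one colour for the position `some none`
  set φ : Option C → K := fun x => x.elim (σ r) (fun c => σ (l c)) with hφ
  have hφi : Function.Injective φ := by
    rintro (_ | c) (_ | c') h
    · rfl
    · exact absurd h (hσ.1 _ hrm _ (hlm c') (hincr c'))
    · exact absurd h.symm (hσ.1 _ hrm _ (hlm c) (hincr c))
    · by_contra hc
      exact hσ.1 _ (hlm c) _ (hlm c') (hinc c c' (fun h => hc (by rw [h]))) h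
  obtain ⟨k0, hk0⟩ : ∃ k0, ∀ x, φ x ≠ k0 := by
    by_contra hcon
    push Not at hcon
    have := Fintype.card_le_of_surjective φ hcon
    simp at this
    omega
  set ψ : Option (Option C) → K := fun x => match x with
    | none => σ r
    | some none => k0
    | some (some c) => σ (l c) with hψ
  have hψi : Function.Injective ψ := by
    rintro (_ | _ | c) (_ | _ | c') h
    · rfl
    · exact absurd h (hk0 none)
    · have := hφi (a₁ := none) (a₂ := some c') h; simp at this
    · exact absurd h.symm (hk0 none)
    · rfl
    · exact absurd h.symm (hk0 (some c'))
    · have := hφi (a₁ := some c) (a₂ := none) h; simp at this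
    · exact absurd h (hk0 (some c))
    · have := hφi (a₁ := some c) (a₂ := some c') h; rw [this]
  have hψb : Function.Bijective ψ := by
    rw [Fintype.bijective_iff_injective_and_card]
    exact ⟨hψi, by simp; omega⟩
  refine ⟨u, Equiv.ofBijective ψ hψb, w, ?_, ?_, ?_⟩
  · constructor
    · intro e he f hf hef
      simp only [hu, he, hf, if_true]
      exact hσ.1 e (mem_starEdges.2 (Or.inl he)) f (mem_starEdges.2 (Or.inl hf)) hef
    · intro e he; simp [hu, he]
  · simp [hψ, hu, hS.rU]
  · funext i
    rcases glue_cases i U E with hi | ⟨c, hi⟩ | ⟨hi, hi'⟩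
    · rw [glue_U hi]; simp [hu, hi]
    · rw [glue_E hS hi]
      have : (Equiv.ofBijective ψ hψb) (some (some c)) = σ (l c) := rfl
      rw [this, hw c]; simp [hi]
    · rw [glue_off hi hi']
      refine (hσ.2 i ?_).symm
      rw [mem_starEdges, not_or, not_exists]
      exact ⟨hi, hi'⟩

/-- Recolouring one edge inside `E c` is the same before and after gluing. -/
theorem glue_mv_E (hS : StarG inc U r l E) (allow : I → K → K → Prop) {c : C}
    {u : I → K} {p p' : Option (Option C) ≃ K} {w w' : ∀ c, Y c} {a : I} (ha : a ∈ E c)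
    (hD : ∀ c, Triv inc μ (E c) (l c) (D c))
    (hp : ∀ c', c' ≠ c → p (some (some c')) = p' (some (some c')))
    (hw : ∀ c', c' ≠ c → w c' = w' c') :
    mv allow a (D c (p (some (some c))) (w c)) (D c (p' (some (some c))) (w' c))
      ≤ mv allow a (glue μ U E D u p w) (glue μ U E D u p' w') := by
  refine mv_le ?_ (glue_E hS ha).symm (glue_E hS ha).symm
  rintro ⟨h1, h2⟩
  refine ⟨by rwa [glue_E hS ha, glue_E hS ha], fun b hb => ?_⟩
  rcases glue_cases b U E with hi | ⟨c', hi⟩ | ⟨hi, hi'⟩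
  · rw [glue_U hi, glue_U hi]
  · rw [glue_E hS hi, glue_E hS hi]
    by_cases hc : c' = c
    · subst hc; exact h2 b hb
    · rw [hp c' hc, hw c' hc]
  · rw [glue_off hi hi', glue_off hi hi']

/-- Recolouring one edge of `U` is the same before and after gluing. -/
theorem glue_mv_U (hS : StarG inc U r l E) (allow : I → K → K → Prop)
    {u u' : I → K} {p p' : Option (Option C) ≃ K} {w : ∀ c, Y c} {a : I} (ha : a ∈ U)
    (hp : ∀ c', p (some (some c')) = p' (some (some c'))) :
    mv allow a u u' ≤ mv allow a (glue μ U E D u p w) (glue μ U E D u' p' w) := by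
  refine mv_le ?_ (glue_U ha).symm (glue_U ha).symm
  rintro ⟨h1, h2⟩
  refine ⟨by rwa [glue_U ha, glue_U ha], fun b hb => ?_⟩
  rcases glue_cases b U E with hi | ⟨c', hi⟩ | ⟨hi, hi'⟩
  · rw [glue_U hi, glue_U hi]; exact h2 b hb
  · rw [glue_E hS hi, glue_E hS hi, hp]
  · rw [glue_off hi hi', glue_off hi hi']

end Glue

/-! ### The recursive inequality on colourings -/

section Kernel

variable {I K : Type} [DecidableEq I] [Fintype K] [DecidableEq K]

theorem mv_eq_zero_of_eq {allow : I → K → K → Prop} {a : I} {σ σ' : I → K} (h : σ a = σ' a) :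
    mv allow a σ σ' = 0 := by
  unfold mv; rw [if_neg]; exact fun h' => h'.1.1 h

theorem mv_eq_zero_of_ne {allow : I → K → K → Prop} {a b : I} {σ σ' : I → K} (hb : b ≠ a)
    (h : σ b ≠ σ' b) : mv allow a σ σ' = 0 := by
  unfold mv; rw [if_neg]; exact fun h' => h (h'.1.2 b hb)

/-- The inequality `PIT` for the colourings of `E` rooted at `r`: moves away from `r` have weight
`W`, moves at `r` weight one. -/
def HasPI (inc : I → I → Prop) (μ : I → K) (allow : I → K → K → Prop) (d t : ℕ) (E : Finset I)
    (r : I) (W : ℝ) : Prop :=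
  ∃ (Y : Type) (_ : Fintype Y) (_ : DecidableEq Y) (_ : Nonempty Y) (D : K → Y → I → K),
    Triv inc μ E r D ∧
    PIT (d : ℝ) t (fun c y y₁ => W * ∑ a ∈ E.erase r, mv allow a (D c y) (D c y₁))
      (fun c y c₁ y₁ => mv allow r (D c y) (D c₁ y₁))

/-- The energy kernel of a light child: weight `W` away from its root edge `l`, weight `45 d` at
`l`. -/
noncomputable def lightK {Y : Type} (allow : I → K → K → Prop) (d : ℕ) (E : Finset I) (l : I)
    (W : ℝ) (D : K → Y → I → K) : K → Y → K → Y → ℝ :=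
  fun a w b v => W * ∑ e ∈ E.erase l, mv allow e (D a w) (D b v)
    + 45 * d * mv allow l (D a w) (D b v)

/-- `PIT` with a two-colour list at the root is the two-colour inequality, since the factor `90 * d / 2`
is the weight `45 * d` of the moves at the root of a light child. -/
theorem lightK_twoCol {Y : Type} [Fintype Y] [Nonempty Y] {allow : I → K → K → Prop} {d : ℕ}
    {E : Finset I} {l : I} {W : ℝ} (hW : 0 ≤ W) {D : K → Y → I → K}
    (h : PIT (d : ℝ) 2 (fun c y y' => W * ∑ a ∈ E.erase l, mv allow a (D c y) (D c y'))
      (fun c y c' y' => mv allow l (D c y) (D c' y'))) :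
    TwoCol (lightK allow d E l W D) := by
  intro a b hab u v
  have h1 := h {a, b} (by rw [Finset.card_pair hab]) (fun c => if c = a then u else v)
  have hba : b ≠ a := hab.symm
  have e1 : ({a, b} : Finset K).erase a = {b} := by
    ext x; simp only [mem_erase, mem_insert, mem_singleton]
    constructor
    · rintro ⟨h, h' | h'⟩ <;> tauto
    · rintro rfl; exact ⟨hba, Or.inr rfl⟩
  have e2 : ({a, b} : Finset K).erase b = {a} := by
    ext x; simp only [mem_erase, mem_insert, mem_singleton]
    constructor
    · rintro ⟨h, h' | h'⟩ <;> tauto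
    · rintro rfl; exact ⟨hab, Or.inl rfl⟩
  simp only [Finset.card_pair hab, Finset.sum_pair hab, e1, e2, Finset.sum_singleton, if_true,
    if_neg hba] at h1
  have key : ∀ w w', (W * ∑ a' ∈ E.erase l, mv allow a' (D a w) (D a w')) * (u w - u w') ^ 2
      + (W * ∑ a' ∈ E.erase l, mv allow a' (D b w) (D b w')) * (v w - v w') ^ 2
      + 45 * d * (mv allow l (D a w) (D b w') * (u w - v w') ^ 2)
      + 45 * d * (mv allow l (D b w) (D a w') * (v w - u w') ^ 2)
      ≤ (lightK allow d E l W D a w a w' * (u w - u w') ^ 2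
        + lightK allow d E l W D a w b w' * (u w - v w') ^ 2
        + lightK allow d E l W D b w a w' * (v w - u w') ^ 2
        + lightK allow d E l W D b w b w' * (v w - v w') ^ 2) := by
    intro w w'
    unfold lightK
    have n1 : ∀ x y : I → K, 0 ≤ W * ∑ a' ∈ E.erase l, mv allow a' x y := fun x y =>
      mul_nonneg hW (Finset.sum_nonneg fun _ _ => mv_nonneg _ _ _ _)
    have n2 : ∀ x y : I → K, 0 ≤ 45 * (d : ℝ) * mv allow l x y := fun x y =>
      mul_nonneg (by positivity) (mv_nonneg _ _ _ _)
    have m1 := mul_nonneg (n1 (D a w) (D b w')) (sq_nonneg (u w - v w'))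
    have m2 := mul_nonneg (n1 (D b w) (D a w')) (sq_nonneg (v w - u w'))
    have m3 := mul_nonneg (n2 (D a w) (D a w')) (sq_nonneg (u w - u w'))
    have m4 := mul_nonneg (n2 (D b w) (D b w')) (sq_nonneg (v w - v w'))
    nlinarith
  refine le_trans ?_ (Finset.sum_le_sum fun w _ => Finset.sum_le_sum fun w' _ => key w w')
  simp_rw [Finset.sum_add_distrib, ← Finset.mul_sum]
  push_cast at h1
  have e3 : (90 : ℝ) * (d / 2) = 45 * d := by ring
  rw [e3, mul_add] at h1
  have e4 : (mean v - mean u) ^ 2 = (mean u - mean v) ^ 2 := by ring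
  rw [e4] at h1
  simp only [mul_assoc, ← Finset.mul_sum] at h1 ⊢
  linarith

theorem sum_le_sum_filter_inj {α Q : Type*} [Fintype α] [Fintype Q] (val : Q → Prop)
    (h : α → Q) (hi : Function.Injective h) (hv : ∀ x, val (h x)) (g : Q → ℝ) (hg : ∀ q, 0 ≤ g q) :
    ∑ x, g (h x) ≤ ∑ q ∈ univ.filter val, g q := by
  rw [← Finset.sum_image (s := univ) (f := g) (g := h) (fun a _ b _ hab => hi hab)]
  refine Finset.sum_le_sum_of_subset_of_nonneg ?_ (fun _ _ _ => hg _)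
  intro q hq
  obtain ⟨x, -, rfl⟩ := Finset.mem_image.1 hq
  simp [hv x]

end Kernel

section Energy

variable {I K J : Type} [DecidableEq I] [Fintype K] [DecidableEq K] [Fintype J] [DecidableEq J]
  {Y : Option J → Type} [∀ c, Fintype (Y c)]

/-- The tuple with entry `y` at the heavy child and `z` at the light children. -/
def cons (y : Y none) (z : ∀ j, Y (some j)) : ∀ c, Y c := fun c =>
  match c with
  | none => y
  | some j => z j

theorem cons_update (y : Y none) (z : ∀ j, Y (some j)) (j : J) (v : Y (some j)) :
    cons y (Function.update z j v) = Function.update (cons y z) (some j) v := by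
  funext c
  rcases c with _ | i
  · rw [Function.update_of_ne (by simp)]; rfl
  · by_cases h : i = j
    · subst h
      simp [cons]
    · rw [Function.update_of_ne (by simpa using h)]
      simp [cons, h]

theorem sum_cons (G : (∀ c, Y c) → ℝ) : ∑ y, ∑ z, G (cons y z) = ∑ w, G w := by
  rw [← Fintype.sum_prod_type' (f := fun y z => G (cons y z))]
  refine (Fintype.sum_equiv (Equiv.piOptionEquivProd (β := Y)) _ _ ?_).symm
  intro w
  congr 1
  funext c
  rcases c with _ | j <;> rfl

/-- A state around a vertex: the colours at the positions and the hidden coordinates. -/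
abbrev Stt (K J : Type) (Y : Option J → Type) := (Option (Option (Option J)) ≃ K) × (∀ c, Y c)

theorem sum_stt (G : Stt K J Y → ℝ) : ∑ p, ∑ y, ∑ z, G (p, cons y z) = ∑ q, G q := by
  rw [Fintype.sum_prod_type]
  exact Finset.sum_congr rfl fun p _ => sum_cons (fun w => G (p, w))

/-- The energy of the recolourings of edge `a` among the states satisfying `val`. -/
noncomputable def enA {Q : Type} [Fintype Q] (allow : I → K → K → Prop) (val : Q → Prop)
    (s : Q → I → K) (F : Q → ℝ) (a : I) : ℝ :=
  ∑ q ∈ univ.filter val, ∑ q' ∈ univ.filter val, mv allow a (s q) (s q') * (F q - F q') ^ 2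

theorem enA_nonneg {Q : Type} [Fintype Q] (allow : I → K → K → Prop) (val : Q → Prop)
    (s : Q → I → K) (F : Q → ℝ) (a : I) : 0 ≤ enA allow val s F a :=
  Finset.sum_nonneg fun _ _ => Finset.sum_nonneg fun _ _ =>
    mul_nonneg (mv_nonneg _ _ _ _) (sq_nonneg _)

/-- Bounding the energy of a parametrised family of moves by the energy at `a`. -/
theorem le_enA {Q α : Type} [Fintype Q] [Fintype α] (allow : I → K → K → Prop) (val : Q → Prop)
    (s : Q → I → K) (F : Q → ℝ) (a : I) (tgt : Q → α → Q) (κ : Q → α → ℝ) (P : Q → Prop)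
    (hP : ∀ q, P q → val q)
    (hinj : ∀ q, P q → Function.Injective (tgt q)) (hval : ∀ q, P q → ∀ x, val (tgt q x))
    (hκ : ∀ q, P q → ∀ x, κ q x ≤ mv allow a (s q) (s (tgt q x))) :
    ∑ q ∈ univ.filter P, ∑ x, κ q x * (F q - F (tgt q x)) ^ 2 ≤ enA allow val s F a := by
  unfold enA
  have hsub : univ.filter P ⊆ univ.filter val := by
    intro q hq; simp at hq ⊢; exact hP q hq
  refine le_trans ?_ (Finset.sum_le_sum_of_subset_of_nonneg hsub fun q _ _ =>
    Finset.sum_nonneg fun q' _ => mul_nonneg (mv_nonneg _ _ _ _) (sq_nonneg _))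
  refine Finset.sum_le_sum fun q hq => ?_
  have hq' : P q := by simpa using hq
  refine le_trans (Finset.sum_le_sum fun x _ =>
    mul_le_mul_of_nonneg_right (hκ q hq' x) (sq_nonneg _)) ?_
  exact sum_le_sum_filter_inj val (tgt q) (hinj q hq') (hval q hq')
    (fun q' => mv allow a (s q) (s q') * (F q - F q') ^ 2)
    (fun q' => mul_nonneg (mv_nonneg _ _ _ _) (sq_nonneg _))

variable {inc : I → I → Prop} {μ : I → K} {U : Finset I} {r : I} {l : Option J → I}
  {E : Option J → Finset I} {D : ∀ c, K → Y c → I → K}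

theorem swap_trans_other {X : Type} [DecidableEq X] {a b x : X} (p : X ≃ K) (ha : x ≠ a)
    (hb : x ≠ b) : ((Equiv.swap a b).trans p) x = p x := by
  rw [Equiv.trans_apply, Equiv.swap_apply_of_ne_of_ne ha hb]

/-- The light energy of a masked function is bounded by the energy of the recolourings inside the
light child. -/
theorem lightE_le (hS : StarG inc U r l E) (hD : ∀ c, Triv inc μ (E c) (l c) (D c))
    (allow : I → K → K → Prop) (d : ℕ) (W Wl : ℝ) (hWl : 0 ≤ Wl) (hW1 : Wl ≤ W)
    (hW2 : 45 * (d : ℝ) ≤ W) (j : J)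
    (u : K → I → K) (valp : (Option (Option (Option J)) ≃ K) → Prop)
    (hval : ∀ p, valp p → valp ((Equiv.swap (some none) (some (some (some j)))).trans p))
    (hval' : ∀ p, ¬ valp p → ¬ valp ((Equiv.swap (some none) (some (some (some j)))).trans p))
    (F : Stt K J Y → ℝ) (k : ∀ j, K → Y (some j) → K → Y (some j) → ℝ)
    (hk : k j = lightK allow d (E (some j)) (l (some j)) Wl (D (some j))) :
    ∑ y, lightE (fun j => some (some (some j))) (some none) k j
        (fun p z => if valp p then F (p, cons y z) else 0)
      ≤ W * ∑ a ∈ E (some j), enA allow (fun q : Stt K J Y => valp q.1)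
          (fun q => glue μ U E D (u (q.1 none)) q.1 q.2) F a := by
  set s : Stt K J Y → I → K := fun q => glue μ U E D (u (q.1 none)) q.1 q.2 with hs
  set ι : J → Option (Option (Option J)) := fun j => some (some (some j)) with hι
  set sw := Equiv.swap (some none) (ι j) with hsw
  unfold lightE
  rw [Finset.sum_comm]
  set G : Stt K J Y → ℝ := fun q => if valp q.1 then
        (∑ v, Wl * ∑ e ∈ (E (some j)).erase (l (some j)),
            mv allow e (D (some j) (q.1 (ι j)) (q.2 (some j))) (D (some j) (q.1 (ι j)) v)
              * (F q - F (q.1, Function.update q.2 (some j) v)) ^ 2)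
        + ∑ v, 45 * d * (mv allow (l (some j)) (D (some j) (q.1 (ι j)) (q.2 (some j)))
            (D (some j) (q.1 (some none)) v)
              * (F q - F (sw.trans q.1, Function.update q.2 (some j) v)) ^ 2)
        else 0 with hG
  refine le_trans (le_of_eq (b := ∑ q, G q) ?_) ?_
  · rw [← sum_stt G]
    refine sum_congr rfl fun p _ => sum_congr rfl fun y _ => sum_congr rfl fun z _ => ?_
    unfold lightIn lightOut
    simp only [hk, lightK, hG]
    have hvv : valp (sw.trans p) ↔ valp p := ⟨fun h => by
      by_contra h2; exact hval' p h2 h, hval p⟩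
    simp only [← hsw, hvv]
    split_ifs with hv
    · have hne : p (ι j) ≠ p (some none) := fun h => by
        have := p.injective h; simp [hι] at this
      congr 1
      · refine Finset.sum_congr rfl fun v _ => ?_
        rw [mv_eq_zero_of_eq (a := l (some j)) (by rw [(hD _).root, (hD _).root]), mul_zero,
          add_zero, ← cons_update, mul_assoc, Finset.sum_mul]
        rfl
      · refine Finset.sum_congr rfl fun v _ => ?_
        rw [Finset.sum_eq_zero (s := (E (some j)).erase (l (some j))), mul_zero, zero_add,
          ← cons_update, mul_assoc]
        · rfl
        · intro e he
          refine mv_eq_zero_of_ne (b := l (some j)) (Finset.ne_of_mem_erase he).symm ?_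
          rw [(hD _).root, (hD _).root]; exact hne
    · simp
  rw [hG, ← Finset.sum_filter]
  rw [Finset.sum_add_distrib]
  have hupd : ∀ (w : ∀ c, Y c) (v : Y (some j)) (c : Option J), c ≠ some j →
      w c = Function.update w (some j) v c := fun w v c hc => by
    rw [Function.update_of_ne hc]
  have e1 : ∀ e ∈ (E (some j)).erase (l (some j)),
      ∑ q ∈ univ.filter (fun q : Stt K J Y => valp q.1), ∑ v,
        mv allow e (D (some j) (q.1 (ι j)) (q.2 (some j))) (D (some j) (q.1 (ι j)) v)
              * (F q - F (q.1, Function.update q.2 (some j) v)) ^ 2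
      ≤ enA allow (fun q : Stt K J Y => valp q.1) s F e := by
    intro e he
    refine le_enA allow _ s F e (fun q v => (q.1, Function.update q.2 (some j) v)) 
      (fun q v => mv allow e (D (some j) (q.1 (ι j)) (q.2 (some j))) (D (some j) (q.1 (ι j)) v))
      _ (fun q h => h) ?_ (fun q h v => h) ?_
    · intro q _ v v' h
      have := congrFun (Prod.mk.inj h).2 (some j)
      simpa using this
    · intro q _ v
      have := glue_mv_E (u := u (q.1 none)) (p := q.1) (p' := q.1) (w := q.2)
        (w' := Function.update q.2 (some j) v) hS allow
        (Finset.mem_of_mem_erase he) hD (fun _ _ => rfl) (hupd q.2 v)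
      rw [Function.update_self] at this
      exact this
  have e2 : ∑ q ∈ univ.filter (fun q : Stt K J Y => valp q.1), ∑ v,
        mv allow (l (some j)) (D (some j) (q.1 (ι j)) (q.2 (some j)))
            (D (some j) (q.1 (some none)) v)
              * (F q - F (sw.trans q.1, Function.update q.2 (some j) v)) ^ 2
      ≤ enA allow (fun q : Stt K J Y => valp q.1) s F (l (some j)) := by
    refine le_enA allow _ s F (l (some j))
      (fun q v => (sw.trans q.1, Function.update q.2 (some j) v))
      (fun q v => mv allow (l (some j)) (D (some j) (q.1 (ι j)) (q.2 (some j)))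
            (D (some j) (q.1 (some none)) v))
      _ (fun q h => h) ?_ (fun q h v => hval _ h) ?_
    · intro q _ v v' h
      have := congrFun (Prod.mk.inj h).2 (some j)
      simpa using this
    · intro q _ v
      have hn : (sw.trans q.1) none = q.1 none := swap_trans_other _ (by simp) (by simp [hι])
      have hp : ∀ c, c ≠ some j → q.1 (some (some c)) = (sw.trans q.1) (some (some c)) := by
        intro c hc
        rw [hsw, swap_trans_other _ (by simp) (by simpa [hι] using hc)]
      have := glue_mv_E (u := u (q.1 none)) (p := q.1) (p' := sw.trans q.1) (w := q.2)
        (w' := Function.update q.2 (some j) v) hS allow (hS.lE (some j)) hD hp (hupd q.2 v)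
      rw [Function.update_self] at this
      have hj : (sw.trans q.1) (some (some (some j))) = q.1 (some none) := by
        simp [hsw, hι]
      rw [hj] at this
      simp only [hs, hn]
      exact this
  have f1 : ∑ q ∈ univ.filter (fun q : Stt K J Y => valp q.1),
      (∑ v, Wl * ∑ e ∈ (E (some j)).erase (l (some j)),
            mv allow e (D (some j) (q.1 (ι j)) (q.2 (some j))) (D (some j) (q.1 (ι j)) v)
              * (F q - F (q.1, Function.update q.2 (some j) v)) ^ 2)
      ≤ Wl * ∑ e ∈ (E (some j)).erase (l (some j)),
          enA allow (fun q : Stt K J Y => valp q.1) s F e := by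
    simp_rw [← Finset.mul_sum]
    refine mul_le_mul_of_nonneg_left ?_ hWl
    refine le_trans (le_of_eq ?_) (Finset.sum_le_sum e1)
    symm
    rw [Finset.sum_comm]
    refine Finset.sum_congr rfl fun q _ => ?_
    rw [Finset.sum_comm]
  simp_rw [← Finset.mul_sum] at f1 ⊢
  have hn : 0 ≤ ∑ e ∈ (E (some j)).erase (l (some j)),
      enA allow (fun q : Stt K J Y => valp q.1) s F e := Finset.sum_nonneg fun _ _ => enA_nonneg _ _ _ _ _
  have hn2 := enA_nonneg allow (fun q : Stt K J Y => valp q.1) s F (l (some j))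
  have f2 := mul_le_mul_of_nonneg_left e2 (show (0:ℝ) ≤ 45 * d by positivity)
  rw [← Finset.add_sum_erase _ _ (hS.lE (some j)), mul_add]
  have g1 := mul_le_mul_of_nonneg_right hW1 hn
  have g2 := mul_le_mul_of_nonneg_right hW2 hn2
  linarith

end Energy

section StepThm

variable {I K J : Type} [DecidableEq I] [Fintype K] [DecidableEq K] [Fintype J] [DecidableEq J]

theorem mv_row {Y : Type} [Fintype Y] {inc : I → I → Prop} {μ : I → K} {E : Finset I} {l : I}
    {D : K → Y → I → K} (hD : Triv inc μ E l D) (allow : I → K → K → Prop) (σ : I → K) (c' : K) :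
    ∑ y', mv allow l σ (D c' y') ≤ 1 := by
  unfold mv
  rw [Finset.sum_boole]
  norm_cast
  rw [Finset.card_le_one]
  intro a ha b hb
  simp only [mem_filter, mem_univ, true_and] at ha hb
  apply hD.inj c'
  funext i
  by_cases hi : i = l
  · rw [hi, hD.root, hD.root]
  · rw [← ha.1.2 i hi, ← hb.1.2 i hi]

theorem mv_col {Y : Type} [Fintype Y] {inc : I → I → Prop} {μ : I → K} {E : Finset I} {l : I}
    {D : K → Y → I → K} (hD : Triv inc μ E l D) (allow : I → K → K → Prop) (σ : I → K) (c : K) :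
    ∑ y, mv allow l (D c y) σ ≤ 1 := by
  unfold mv
  rw [Finset.sum_boole]
  norm_cast
  rw [Finset.card_le_one]
  intro a ha b hb
  simp only [mem_filter, mem_univ, true_and] at ha hb
  apply hD.inj c
  funext i
  by_cases hi : i = l
  · rw [hi, hD.root, hD.root]
  · rw [ha.1.2 i hi, hb.1.2 i hi]

variable {inc : I → I → Prop} {μ : I → K} {r : I} {l : Option J → I}
  {E : Option J → Finset I}

/-- The bijections sending `x` to `c0`, together with a colour `c`, are the same as all bijections:
post-compose with the transposition of `c0` and `c`. -/
noncomputable def rootEquiv {X : Type} [DecidableEq X] (x : X) (c0 : K) :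
    K × {q : X ≃ K // q x = c0} ≃ (X ≃ K) where
  toFun a := a.2.1.trans (Equiv.swap c0 a.1)
  invFun p := (p x, ⟨p.trans (Equiv.swap c0 (p x)), by simp⟩)
  left_inv := by
    rintro ⟨c, q, hq⟩
    simp only [Equiv.trans_apply, hq, Equiv.swap_apply_left, Prod.mk.injEq, true_and]
    ext y; simp
  right_inv := by
    intro p
    ext y
    simp

theorem rootEquiv_root {X : Type} [DecidableEq X] (x : X) (c0 c : K) (q : {q : X ≃ K // q x = c0}) :
    rootEquiv x c0 (c, q) x = c := by
  simp [rootEquiv, q.2]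

theorem starPos_option : StarPos (X := Option (Option (Option J))) none (some (some none))
    (some none) (fun j : J => some (some (some j))) where
  inj := by intro a b h; simpa using h
  rh := by simp
  ro := by simp
  ho := by simp
  ιr := by simp
  ιh := by simp
  ιo := by simp
  cover := by rintro (_ | _ | _ | j) <;> simp

variable {Y : Option J → Type} [∀ c, Fintype (Y c)] [∀ c, DecidableEq (Y c)] [∀ c, Nonempty (Y c)]
  {D : ∀ c, K → Y c → I → K}

/-- The colouring of a state below the root edge `r`. -/
noncomputable def stCol (μ : I → K) (r : I) (E : Option J → Finset I) (D : ∀ c, K → Y c → I → K)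
    (q : Stt K J Y) : I → K :=
  glue μ {r} E D (Function.update μ r (q.1 none)) q.1 q.2

/-- Hidden coordinates below an edge: the colours around its lower vertex, normalised so that the
edge itself has colour `c0`, and the hidden coordinates of the children. -/
abbrev Hid (J : Type) (Y : Option J → Type) (c0 : K) :=
  {q : Option (Option (Option J)) ≃ K // q none = c0} × (∀ c, Y c)

/-- The parametrisation of the colourings below `r` by the colour of `r` and a hidden coordinate. -/
noncomputable def stD (μ : I → K) (r : I) (E : Option J → Finset I) (D : ∀ c, K → Y c → I → K)
    (c0 c : K) (y : Hid J Y c0) : I → K :=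
  stCol μ r E D (rootEquiv none c0 (c, y.1), y.2)

theorem isCol_upd (hirr : ¬ inc r r) (c : K) : IsCol inc μ {r} (Function.update μ r c) := by
  constructor
  · intro e he f hf hef
    rw [mem_singleton] at he hf
    subst he; subst hf
    exact absurd hef hirr
  · intro e he
    rw [Function.update_of_ne (by simpa using he)]

theorem stD_triv (hS : StarG inc {r} r l E) (hirr : ¬ inc r r)
    (hD : ∀ c, Triv inc μ (E c) (l c) (D c)) (hC : Fintype.card J + 3 = Fintype.card K) (c0 : K) :
    Triv inc μ (starEdges {r} E) r (stD μ r E D c0) where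
  root c y := by
    unfold stD stCol
    rw [glue_U (by simp)]
    simp [rootEquiv_root]
  col c y := glue_col hS hD (isCol_upd hirr _) (by simp)
  inj c y y' h := by
    obtain ⟨-, h1, h2⟩ := glue_inj hS hD (isCol_upd hirr _) (by simp) (isCol_upd hirr _)
      (by simp) h
    have := (rootEquiv (X := Option (Option (Option J))) none c0).injective h1
    exact Prod.ext (Prod.mk.inj this).2 h2
  surj σ hσ := by
    obtain ⟨u, p, w, hu, hp, h⟩ := glue_surj hS hD (by simp; omega) hσ
    have hu' : u = Function.update μ r (p none) := by
      funext i
      by_cases hi : i = r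
      · subst hi; simp [hp]
      · rw [Function.update_of_ne hi, hu.2 i (by simpa using hi)]
    obtain ⟨⟨c, q⟩, hq⟩ := (rootEquiv (X := Option (Option (Option J))) none c0).surjective p
    refine ⟨c, (q, w), ?_⟩
    unfold stD stCol
    rw [← h]
    simp only [hq, ← hu']

/-- The terms produced by one step of the recursion are energies of single-edge recolourings. -/
theorem core_le_enA {d : ℕ} (hd : 3 ≤ d) (hS : StarG inc {r} r l E)
    (hD : ∀ c, Triv inc μ (E c) (l c) (D c)) (allow : I → K → K → Prop)
    (Wc : Option J → ℝ) (hWc : ∀ c, 0 ≤ Wc c)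
    (W : ℝ) (hWh : Wc none ≤ W) (hWr : 270 * ((d : ℝ) - 1) ≤ W)
    (hWl : ∀ j, 700 * Wc (some j) ≤ W) (hWd : 700 * (45 * (d : ℝ)) ≤ W)
    (hrr : ∀ c c', allow r c c') (A : Finset K)
    (valp : (Option (Option (Option J)) ≃ K) → Prop) (hv : ∀ p, valp p ↔ p none ∈ A)
    (F : Stt K J Y → ℝ)
    (f : (Option (Option (Option J)) ≃ K) → Y none → (∀ j, Y (some j)) → ℝ)
    (hf : f = fun p y z => if valp p then F (p, cons y z) else 0) :
    ∑ p, ∑ y, ∑ y', ∑ z, (Wc none * ∑ a ∈ (E none).erase (l none),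
          mv allow a (D none (p (some (some none))) y) (D none (p (some (some none))) y'))
            * (f p y z - f p y' z) ^ 2
      + 270 * ((d : ℝ) - 1) * ∑ p, ∑ y, ∑ y', ∑ z,
          mv allow (l none) (D none (p (some (some none))) y) (D none (p (some none)) y')
          * (f p y z - f ((Equiv.swap (some (some none)) (some none)).trans p) y' z) ^ 2
      + 700 * ∑ y, ∑ j, lightE (fun j => some (some (some j))) (some none)
          (fun j => lightK allow d (E (some j)) (l (some j)) (Wc (some j)) (D (some j))) j
          (fun p => f p y)
      + 90 * ((d : ℝ) / A.card) * ∑ p ∈ univ.filter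
          (fun p : Option (Option (Option J)) ≃ K => p none ∈ A ∧ p (some none) ∈ A),
          ∑ y, ∑ z, (f p y z - f ((Equiv.swap none (some none)).trans p) y z) ^ 2
    ≤ W * ∑ a ∈ (starEdges {r} E).erase r, enA allow (fun q => valp q.1) (stCol μ r E D) F a
      + 90 * ((d : ℝ) / A.card) * enA allow (fun q => valp q.1) (stCol μ r E D) F r := by
  have hd' : (3 : ℝ) ≤ d := by exact_mod_cast hd
  have hn : ∀ a, 0 ≤ enA allow (fun q : Stt K J Y => valp q.1) (stCol μ r E D) F a :=
    fun a => enA_nonneg _ _ _ _ _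
  have hupd : ∀ (w : ∀ c, Y c) (v : Y none) (c : Option J), c ≠ none →
      w c = Function.update w none v c := fun w v c hc => by
    rw [Function.update_of_ne hc]
  have hcu : ∀ (y v : Y none) (z : ∀ j, Y (some j)), Function.update (cons y z) none v = cons v z := by
    intro y v z
    funext c
    rcases c with _ | j
    · simp [cons]
    · rw [Function.update_of_ne (by simp)]; rfl
  have h1 : ∑ p, ∑ y, ∑ y', ∑ z, (Wc none * ∑ a ∈ (E none).erase (l none),
          mv allow a (D none (p (some (some none))) y) (D none (p (some (some none))) y'))
            * (f p y z - f p y' z) ^ 2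
      ≤ W * ∑ a ∈ (E none).erase (l none),
        enA allow (fun q => valp q.1) (stCol μ r E D) F a := by
    have e1 : ∀ a ∈ (E none).erase (l none),
        ∑ q ∈ univ.filter (fun q : Stt K J Y => valp q.1), ∑ v,
          mv allow a (D none (q.1 (some (some none))) (q.2 none)) (D none (q.1 (some (some none))) v)
                * (F q - F (q.1, Function.update q.2 none v)) ^ 2
        ≤ enA allow (fun q : Stt K J Y => valp q.1) (stCol μ r E D) F a := by
      intro a ha
      refine le_enA allow _ _ F a (fun q v => (q.1, Function.update q.2 none v))
        (fun q v => mv allow a (D none (q.1 (some (some none))) (q.2 none))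
          (D none (q.1 (some (some none))) v))
        _ (fun q h => h) ?_ (fun q h v => h) ?_
      · intro q _ v v' h
        have := congrFun (Prod.mk.inj h).2 none
        simpa using this
      · intro q _ v
        have := glue_mv_E (u := Function.update μ r (q.1 none)) (p := q.1) (p' := q.1) (w := q.2)
          (w' := Function.update q.2 none v) hS allow
          (Finset.mem_of_mem_erase ha) hD (fun _ _ => rfl) (hupd q.2 v)
        rw [Function.update_self] at this
        exact this
    have e2 : ∑ p, ∑ y, ∑ y', ∑ z, (Wc none * ∑ a ∈ (E none).erase (l none),
          mv allow a (D none (p (some (some none))) y) (D none (p (some (some none))) y'))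
            * (f p y z - f p y' z) ^ 2
        = ∑ q : Stt K J Y, if valp q.1 then Wc none * ∑ v,
          ∑ a ∈ (E none).erase (l none),
          mv allow a (D none (q.1 (some (some none))) (q.2 none)) (D none (q.1 (some (some none))) v)
                * (F q - F (q.1, Function.update q.2 none v)) ^ 2 else 0 := by
      rw [← sum_stt]
      refine sum_congr rfl fun p _ => sum_congr rfl fun y _ => ?_
      rw [Finset.sum_comm]
      refine sum_congr rfl fun z _ => ?_
      simp only [hf, hcu]
      by_cases hp : valp p
      · simp only [hp, if_true, Finset.mul_sum, Finset.sum_mul, mul_assoc]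
        rfl
      · simp [hp]
    rw [e2, ← Finset.sum_filter, ← Finset.mul_sum]
    have e3 := Finset.sum_le_sum e1
    rw [Finset.sum_comm] at e3
    simp_rw [Finset.sum_comm (s := (E none).erase (l none))] at e3
    exact mul_le_mul hWh e3 (Finset.sum_nonneg fun _ _ => Finset.sum_nonneg fun _ _ =>
      Finset.sum_nonneg fun _ _ => mul_nonneg (mv_nonneg _ _ _ _) (sq_nonneg _))
      ((hWc none).trans hWh)
  have h2 : ∑ p, ∑ y, ∑ y', ∑ z,
          mv allow (l none) (D none (p (some (some none))) y) (D none (p (some none)) y')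
          * (f p y z - f ((Equiv.swap (some (some none)) (some none)).trans p) y' z) ^ 2
      ≤ enA allow (fun q => valp q.1) (stCol μ r E D) F (l none) := by
    set sw : Equiv.Perm (Option (Option (Option J))) :=
      Equiv.swap (some (some none)) (some none) with hsw
    have hn0 : ∀ p : Option (Option (Option J)) ≃ K, (sw.trans p) none = p none := fun p =>
      swap_trans_other _ (by simp) (by simp)
    have hvs : ∀ p, valp (sw.trans p) ↔ valp p := fun p => by rw [hv, hv, hn0]
    refine le_trans (le_of_eq ?_) (le_enA allow (fun q : Stt K J Y => valp q.1) (stCol μ r E D) F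
      (l none)
      (fun q v => (sw.trans q.1, Function.update q.2 none v))
      (fun q v => mv allow (l none) (D none (q.1 (some (some none))) (q.2 none))
            (D none (q.1 (some none)) v))
      _ (fun q h => h) ?_ (fun q h v => (hvs _).2 h) ?_)
    · rw [Finset.sum_filter, ← sum_stt]
      refine sum_congr rfl fun p _ => sum_congr rfl fun y _ => ?_
      rw [Finset.sum_comm]
      refine sum_congr rfl fun z _ => ?_
      simp only [hf, hcu, hvs]
      by_cases hp : valp p
      · simp only [hp, if_true]
        rfl
      · simp [hp]
    · intro q _ v v' h
      have := congrFun (Prod.mk.inj h).2 none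
      simpa using this
    · intro q _ v
      have hp : ∀ c, c ≠ none → q.1 (some (some c)) = (sw.trans q.1) (some (some c)) := by
        intro c hc
        rw [hsw, swap_trans_other _ (by simpa using hc) (by simp)]
      have := glue_mv_E (u := Function.update μ r (q.1 none)) (p := q.1) (p' := sw.trans q.1)
        (w := q.2)
        (w' := Function.update q.2 none v) hS allow (hS.lE none) hD hp (hupd q.2 v)
      rw [Function.update_self] at this
      have hj : (sw.trans q.1) (some (some none)) = q.1 (some none) := by
        simp [hsw]
      rw [hj] at this
      simp only [stCol, hn0]
      exact this
  have h3 : 700 * ∑ y, ∑ j, lightE (fun j => some (some (some j))) (some none)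
          (fun j => lightK allow d (E (some j)) (l (some j)) (Wc (some j)) (D (some j))) j
          (fun p => f p y)
      ≤ ∑ j, W * ∑ a ∈ E (some j), enA allow (fun q => valp q.1) (stCol μ r E D) F a := by
    rw [Finset.sum_comm, Finset.mul_sum]
    refine Finset.sum_le_sum fun j _ => ?_
    have hn0 : ∀ p : Option (Option (Option J)) ≃ K,
        ((Equiv.swap (some none) (some (some (some j)))).trans p) none = p none := fun p =>
      swap_trans_other _ (by simp) (by simp)
    have := lightE_le (U := {r}) hS hD allow d (W / 700) (Wc (some j)) (hWc _)
      (by linarith [hWl j]) (by linarith) j (fun c => Function.update μ r c) valp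
      (fun p h => by rw [hv, hn0, ← hv]; exact h) (fun p h => by rw [hv, hn0, ← hv]; exact h) F
      (fun j => lightK allow d (E (some j)) (l (some j)) (Wc (some j)) (D (some j))) rfl
    rw [hf]
    refine (mul_le_mul_of_nonneg_left this (by norm_num : (0:ℝ) ≤ 700)).trans (le_of_eq ?_)
    rw [← mul_assoc]
    congr 1
    ring
  have h4 : ∑ p ∈ univ.filter
          (fun p : Option (Option (Option J)) ≃ K => p none ∈ A ∧ p (some none) ∈ A),
          ∑ y, ∑ z, (f p y z - f ((Equiv.swap none (some none)).trans p) y z) ^ 2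
      ≤ enA allow (fun q => valp q.1) (stCol μ r E D) F r := by
    set sw : Equiv.Perm (Option (Option (Option J))) :=
      Equiv.swap none (some none) with hsw
    have hsn : ∀ p : Option (Option (Option J)) ≃ K, (sw.trans p) none = p (some none) := by
      intro p; simp [hsw]
    obtain ⟨P, hP⟩ : ∃ P : Stt K J Y → Prop, ∀ q, P q ↔ (q.1 none ∈ A ∧ q.1 (some none) ∈ A) :=
      ⟨_, fun _ => Iff.rfl⟩
    refine le_trans (le_of_eq ?_) (le_enA (α := Unit) allow (fun q : Stt K J Y => valp q.1)
      (stCol μ r E D) F r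
      (fun q v => (sw.trans q.1, q.2))
      (fun q v => 1)
      P (fun q h => (hv _).2 ((hP q).1 h).1) ?_
      (fun q h v => (hv _).2 (by rw [hsn]; exact ((hP q).1 h).2)) ?_)
    · rw [Finset.sum_filter, Finset.sum_filter, ← sum_stt]
      refine sum_congr rfl fun p _ => ?_
      by_cases hp : p none ∈ A ∧ p (some none) ∈ A
      · rw [if_pos hp]
        refine sum_congr rfl fun y _ => sum_congr rfl fun z _ => ?_
        rw [if_pos ((hP _).2 hp)]
        simp only [hf, hv, hsn, hp.1, hp.2, if_true]
        simp
      · rw [if_neg hp]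
        symm
        refine Finset.sum_eq_zero fun y _ => Finset.sum_eq_zero fun z _ => ?_
        rw [if_neg (fun h => hp ((hP _).1 h))]
    · intro q _ v v' h
      rfl
    · intro q hq v
      refine le_trans (le_of_eq ?_) (glue_mv_U (p' := sw.trans q.1) hS allow
        (u := Function.update μ r (q.1 none))
        (u' := Function.update μ r ((sw.trans q.1) none)) (mem_singleton_self r) ?_)
      · symm
        unfold mv DiffAt
        rw [if_pos]
        refine ⟨⟨?_, ?_⟩, hrr _ _⟩
        · rw [Function.update_self, Function.update_self, hsn]
          exact fun h => by simpa using q.1.injective h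
        · intro b hb
          rw [Function.update_of_ne hb, Function.update_of_ne hb]
      · intro c
        rw [hsw, swap_trans_other _ (by simp) (by simp)]
  have h5 : ∑ a ∈ (E none).erase (l none), enA allow (fun q => valp q.1) (stCol μ r E D) F a
      + enA allow (fun q => valp q.1) (stCol μ r E D) F (l none)
      + ∑ j, ∑ a ∈ E (some j), enA allow (fun q => valp q.1) (stCol μ r E D) F a
      ≤ ∑ a ∈ (starEdges {r} E).erase r, enA allow (fun q => valp q.1) (stCol μ r E D) F a := by
    rw [Finset.sum_erase_add _ _ (hS.lE none),
      ← Fintype.sum_option (fun c => ∑ a ∈ E c, enA allow (fun q => valp q.1) (stCol μ r E D) F a),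
      ← Finset.sum_biUnion]
    · refine Finset.sum_le_sum_of_subset_of_nonneg ?_ fun a _ _ => hn a
      intro a ha
      obtain ⟨c, -, hc⟩ := Finset.mem_biUnion.1 ha
      refine Finset.mem_erase.2 ⟨?_, mem_starEdges.2 (Or.inr ⟨c, hc⟩)⟩
      rintro rfl
      exact hS.dU c _ (mem_singleton_self _) hc
    · intro c _ c' _ hcc
      exact Finset.disjoint_left.2 fun a ha => hS.dE c c' hcc a ha
  have hW0 : 0 ≤ W := by linarith
  have h5' := mul_le_mul_of_nonneg_left h5 hW0
  have h2' := mul_le_mul hWr h2 (Finset.sum_nonneg fun _ _ => Finset.sum_nonneg fun _ _ =>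
      Finset.sum_nonneg fun _ _ => Finset.sum_nonneg fun _ _ =>
        mul_nonneg (mv_nonneg _ _ _ _) (sq_nonneg _)) hW0
  have h4' := mul_le_mul_of_nonneg_left h4 (show 0 ≤ 90 * ((d : ℝ) / A.card) by positivity)
  rw [← Finset.mul_sum] at h3
  rw [mul_add, mul_add] at h5'
  linarith

set_option maxHeartbeats 1000000 in
/-- One step up the tree: the inequality for the edge sets hanging off a vertex gives the
inequality for the edge `r` above the vertex. -/
theorem stD_PIT {d : ℕ} (hd : 3 ≤ d) (hK : Fintype.card K = d + 1)
    (hJ : Fintype.card J + 2 = d) (hS : StarG inc {r} r l E) (hirr : ¬ inc r r)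
    (hD : ∀ c, Triv inc μ (E c) (l c) (D c)) (allow : I → K → K → Prop) (c0 : K)
    (Wc : Option J → ℝ) (hWc : ∀ c, 0 ≤ Wc c)
    (hPh : PIT (d : ℝ) 3
      (fun c y y' => Wc none * ∑ a ∈ (E none).erase (l none), mv allow a (D none c y) (D none c y'))
      (fun c y c' y' => mv allow (l none) (D none c y) (D none c' y')))
    (hPl : ∀ j, PIT (d : ℝ) 2
      (fun c y y' => Wc (some j) * ∑ a ∈ (E (some j)).erase (l (some j)),
        mv allow a (D (some j) c y) (D (some j) c y'))
      (fun c y c' y' => mv allow (l (some j)) (D (some j) c y) (D (some j) c' y')))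
    (W : ℝ) (hWh : Wc none ≤ W) (hWr : 270 * ((d : ℝ) - 1) ≤ W)
    (hWl : ∀ j, 700 * Wc (some j) ≤ W) (hWd : 700 * (45 * (d : ℝ)) ≤ W) (hrr : ∀ c c', allow r c c') :
    PIT (d : ℝ) 2
      (fun c y y' => W * ∑ a ∈ (starEdges {r} E).erase r,
        mv allow a (stD μ r E D c0 c y) (stD μ r E D c0 c y'))
      (fun c y c' y' => mv allow r (stD μ r E D c0 c y) (stD μ r E D c0 c' y')) := by
  intro A hA g
  have hT := stD_triv hS hirr hD (by omega) c0
  have hXK : Fintype.card (Option (Option (Option J))) = Fintype.card K := by simp; omega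
  have hne : Nonempty (Option (Option (Option J)) ≃ K) := ⟨Fintype.equivOfCardEq hXK⟩
  -- states are pairs of a root colour and a hidden coordinate
  obtain ⟨ee, hee1, hee2⟩ : ∃ ee : K × Hid J Y c0 ≃ Stt K J Y, (∀ c y, (ee (c, y)).1 none = c) ∧
      ∀ c y, stCol μ r E D (ee (c, y)) = stD μ r E D c0 c y :=
    ⟨(Equiv.prodAssoc _ _ _).symm.trans ((rootEquiv none c0).prodCongr (Equiv.refl _)),
      fun c y => rootEquiv_root none c0 c y.1, fun c y => rfl⟩
  obtain ⟨F, hFe⟩ : ∃ F : Stt K J Y → ℝ, ∀ c y, F (ee (c, y)) = g c y :=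
    ⟨fun q => g (ee.symm q).1 (ee.symm q).2, fun c y => by simp⟩
  obtain ⟨valp, hv⟩ : ∃ valp : (Option (Option (Option J)) ≃ K) → Prop,
      ∀ p, valp p ↔ p none ∈ A := ⟨_, fun _ => Iff.rfl⟩
  have hve : ∀ c y, valp (ee (c, y)).1 ↔ c ∈ A := fun c y => by rw [hv, hee1]
  have reidx : ∀ H : Stt K J Y → ℝ, ∑ q ∈ univ.filter (fun q : Stt K J Y => valp q.1), H q
      = ∑ c ∈ A, ∑ y, H (ee (c, y)) := by
    intro H
    rw [Finset.sum_filter, ← Equiv.sum_comp ee, Fintype.sum_prod_type]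
    simp_rw [hve]
    rw [← Finset.sum_filter_add_sum_filter_not univ (fun c => c ∈ A)]
    rw [Finset.sum_eq_zero (s := univ.filter fun c => c ∉ A), add_zero]
    · rw [Finset.filter_mem_eq_inter, Finset.univ_inter]
      refine Finset.sum_congr rfl fun c hc => Finset.sum_congr rfl fun y _ => if_pos hc
    · intro c hc
      refine Finset.sum_eq_zero fun y _ => if_neg (by simpa using hc)
  have hen : ∀ a, enA allow (fun q => valp q.1) (stCol μ r E D) F a = ∑ c ∈ A, ∑ y, ∑ c' ∈ A, ∑ y',
      mv allow a (stD μ r E D c0 c y) (stD μ r E D c0 c' y') * (g c y - g c' y') ^ 2 := by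
    intro a
    unfold enA
    rw [reidx]
    refine Finset.sum_congr rfl fun c _ => Finset.sum_congr rfl fun y _ => ?_
    rw [reidx]
    refine Finset.sum_congr rfl fun c' _ => Finset.sum_congr rfl fun y' _ => ?_
    rw [hFe, hFe, hee2, hee2]
  have hen1 : ∀ a ∈ (starEdges {r} E).erase r, enA allow (fun q => valp q.1) (stCol μ r E D) F a = ∑ c ∈ A, ∑ y, ∑ y',
      mv allow a (stD μ r E D c0 c y) (stD μ r E D c0 c y') * (g c y - g c y') ^ 2 := by
    intro a ha
    rw [hen]
    refine Finset.sum_congr rfl fun c hc => Finset.sum_congr rfl fun y _ => ?_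
    rw [Finset.sum_eq_single_of_mem c hc]
    intro c' _ hcc
    refine Finset.sum_eq_zero fun y' _ => ?_
    rw [mv_eq_zero_of_ne (b := r) (Finset.ne_of_mem_erase ha).symm, zero_mul]
    rw [hT.root, hT.root]; exact hcc.symm
  have hen2 : enA allow (fun q => valp q.1) (stCol μ r E D) F r = ∑ c ∈ A, ∑ c' ∈ A.erase c, ∑ y, ∑ y',
      mv allow r (stD μ r E D c0 c y) (stD μ r E D c0 c' y') * (g c y - g c' y') ^ 2 := by
    rw [hen]
    refine Finset.sum_congr rfl fun c hc => ?_
    rw [Finset.sum_comm, ← Finset.add_sum_erase _ _ hc]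
    rw [Finset.sum_eq_zero, zero_add]
    intro y _
    refine Finset.sum_eq_zero fun y' _ => ?_
    rw [mv_eq_zero_of_eq, zero_mul]
    rw [hT.root, hT.root]
  obtain ⟨f, hf⟩ : ∃ f : (Option (Option (Option J)) ≃ K) → Y none → (∀ j, Y (some j)) → ℝ,
      f = fun p y z => if valp p then F (p, cons y z) else 0 := ⟨_, rfl⟩
  obtain ⟨Φ, hΦ⟩ : ∃ Φ : K → ℝ, Φ = fun c => if c ∈ A then mean (g c) else 0 := ⟨_, rfl⟩
  obtain ⟨N1, hN1⟩ : ∃ N1 : ℝ, N1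
      = (Fintype.card {q : Option (Option (Option J)) ≃ K // q none = c0} : ℝ) := ⟨_, rfl⟩
  have hcY : N1 * (Fintype.card (Y none) : ℝ) * (Fintype.card (∀ j, Y (some j)) : ℝ)
      = (Fintype.card (Hid J Y c0) : ℝ) := by
    have e1 : Fintype.card (∀ c, Y c) = Fintype.card (Y none) * Fintype.card (∀ j, Y (some j)) := by
      rw [Fintype.card_congr (Equiv.piOptionEquivProd (β := Y)), Fintype.card_prod]
    rw [Fintype.card_prod, e1, hN1]
    push_cast; ring
  have hneY : Nonempty (Hid J Y c0) := by
    obtain ⟨p⟩ := hne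
    exact ⟨((ee.symm (p, fun c => Classical.arbitrary _)).2)⟩
  have hc1 : ∀ c, ((univ.filter fun p : Option (Option (Option J)) ≃ K => p none = c).card : ℝ)
      = N1 := by
    intro c
    rw [hN1, ← Fintype.card_subtype]
    norm_cast
    refine Fintype.card_congr ?_
    refine ⟨fun p => ((rootEquiv none c0).symm p.1).2,
      fun q => ⟨rootEquiv none c0 (c, q), rootEquiv_root _ _ _ _⟩, ?_, ?_⟩
    · rintro ⟨p, hp⟩
      apply Subtype.ext
      have : (c, ((rootEquiv none c0).symm p).2) = (rootEquiv none c0).symm p := by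
        ext1
        · exact hp.symm
        · rfl
      simp only [this, Equiv.apply_symm_apply]
    · intro q; simp
  have hc2 : ∀ c, N1 * (Fintype.card (Y none) : ℝ) * (Fintype.card (∀ j, Y (some j)) : ℝ) * Φ c
      = ∑ p ∈ univ.filter (fun p : Option (Option (Option J)) ≃ K => p none = c),
        ∑ y, ∑ z, f p y z := by
    intro c
    rw [hcY, Finset.sum_filter]
    have e1 : ∀ p : Option (Option (Option J)) ≃ K,
        (if p none = c then ∑ y, ∑ z, f p y z else 0) = ∑ y, ∑ z,
        (if valp p then (if p none = c then F (p, cons y z) else 0) else 0) := by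
      intro p
      split_ifs with hp hq
      · simp only [hf, hq, if_true]
      · simp only [hf, hq, if_false]
      · simp
      · simp
    refine Eq.symm ((Finset.sum_congr rfl fun p _ => e1 p).trans ?_)
    refine (sum_stt (fun q : Stt K J Y =>
      if valp q.1 then (if q.1 none = c then F q else 0) else 0)).trans ?_
    rw [← Finset.sum_filter, reidx]
    simp_rw [hee1, hFe, hΦ]
    by_cases hc : c ∈ A
    · rw [Finset.sum_eq_single_of_mem c hc, if_pos hc, card_mul_mean]
      · simp
      · intro c' _ hcc; simp [hcc]
    · rw [if_neg hc, mul_zero, Finset.sum_eq_zero]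
      intro c' hc'
      have : c' ≠ c := fun h => hc (h ▸ hc')
      simp [this]
  have hc3 : ∀ p : Option (Option (Option J)) ≃ K, p none ∉ A → ∀ y z, f p y z = 0 := by
    intro p hp y z; rw [hf]; exact if_neg (fun h => hp ((hv p).1 h))
  have hcore := one_step_core (Z := fun j => Y (some j)) hd hK hJ (starPos_option (J := J)) N1
    hc1
    (fun c y y' => Wc none * ∑ a ∈ (E none).erase (l none), mv allow a (D none c y) (D none c y'))
    (fun c y c' y' => mv allow (l none) (D none c y) (D none c' y'))
    (fun c y y' => mul_nonneg (hWc none) (Finset.sum_nonneg fun _ _ => mv_nonneg _ _ _ _))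
    (fun c y c' y' => mv_nonneg _ _ _ _)
    (fun c y c' => mv_row (hD none) allow _ _)
    (fun c c' y' => mv_col (hD none) allow _ _) hPh
    (fun j => lightK allow d (E (some j)) (l (some j)) (Wc (some j)) (D (some j)))
    (fun j => lightK_twoCol (hWc (some j)) (hPl j)) A hA f hc3 Φ hc2
  rw [hcY] at hcore
  have t1 : ∑ p, ∑ y, ∑ z, (f p y z - Φ (p none)) ^ 2 = ∑ c ∈ A, ∑ y, (g c y - mean (g c)) ^ 2 := by
    have e1 : ∀ (p : Option (Option (Option J)) ≃ K) y z, (f p y z - Φ (p none)) ^ 2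
        = if valp p then (F (p, cons y z) - mean (g (p none))) ^ 2 else 0 := by
      intro p y z
      simp only [hf, hΦ, ← hv]
      split_ifs <;> simp
    refine (Finset.sum_congr rfl fun p _ => Finset.sum_congr rfl fun y _ =>
      Finset.sum_congr rfl fun z _ => e1 p y z).trans ?_
    refine (sum_stt (fun q : Stt K J Y =>
        if valp q.1 then (F q - mean (g (q.1 none))) ^ 2 else 0)).trans ?_
    rw [← Finset.sum_filter, reidx]
    simp_rw [hee1, hFe]
  have t2 : ∑ c ∈ A, ∑ c' ∈ A, (Φ c - Φ c') ^ 2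
      = ∑ c ∈ A, ∑ c' ∈ A, (mean (g c) - mean (g c')) ^ 2 := by
    refine Finset.sum_congr rfl fun c hc => Finset.sum_congr rfl fun c' hc' => ?_
    simp only [hΦ, if_pos hc, if_pos hc']
  rw [t1, t2] at hcore
  refine hcore.trans ?_
  refine (core_le_enA hd hS hD allow Wc hWc W hWh hWr hWl hWd hrr A valp hv F f hf).trans ?_
  refine le_of_eq ?_
  congr 1
  · rw [Finset.sum_congr rfl hen1, Finset.mul_sum]
    simp_rw [mul_assoc, Finset.sum_mul, Finset.mul_sum]
    rw [Finset.sum_comm]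
    refine Finset.sum_congr rfl fun c _ => ?_
    rw [Finset.sum_comm]
    refine Finset.sum_congr rfl fun y _ => ?_
    rw [Finset.sum_comm]
  · rw [hen2]

/-- One step up the tree, with the parametrisations hidden. -/
theorem HasPI_step {d : ℕ} (hd : 3 ≤ d) (hK : Fintype.card K = d + 1)
    (hJ : Fintype.card J + 2 = d) (hS : StarG inc {r} r l E) (hirr : ¬ inc r r)
    (allow : I → K → K → Prop)
    (Wc : Option J → ℝ) (hWc : ∀ c, 0 ≤ Wc c)
    (hPh : HasPI inc μ allow d 3 (E none) (l none) (Wc none))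
    (hPl : ∀ j, HasPI inc μ allow d 2 (E (some j)) (l (some j)) (Wc (some j)))
    (W : ℝ) (hWh : Wc none ≤ W)
    (hWl : ∀ j, 700 * Wc (some j) ≤ W) (hWd : 700 * (45 * (d : ℝ)) ≤ W)
    (hrr : ∀ c c', allow r c c') :
    HasPI inc μ allow d 2 (starEdges {r} E) r W := by
  have hP : ∀ c : Option J, HasPI inc μ allow d (if c = none then 3 else 2) (E c) (l c) (Wc c) := by
    rintro (_ | j)
    · exact hPh
    · exact hPl j
  choose Y iF iD iN D hD hPI using hP
  have c0 : K := by
    have : Nonempty K := Fintype.card_pos_iff.1 (by omega)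
    exact Classical.arbitrary K
  have hne : Nonempty (Hid J Y c0) := by
    have hXK : Fintype.card (Option (Option (Option J))) = Fintype.card K := by simp; omega
    have p : Option (Option (Option J)) ≃ K := Fintype.equivOfCardEq hXK
    exact ⟨((rootEquiv none c0).symm p).2, fun c => Classical.choice (iN c)⟩
  have hd' : (3 : ℝ) ≤ d := by exact_mod_cast hd
  refine ⟨Hid J Y c0, inferInstance, inferInstance, hne, stD μ r E D c0,
    stD_triv hS hirr hD (by omega) c0, ?_⟩
  exact stD_PIT hd hK hJ hS hirr hD allow c0 Wc hWc (hPI none) (fun j => hPI (some j)) W hWh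
    (by linarith) hWl hWd hrr

end StepThm

/-! ### Induction along the tree -/

section Branch

variable {I K : Type} [DecidableEq I] [Fintype K] [DecidableEq K]

theorem PIT.mono {Y : Type} [Fintype Y] [Nonempty Y] {d : ℝ} {t t' : ℕ} (htt : t ≤ t')
    {E : K → Y → Y → ℝ} {R : K → Y → K → Y → ℝ} (h : PIT d t E R) : PIT d t' E R :=
  fun A hA g => h A (htt.trans hA) g

theorem HasPI.mono {inc : I → I → Prop} {μ : I → K} {allow : I → K → K → Prop} {d t t' : ℕ}
    {E : Finset I} {r : I} {W : ℝ} (htt : t ≤ t') (h : HasPI inc μ allow d t E r W) :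
    HasPI inc μ allow d t' E r W := by
  obtain ⟨Y, i1, i2, i3, D, h1, h2⟩ := h
  exact ⟨Y, i1, i2, i3, D, h1, h2.mono htt⟩

/-- A rooted `d`-regular branching of edges: `ch e` are the children of the edge `e`, and `ds e` its
descendants (including `e`). Each edge of `N` has no or `d - 1` children. -/
structure Br (inc : I → I → Prop) (d : ℕ) (N : Finset I) (ch ds : I → Finset I) : Prop where
  symm : ∀ a b, inc a b → inc b a
  irr : ∀ a, ¬ inc a a
  chN : ∀ e ∈ N, ch e ⊆ N
  chc : ∀ e ∈ N, ch e = ∅ ∨ (ch e).card + 1 = d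
  dsE : ∀ e ∈ N, ds e = insert e ((ch e).biUnion ds)
  notmem : ∀ e ∈ N, ∀ c ∈ ch e, e ∉ ds c
  disj : ∀ e ∈ N, ∀ c ∈ ch e, ∀ c' ∈ ch e, c ≠ c' → ∀ x ∈ ds c, x ∉ ds c'
  incP : ∀ e ∈ N, ∀ c ∈ ch e, ∀ x ∈ ds c, (inc e x ↔ x = c)
  incS : ∀ e ∈ N, ∀ c ∈ ch e, ∀ c' ∈ ch e, c ≠ c' → ∀ x ∈ ds c, ∀ x' ∈ ds c',
    (inc x x' ↔ x = c ∧ x' = c')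

variable {inc : I → I → Prop} {μ : I → K} {d : ℕ} {N : Finset I} {ch ds : I → Finset I}

theorem Br.self_mem (hB : Br inc d N ch ds) {e : I} (he : e ∈ N) : e ∈ ds e := by
  rw [hB.dsE e he]; exact mem_insert_self _ _

theorem Br.sub (hB : Br inc d N ch ds) {e c : I} (he : e ∈ N) (hc : c ∈ ch e) : ds c ⊆ ds e := by
  rw [hB.dsE e he]
  exact fun x hx => mem_insert_of_mem (mem_biUnion.2 ⟨c, hc, hx⟩)

theorem Br.card_lt (hB : Br inc d N ch ds) {e c : I} (he : e ∈ N) (hc : c ∈ ch e) :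
    (ds c).card < (ds e).card :=
  Finset.card_lt_card ⟨hB.sub he hc, fun h => hB.notmem e he c hc (h (hB.self_mem he))⟩

/-- The children of `e` other than `h`. -/
abbrev Lights (ch : I → Finset I) (e h : I) := {c // c ∈ (ch e).erase h}

/-- The root edges of the children, `none` being the distinguished child `h`. -/
def lroots (ch : I → Finset I) (e h : I) : Option (Lights ch e h) → I
  | none => h
  | some j => j.1

theorem lroots_mem {e h : I} (hh : h ∈ ch e) (c : Option (Lights ch e h)) :
    lroots ch e h c ∈ ch e := by
  rcases c with _ | j
  · exact hh
  · exact Finset.mem_of_mem_erase j.2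

theorem lroots_inj {e h : I} : Function.Injective (lroots ch e h) := by
  rintro (_ | j) (_ | j') hjj
  · rfl
  · exact absurd hjj.symm (Finset.ne_of_mem_erase j'.2)
  · exact absurd hjj (Finset.ne_of_mem_erase j.2)
  · rw [Subtype.ext (show j.1 = j'.1 from hjj)]

theorem Br.starG (hB : Br inc d N ch ds) {e h : I} (he : e ∈ N) (hh : h ∈ ch e) :
    StarG inc {e} e (lroots ch e h) (fun c => ds (lroots ch e h c)) where
  symm := hB.symm
  rU := mem_singleton_self e
  lE c := hB.self_mem (hB.chN e he (lroots_mem hh c))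
  dU c i hi := by
    rw [mem_singleton] at hi; subst hi
    exact hB.notmem _ he _ (lroots_mem hh c)
  dE c c' hcc := hB.disj e he _ (lroots_mem hh c) _ (lroots_mem hh c') (lroots_inj.ne hcc)
  incU c i hi i' hi' := by
    rw [mem_singleton] at hi; subst hi
    rw [hB.incP _ he _ (lroots_mem hh c) _ hi']; simp
  incE c c' hcc := hB.incS e he _ (lroots_mem hh c) _ (lroots_mem hh c') (lroots_inj.ne hcc)

theorem Br.starEdges_eq (hB : Br inc d N ch ds) {e h : I} (he : e ∈ N) (hh : h ∈ ch e) :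
    starEdges {e} (fun c => ds (lroots ch e h c)) = ds e := by
  ext x
  rw [mem_starEdges, hB.dsE e he, mem_insert, mem_biUnion, mem_singleton]
  refine or_congr Iff.rfl ⟨fun ⟨c, hc⟩ => ⟨_, lroots_mem hh c, hc⟩, ?_⟩
  rintro ⟨c, hc, hx⟩
  by_cases hch : c = h
  · exact ⟨none, hch ▸ hx⟩
  · exact ⟨some ⟨c, Finset.mem_erase.2 ⟨hch, hc⟩⟩, hx⟩

theorem Br.card_lights (hB : Br inc d N ch ds) {e h : I} (he : e ∈ N) (hh : h ∈ ch e) :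
    Fintype.card (Lights ch e h) + 2 = d := by
  rw [Fintype.card_coe, Finset.card_erase_of_mem hh]
  have := Finset.card_pos.2 ⟨h, hh⟩
  rcases hB.chc e he with h0 | h0
  · rw [h0] at hh; simp at hh
  · omega

/-- The step of the induction at the edge `e` with distinguished child `h`. -/
theorem Br.step (hB : Br inc d N ch ds) (hd : 3 ≤ d) (hK : Fintype.card K = d + 1)
    (allow : I → K → K → Prop) {e h : I} (he : e ∈ N) (hh : h ∈ ch e)
    (Wh : ℝ) (Wl : I → ℝ) (hWh0 : 0 ≤ Wh) (hWl0 : ∀ c, 0 ≤ Wl c)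
    (hPh : HasPI inc μ allow d 3 (ds h) h Wh)
    (hPl : ∀ c ∈ ch e, c ≠ h → HasPI inc μ allow d 2 (ds c) c (Wl c))
    (W : ℝ) (hWh : Wh ≤ W) (hWl : ∀ c ∈ ch e, c ≠ h → 700 * Wl c ≤ W)
    (hWd : 700 * (45 * (d : ℝ)) ≤ W)
    (hrr : ∀ c c', allow e c c') : HasPI inc μ allow d 2 (ds e) e W := by
  rw [← hB.starEdges_eq he hh]
  refine HasPI_step hd hK (hB.card_lights he hh) (hB.starG he hh) (hB.irr e) allow
    (fun c => match c with
      | none => Wh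
      | some j => Wl j.1) ?_ hPh ?_ W hWh ?_ hWd hrr
  · rintro (_ | j)
    · exact hWh0
    · exact hWl0 _
  · intro j
    exact hPl _ (Finset.mem_of_mem_erase j.2) (Finset.ne_of_mem_erase j.2)
  · intro j
    exact hWl _ (Finset.mem_of_mem_erase j.2) (Finset.ne_of_mem_erase j.2)

theorem triv_single (hirr : ∀ a, ¬ inc a a) (e : I) :
    Triv (Y := Unit) inc μ {e} e (fun c _ => Function.update μ e c) where
  root c y := by simp
  col c y := isCol_upd (hirr e) c
  inj c y y' _ := rfl
  surj σ hσ := by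
    refine ⟨σ e, (), ?_⟩
    funext i
    by_cases hi : i = e
    · subst hi; simp
    · rw [Function.update_of_ne hi, hσ.2 i (by simpa using hi)]

/-- The inequality for a single edge whose moves within the pair `L` are forbidden; with at least
three colours available a forbidden move is a composition of two permitted ones. -/
theorem leaf_PI (hirr : ∀ a, ¬ inc a a) (hd : 3 ≤ d) (allow : I → K → K → Prop) (e : I) (t : ℕ)
    (L : Finset K)
    (hL : ∀ c c', ¬ (c ∈ L ∧ c' ∈ L) → allow e c c') (ht : L.card ≤ 1 ∨ (L.card = 2 ∧ 3 ≤ t))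
    (W : ℝ) : HasPI inc μ allow d t {e} e W := by
  have hd' : (3 : ℝ) ≤ d := by exact_mod_cast hd
  refine ⟨Unit, inferInstance, inferInstance, inferInstance, _, triv_single hirr e, ?_⟩
  intro A hA g
  have hm : ∀ c, mean (g c) = g c () := fun c => by simp [mean]
  simp only [hm, Finset.univ_unique, Finset.sum_singleton, Fintype.card_unit, PUnit.default_eq_unit,
    sub_self, Nat.cast_one, mul_one, Finset.erase_singleton, Finset.sum_empty, mul_zero,
    zero_mul, Finset.sum_const_zero]
  have hA0 : (0 : ℝ) ≤ 1 / A.card := by positivity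
  -- the energy of the permitted moves
  set R : K → K → ℝ := fun c c' => mv allow e (Function.update μ e c) (Function.update μ e c') *
    (g c () - g c' ()) ^ 2 with hR
  have hR0 : ∀ c c', 0 ≤ R c c' := fun c c' => mul_nonneg (mv_nonneg _ _ _ _) (sq_nonneg _)
  have hR1 : ∀ c c', ¬ (c ∈ L ∧ c' ∈ L) → R c c' = (g c () - g c' ()) ^ 2 := by
    intro c c' hcc
    by_cases h : c = c'
    · subst h; simp [hR]
    · simp only [hR]
      unfold mv
      rw [if_pos, one_mul]
      refine ⟨⟨by simpa using h, fun b hb => ?_⟩, ?_⟩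
      · rw [Function.update_of_ne hb, Function.update_of_ne hb]
      · simpa using hL c c' hcc
  have hS : ∑ c ∈ A, ∑ c' ∈ A, R c c' = ∑ c ∈ A, ∑ c' ∈ A.erase c, R c c' := by
    refine Finset.sum_congr rfl fun c hc => ?_
    rw [← Finset.add_sum_erase _ _ hc, hR]
    simp
  have hSn : 0 ≤ ∑ c ∈ A, ∑ c' ∈ A, R c c' :=
    Finset.sum_nonneg fun _ _ => Finset.sum_nonneg fun _ _ => hR0 _ _
  have hone : ∀ a ∈ A, ∀ b ∈ A, R a b ≤ ∑ c ∈ A, ∑ c' ∈ A, R c c' := by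
    intro a ha b hb
    exact (Finset.single_le_sum (f := fun c' => R a c') (fun _ _ => hR0 _ _) hb).trans
      (Finset.single_le_sum (f := fun c => ∑ c' ∈ A, R c c')
        (fun _ _ => Finset.sum_nonneg fun _ _ => hR0 _ _) ha)
  have key : ∑ c ∈ A, ∑ c' ∈ A, (g c () - g c' ()) ^ 2 ≤ 9 * ∑ c ∈ A, ∑ c' ∈ A, R c c' := by
    by_cases hcase : L.card = 2 ∧ L ⊆ A
    · obtain ⟨hL2, hLA⟩ := hcase
      obtain ⟨a, b, hab, rfl⟩ := Finset.card_eq_two.1 hL2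
      have h3 : 3 ≤ A.card := by
        rcases ht with h | h
        · omega
        · exact h.2.trans hA
      obtain ⟨x, hxA, hx⟩ : ∃ x ∈ A, x ∉ ({a, b} : Finset K) := by
        by_contra hcon
        push Not at hcon
        have := Finset.card_le_card (show A ⊆ {a, b} from hcon)
        omega
      have haA : a ∈ A := hLA (by simp)
      have hbA : b ∈ A := hLA (by simp)
      have h1 : (g a () - g b ()) ^ 2 ≤ 4 * ∑ c ∈ A, ∑ c' ∈ A, R c c' := by
        have e1 := hone a haA x hxA
        have e2 := hone x hxA b hbA
        rw [hR1 _ _ (by tauto)] at e1 e2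
        nlinarith [sq_nonneg ((g a () - g x ()) - (g x () - g b ()))]
      have h2 : ∑ c ∈ A, ∑ c' ∈ A, (g c () - g c' ()) ^ 2 ≤ ∑ c ∈ A, ∑ c' ∈ A, (R c c' +
          ((if c = a then (if c' = b then (g a () - g b ()) ^ 2 else 0) else 0)
          + (if c = b then (if c' = a then (g a () - g b ()) ^ 2 else 0) else 0))) := by
        refine Finset.sum_le_sum fun c _ => Finset.sum_le_sum fun c' _ => ?_
        have hp1 : 0 ≤ (if c = a then (if c' = b then (g a () - g b ()) ^ 2 else 0) else 0) := by
          split_ifs <;> positivity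
        have hp2 : 0 ≤ (if c = b then (if c' = a then (g a () - g b ()) ^ 2 else 0) else 0) := by
          split_ifs <;> positivity
        by_cases hcc : c ∈ ({a, b} : Finset K) ∧ c' ∈ ({a, b} : Finset K)
        · simp only [mem_insert, mem_singleton] at hcc
          have := hR0 c c'
          obtain ⟨h | h, h' | h'⟩ := hcc <;> subst h <;> subst h' <;>
            simp [hab, hab.symm] <;> nlinarith
        · rw [hR1 c c' hcc]; linarith
      refine h2.trans ?_
      simp only [Finset.sum_add_distrib]
      simp only [Finset.sum_ite_eq', haA, hbA, if_true,
        Finset.sum_ite_irrel, Finset.sum_const_zero]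
      linarith
    · have h2 : ∑ c ∈ A, ∑ c' ∈ A, (g c () - g c' ()) ^ 2 = ∑ c ∈ A, ∑ c' ∈ A, R c c' := by
        refine Finset.sum_congr rfl fun c hc => Finset.sum_congr rfl fun c' hc' => ?_
        by_cases hcc : c ∈ L ∧ c' ∈ L
        · have : c = c' := by
            by_contra hne
            rcases ht with h | h
            · exact hne (Finset.card_le_one.1 h c hcc.1 c' hcc.2)
            · refine hcase ⟨h.1, ?_⟩
              have : ({c, c'} : Finset K) = L := by
                refine Finset.eq_of_subset_of_card_le ?_ ?_
                · intro x hx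
                  simp only [mem_insert, mem_singleton] at hx
                  rcases hx with rfl | rfl
                  · exact hcc.1
                  · exact hcc.2
                · rw [Finset.card_pair hne, h.1]
              rw [← this]
              intro x hx
              simp only [mem_insert, mem_singleton] at hx
              rcases hx with rfl | rfl
              · exact hc
              · exact hc'
          subst this
          simp [hR]
        · rw [hR1 c c' hcc]
      rw [h2]; linarith
  rw [← hS]
  have e1 : (3 : ℝ) / A.card = 3 * (1 / A.card) := by ring
  have e2 : 90 * ((d : ℝ) / A.card) = 90 * d * (1 / A.card) := by ring
  rw [e1, e2]
  have h4 := mul_le_mul_of_nonneg_left key hA0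
  have h5 := mul_nonneg hA0 hSn
  have e3 : ∑ x ∈ A, (0 : ℝ) ^ 2 = 0 := by simp
  have h6 := mul_le_mul_of_nonneg_right hd' h5
  rw [e3]
  linarith

/-- The inequality for a subtree without forbidden moves; the distinguished child is a largest one,
so that all others carry at most half of the edges. -/
theorem Br.thm1 (hB : Br inc d N ch ds) (hd : 3 ≤ d) (hK : Fintype.card K = d + 1)
    (allow : I → K → K → Prop) (n : ℕ) : ∀ e ∈ N, (ds e).card ≤ n →
    (∀ x ∈ ds e, ∀ c c', allow x c c') →
    HasPI inc μ allow d 2 (ds e) e (2 ^ 15 * d * ((ds e).card : ℝ) ^ 10) := by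
  have hd' : (3 : ℝ) ≤ d := by exact_mod_cast hd
  induction n with
  | zero =>
    intro e he hn _
    have := hB.self_mem he
    rw [Nat.le_zero, Finset.card_eq_zero] at hn
    rw [hn] at this; simp at this
  | succ n ih =>
    intro e he hn hall
    by_cases hce : ch e = ∅
    · have : ds e = {e} := by rw [hB.dsE e he, hce]; simp
      rw [this]
      exact leaf_PI hB.irr hd allow e 2 ∅ (fun c c' _ => hall e (hB.self_mem he) c c')
        (Or.inl (by simp)) _
    · obtain ⟨h, hh, hmax⟩ := Finset.exists_max_image (ch e) (fun c => (ds c).card)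
        (Finset.nonempty_iff_ne_empty.2 hce)
      have hih : ∀ c ∈ ch e, HasPI inc μ allow d 2 (ds c) c (2 ^ 15 * d * ((ds c).card : ℝ) ^ 10) :=
        fun c hc => ih c (hB.chN e he hc) (by have := hB.card_lt he hc; omega)
          (fun x hx => hall x (hB.sub he hc hx))
      have hm1 : (1 : ℝ) ≤ (ds e).card := by
        have := Finset.card_pos.2 ⟨e, hB.self_mem he⟩
        exact_mod_cast this
      refine hB.step hd hK allow he hh _ (fun c => 2 ^ 15 * d * ((ds c).card : ℝ) ^ 10)
        (by positivity) (fun c => by positivity) ((hih h hh).mono (by norm_num))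
        (fun c hc _ => hih c hc) _ ?_ ?_ ?_ (hall e (hB.self_mem he))
      · have : ((ds h).card : ℝ) ≤ (ds e).card := by exact_mod_cast (hB.card_lt he hh).le
        gcongr
      · intro c hc hch
        have h2 : (ds c).card + (ds h).card ≤ (ds e).card := by
          rw [← Finset.card_union_of_disjoint
            (Finset.disjoint_left.2 (hB.disj e he c hc h hh hch))]
          exact Finset.card_le_card (Finset.union_subset (hB.sub he hc) (hB.sub he hh))
        have h3 := hmax c hc
        have h4 : (2 : ℝ) * (ds c).card ≤ (ds e).card := by
          have : 2 * (ds c).card ≤ (ds e).card := by omega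
          exact_mod_cast this
        have h5 : (2 * ((ds c).card : ℝ)) ^ 10 ≤ ((ds e).card : ℝ) ^ 10 :=
          pow_le_pow_left₀ (by positivity) h4 10
        rw [mul_pow] at h5
        have h6 : (0 : ℝ) ≤ ((ds c).card : ℝ) ^ 10 := by positivity
        have h7 : 700 * ((ds c).card : ℝ) ^ 10 ≤ ((ds e).card : ℝ) ^ 10 := by linarith
        have h8 := mul_le_mul_of_nonneg_left h7 (show (0:ℝ) ≤ 2 ^ 15 * d by positivity)
        linarith
      · have := one_le_pow₀ hm1 (n := 10)
        nlinarith

/-- The inequality for a subtree with a leaf `p` whose moves within a pair `L` are forbidden; the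
distinguished child is the one towards `p`. -/
theorem Br.thm2 (hB : Br inc d N ch ds) (hd : 3 ≤ d) (hK : Fintype.card K = d + 1)
    (allow : I → K → K → Prop) (p : I) (hp : ch p = ∅) (L : Finset K) (hL : L.card ≤ 2)
    (hall : ∀ x ≠ p, ∀ c c', allow x c c') (hallp : ∀ c c', ¬ (c ∈ L ∧ c' ∈ L) → allow p c c')
    (n : ℕ) : ∀ e ∈ N, (ds e).card ≤ n → p ∈ ds e →
    HasPI inc μ allow d (if e = p then 3 else 2) (ds e) e (2 ^ 25 * d * ((ds e).card : ℝ) ^ 10) := by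
  have hd' : (3 : ℝ) ≤ d := by exact_mod_cast hd
  induction n with
  | zero =>
    intro e he hn _
    have := hB.self_mem he
    rw [Nat.le_zero, Finset.card_eq_zero] at hn
    rw [hn] at this; simp at this
  | succ n ih =>
    intro e he hn hpe
    by_cases hep : e = p
    · subst hep
      rw [if_pos rfl]
      have : ds e = {e} := by rw [hB.dsE e he, hp]; simp
      rw [this]
      refine leaf_PI hB.irr hd allow e 3 L hallp ?_ _
      rcases Nat.lt_or_ge L.card 2 with h | h
      · left; omega
      · right; exact ⟨le_antisymm hL h, le_refl _⟩
    · rw [if_neg hep]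
      obtain ⟨h, hh, hph⟩ : ∃ h ∈ ch e, p ∈ ds h := by
        rw [hB.dsE e he, mem_insert, mem_biUnion] at hpe
        rcases hpe with h | h
        · exact absurd h.symm hep
        · exact h
      have hm1 : (1 : ℝ) ≤ (ds e).card := by
        have := Finset.card_pos.2 ⟨e, hB.self_mem he⟩
        exact_mod_cast this
      refine hB.step hd hK allow he hh _ (fun c => 2 ^ 15 * d * ((ds c).card : ℝ) ^ 10)
        (by positivity) (fun c => by positivity)
        ((ih h (hB.chN e he hh) (by have := hB.card_lt he hh; omega) hph).mono
          (by split_ifs <;> norm_num))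
        (fun c hc hch => hB.thm1 hd hK allow _ c (hB.chN e he hc) le_rfl ?_) _ ?_ ?_ ?_
        (hall e hep)
      · intro x hx
        exact hall x (fun h' => hB.disj e he c hc h hh hch x hx (h' ▸ hph))
      · have : ((ds h).card : ℝ) ≤ (ds e).card := by exact_mod_cast (hB.card_lt he hh).le
        gcongr
      · intro c hc hch
        have h4 : ((ds c).card : ℝ) ≤ (ds e).card := by exact_mod_cast (hB.card_lt he hc).le
        have h5 : ((ds c).card : ℝ) ^ 10 ≤ ((ds e).card : ℝ) ^ 10 :=
          pow_le_pow_left₀ (by positivity) h4 10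
        have h8 := mul_le_mul_of_nonneg_left h5 (show (0:ℝ) ≤ 2 ^ 15 * d by positivity)
        have h9 : (0:ℝ) ≤ d * ((ds e).card : ℝ) ^ 10 := by positivity
        linarith
      · have := one_le_pow₀ hm1 (n := 10)
        nlinarith

end Branch

/-! ### The lower end of a tree with two boundary edges -/

/-- Poincaré inequality on a fibred space: the base has an inequality with kernel `B`, the fibres are
concentrated around `F0`, and each move of the base is matched with moves of many fibre points. -/
theorem fibration {S Ω : Type*} (s : Finset S) (Fib : S → Finset Ω) (f : S → Ω → ℝ)
    (F0 : S → ℝ) (B : S → S → ℝ) (hB0 : ∀ u u', 0 ≤ B u u') (b n M W : ℝ) (hn : 0 < n)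
    (hM : 0 ≤ M) (hW : 0 ≤ W)
    (hb1 : ∀ u ∈ s, ∑ u' ∈ s, B u u' ≤ b) (hb2 : ∀ u' ∈ s, ∑ u ∈ s, B u u' ≤ b)
    (hFib : ∀ u ∈ s, ((Fib u).card : ℝ) ≤ M) (G : S → S → Finset Ω) (t : S → S → Ω → Ω)
    (hG : ∀ u ∈ s, ∀ u' ∈ s, B u u' ≠ 0 → n ≤ ((G u u').card : ℝ) ∧ G u u' ⊆ Fib u ∧
      (∀ ω ∈ G u u', t u u' ω ∈ Fib u') ∧ Set.InjOn (t u u') (G u u'))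
    (m : ℝ) (hPo : ∑ u ∈ s, (F0 u - m) ^ 2
      ≤ W * ∑ u ∈ s, ∑ u' ∈ s, B u u' * (F0 u - F0 u') ^ 2) :
    ∑ u ∈ s, ∑ ω ∈ Fib u, (f u ω - m) ^ 2
      ≤ (2 + 12 * (M * W * b / n)) * ∑ u ∈ s, ∑ ω ∈ Fib u, (f u ω - F0 u) ^ 2
      + 6 * (M * W / n) * ∑ u ∈ s, ∑ u' ∈ s, B u u' *
          ∑ ω ∈ G u u', (f u ω - f u' (t u u' ω)) ^ 2 := by
  set V : S → ℝ := fun u => ∑ ω ∈ Fib u, (f u ω - F0 u) ^ 2 with hV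
  have hV0 : ∀ u, 0 ≤ V u := fun u => Finset.sum_nonneg fun _ _ => sq_nonneg _
  set T : S → S → ℝ := fun u u' => ∑ ω ∈ G u u', (f u ω - f u' (t u u' ω)) ^ 2 with hT
  have h1 : ∀ u ∈ s, ∑ ω ∈ Fib u, (f u ω - m) ^ 2 ≤ 2 * V u + 2 * (M * (F0 u - m) ^ 2) := by
    intro u hu
    have : ∑ ω ∈ Fib u, (f u ω - m) ^ 2
        ≤ ∑ ω ∈ Fib u, (2 * (f u ω - F0 u) ^ 2 + 2 * (F0 u - m) ^ 2) := by
      refine Finset.sum_le_sum fun ω _ => ?_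
      nlinarith [sq_nonneg ((f u ω - F0 u) - (F0 u - m))]
    rw [Finset.sum_add_distrib, ← Finset.mul_sum, Finset.sum_const, nsmul_eq_mul] at this
    have h2 := mul_le_mul_of_nonneg_right (hFib u hu) (sq_nonneg (F0 u - m))
    linarith
  have h2 : ∀ u ∈ s, ∀ u' ∈ s, B u u' * (n * (F0 u - F0 u') ^ 2)
      ≤ B u u' * (3 * (V u + V u' + T u u')) := by
    intro u hu u' hu'
    by_cases hB : B u u' = 0
    · rw [hB]; simp
    obtain ⟨g1, g2, g3, g4⟩ := hG u hu u' hu' hB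
    refine mul_le_mul_of_nonneg_left ?_ (hB0 _ _)
    have e1 : ∑ ω ∈ G u u', (F0 u - F0 u') ^ 2 ≤ ∑ ω ∈ G u u', (3 * (f u ω - F0 u) ^ 2
        + 3 * (f u' (t u u' ω) - F0 u') ^ 2 + 3 * (f u ω - f u' (t u u' ω)) ^ 2) := by
      refine Finset.sum_le_sum fun ω _ => ?_
      have : ∀ a b c : ℝ, (a + b + c) ^ 2 ≤ 3 * a ^ 2 + 3 * b ^ 2 + 3 * c ^ 2 := by
        intro a b c
        nlinarith [sq_nonneg (a - b), sq_nonneg (b - c), sq_nonneg (a - c)]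
      have h := this (F0 u - f u ω) (f u' (t u u' ω) - F0 u') (f u ω - f u' (t u u' ω))
      have e : F0 u - f u ω + (f u' (t u u' ω) - F0 u') + (f u ω - f u' (t u u' ω))
        = F0 u - F0 u' := by ring
      rw [e] at h
      have e' : (F0 u - f u ω) ^ 2 = (f u ω - F0 u) ^ 2 := by ring
      rw [e'] at h
      exact h
    rw [Finset.sum_const, nsmul_eq_mul, Finset.sum_add_distrib, Finset.sum_add_distrib,
      ← Finset.mul_sum, ← Finset.mul_sum, ← Finset.mul_sum] at e1
    have e2 : ∑ ω ∈ G u u', (f u ω - F0 u) ^ 2 ≤ V u :=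
      Finset.sum_le_sum_of_subset_of_nonneg g2 fun _ _ _ => sq_nonneg _
    have e3 : ∑ ω ∈ G u u', (f u' (t u u' ω) - F0 u') ^ 2 ≤ V u' := by
      rw [← Finset.sum_image (f := fun ω => (f u' ω - F0 u') ^ 2) g4]
      refine Finset.sum_le_sum_of_subset_of_nonneg ?_ fun _ _ _ => sq_nonneg _
      intro x hx
      obtain ⟨ω, hω, rfl⟩ := Finset.mem_image.1 hx
      exact g3 ω hω
    have e4 := mul_le_mul_of_nonneg_right g1 (sq_nonneg (F0 u - F0 u'))
    simp only [hT]
    linarith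
  have h3 : n * ∑ u ∈ s, ∑ u' ∈ s, B u u' * (F0 u - F0 u') ^ 2
      ≤ 6 * b * ∑ u ∈ s, V u + 3 * ∑ u ∈ s, ∑ u' ∈ s, B u u' * T u u' := by
    have e0 := Finset.sum_le_sum fun u hu => Finset.sum_le_sum fun u' hu' => h2 u hu u' hu'
    have e1 : ∑ u ∈ s, ∑ u' ∈ s, B u u' * (n * (F0 u - F0 u') ^ 2)
        = n * ∑ u ∈ s, ∑ u' ∈ s, B u u' * (F0 u - F0 u') ^ 2 := by
      simp_rw [Finset.mul_sum]
      refine Finset.sum_congr rfl fun u _ => Finset.sum_congr rfl fun u' _ => by ring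
    have e2 : ∑ u ∈ s, ∑ u' ∈ s, B u u' * (3 * (V u + V u' + T u u'))
        = 3 * ∑ u ∈ s, (∑ u' ∈ s, B u u') * V u + 3 * ∑ u' ∈ s, (∑ u ∈ s, B u u') * V u'
          + 3 * ∑ u ∈ s, ∑ u' ∈ s, B u u' * T u u' := by
      simp_rw [Finset.sum_mul]
      rw [Finset.sum_comm (f := fun u' u => B u u' * V u')]
      simp_rw [Finset.mul_sum, ← Finset.sum_add_distrib]
      refine Finset.sum_congr rfl fun u _ => Finset.sum_congr rfl fun u' _ => by ring
    rw [e1, e2] at e0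
    have e3 := Finset.sum_le_sum fun u hu => mul_le_mul_of_nonneg_right (hb1 u hu) (hV0 u)
    have e4 := Finset.sum_le_sum fun u hu => mul_le_mul_of_nonneg_right (hb2 u hu) (hV0 u)
    rw [← Finset.mul_sum] at e3 e4
    linarith
  have h4 := Finset.sum_le_sum h1
  rw [Finset.sum_add_distrib, ← Finset.mul_sum, ← Finset.mul_sum, ← Finset.mul_sum] at h4
  have h5 := mul_le_mul_of_nonneg_left hPo hM
  have h6 := mul_le_mul_of_nonneg_left h3 (show 0 ≤ M * W / n by positivity)
  have h7 : M * W / n * (n * ∑ u ∈ s, ∑ u' ∈ s, B u u' * (F0 u - F0 u') ^ 2)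
      = M * (W * ∑ u ∈ s, ∑ u' ∈ s, B u u' * (F0 u - F0 u') ^ 2) := by
    field_simp
  rw [h7] at h6
  have h8 : M * W * b / n = M * W / n * b := by ring
  rw [h8]
  linarith

section Fibre

variable {X K J : Type*} [Fintype X] [DecidableEq X] [Fintype K] [DecidableEq K]
  [Fintype J] [DecidableEq J] {Z : J → Type*} [∀ j, Fintype (Z j)] [∀ j, Nonempty (Z j)]

/-- With the root colour fixed and the colour at `h` restricted to a pair `L`, the light children
and the moves at `h` control the variance. -/
theorem fibre_var {d : ℕ} (hd : 3 ≤ d) (hK : Fintype.card K = d + 1) [Nonempty (X ≃ K)]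
    {r h o : X} {ι : J → X} (hX : StarPos r h o ι)
    (k : ∀ j, K → Z j → K → Z j → ℝ) (hk : ∀ j, TwoCol (k j))
    (N : ℝ) (hN : 0 < N) (s3 : ∀ φ : K → K → K → ℝ, ∑ p : X ≃ K, φ (p r) (p h) (p o)
      = N * ∑ a, ∑ b ∈ univ.erase a, ∑ c ∈ (univ.erase a).erase b, φ a b c)
    (L : Finset K) (hL : L.card ≤ 2) (c : K) (valp : (X ≃ K) → Prop)
    (hv : ∀ p, valp p ↔ p r = c ∧ p h ∈ L)
    (f : (X ≃ K) → (∀ j, Z j) → ℝ) :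
    ∃ F0, ∑ p ∈ univ.filter valp, ∑ z, (f p z - F0) ^ 2
      ≤ 200 * d * (∑ j, lightE ι o k j (fun p z => if valp p then f p z else 0)
        + ∑ p ∈ univ.filter (fun p => valp p ∧ p o ∈ L),
            ∑ z, (f p z - f ((Equiv.swap h o).trans p) z) ^ 2) := by
  have hd' : (3 : ℝ) ≤ d := by exact_mod_cast hd
  set g : (X ≃ K) → (∀ j, Z j) → ℝ := fun p z => if valp p then f p z else 0 with hg
  set TH := ∑ p ∈ univ.filter (fun p => valp p ∧ p o ∈ L),
            ∑ z, (f p z - f ((Equiv.swap h o).trans p) z) ^ 2 with hTH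
  set Lt := ∑ j, lightE ι o k j g with hLt
  set U' : Finset X := insert o (univ.image ι) with hU'
  set Gm := gav U' (fun p => mean (g p)) with hGm
  have hS1 := light_S1 ι o hX.inj hX.ιo k hk g
  rw [← hGm, ← hLt] at hS1
  obtain ⟨γ, hγ⟩ : ∃ γ : K → ℝ, ∀ p, p r = c → Gm p = γ (p h) := by
    refine ⟨fun a => if hh : ∃ p : X ≃ K, p r = c ∧ p h = a then Gm hh.choose else 0, ?_⟩
    intro p hp
    have hh : ∃ p' : X ≃ K, p' r = c ∧ p' h = p h := ⟨p, hp, rfl⟩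
    simp only [dif_pos hh]
    refine gav_eq_of_agree (gav_inv U' _) ?_
    intro x hx
    rcases hX.cover x with rfl | rfl | rfl | ⟨j, rfl⟩
    · rw [hp]; exact hh.choose_spec.1.symm
    · exact hh.choose_spec.2.symm
    · simp [hU'] at hx
    · simp [hU'] at hx
  set Q := ∑ p ∈ univ.filter valp, ∑ z, (f p z - γ (p h)) ^ 2 with hQ
  have hQ7 : Q ≤ 7 * Lt := by
    refine le_trans ?_ hS1
    rw [hQ]
    refine le_trans (le_of_eq ?_) (Finset.sum_le_sum_of_subset_of_nonneg
      (Finset.filter_subset valp univ) fun _ _ _ => Finset.sum_nonneg fun _ _ => sq_nonneg _)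
    refine Finset.sum_congr rfl fun p hp => Finset.sum_congr rfl fun z _ => ?_
    have hp' : valp p := by simpa using hp
    rw [hγ p ((hv p).1 hp').1, hg]
    simp only [if_pos hp']
  have hQ0 : 0 ≤ Q := Finset.sum_nonneg fun _ _ => Finset.sum_nonneg fun _ _ => sq_nonneg _
  have hTH0 : 0 ≤ TH := Finset.sum_nonneg fun _ _ => Finset.sum_nonneg fun _ _ => sq_nonneg _
  set M := (Fintype.card (∀ j, Z j) : ℝ) with hMdef
  have hM0 : 0 < M := card_pos_real _
  by_cases hex : ∃ a ∈ L, a ≠ c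
  swap
  · refine ⟨0, ?_⟩
    have : univ.filter valp = ∅ := by
      ext p
      simp only [mem_filter, mem_univ, true_and, notMem_empty, iff_false]
      intro hp
      obtain ⟨h1, h2⟩ := (hv p).1 hp
      exact hex ⟨p h, h2, fun h3 => hX.rh (p.injective (h1.trans h3.symm))⟩
    rw [this, Finset.sum_empty]
    have : 0 ≤ Lt := by linarith
    positivity
  obtain ⟨a, haL, hac⟩ := hex
  refine ⟨γ a, ?_⟩
  -- two colours of `L` are compared through the swap with the missing colour
  have hγd : ∀ b ∈ L, b ≠ c → N * M * (γ a - γ b) ^ 2 ≤ 3 * (2 * Q + TH) := by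
    intro b hb hbc
    by_cases hab : b = a
    · subst hab
      simp only [sub_self]
      nlinarith
    set P := univ.filter fun p : X ≃ K => p r = c ∧ p h = a ∧ p o = b with hP
    have hcard : (P.card : ℝ) = N := by
      have := s3 (fun x y z => if x = c ∧ y = a ∧ z = b then 1 else 0)
      rw [Finset.sum_boole] at this
      rw [hP, this]
      rw [Finset.sum_eq_single_of_mem c (mem_univ _), Finset.sum_eq_single_of_mem a,
        Finset.sum_eq_single_of_mem b]
      · simp
      · simp [hbc, hab]
      · intro x _ hx; simp [hx]
      · simp [hac]
      · intro x _ hx; simp [hx]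
      · intro x _ hx; simp [hx]
    set sw : Equiv.Perm X := Equiv.swap h o with hsw
    have hss : ∀ p : X ≃ K, sw.trans (sw.trans p) = p := by intro p; ext x; simp [hsw]
    have hP1 : P ⊆ univ.filter valp := by
      intro p hp
      simp only [hP, mem_filter, mem_univ, true_and] at hp ⊢
      exact (hv p).2 ⟨hp.1, hp.2.1 ▸ haL⟩
    have hP2 : P ⊆ univ.filter (fun p => valp p ∧ p o ∈ L) := by
      intro p hp
      have := hP1 hp
      simp only [hP, mem_filter, mem_univ, true_and] at hp this ⊢
      exact ⟨this, hp.2.2 ▸ hb⟩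
    have hsr : ∀ p : X ≃ K, (sw.trans p) r = p r := fun p => by
      rw [Equiv.trans_apply, hsw, Equiv.swap_apply_of_ne_of_ne hX.rh hX.ro]
    have hsh : ∀ p : X ≃ K, (sw.trans p) h = p o := fun p => by simp [hsw]
    have e1 : ∑ p ∈ P, ∑ z : ∀ j, Z j, (γ a - γ b) ^ 2 ≤ ∑ p ∈ P, ∑ z, (3 * (f p z - γ (p h)) ^ 2
        + 3 * (f (sw.trans p) z - γ ((sw.trans p) h)) ^ 2
        + 3 * (f p z - f (sw.trans p) z) ^ 2) := by
      refine Finset.sum_le_sum fun p hp => Finset.sum_le_sum fun z _ => ?_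
      simp only [hP, mem_filter, mem_univ, true_and] at hp
      rw [hsh, hp.2.1, hp.2.2]
      nlinarith [sq_nonneg ((f p z - γ a) + (f (sw.trans p) z - γ b)),
        sq_nonneg ((f p z - γ a) + (f p z - f (sw.trans p) z)),
        sq_nonneg ((f (sw.trans p) z - γ b) - (f p z - f (sw.trans p) z))]
    simp only [Finset.sum_const, nsmul_eq_mul, Finset.card_univ, hcard, ← hMdef,
      Finset.sum_add_distrib, ← Finset.mul_sum] at e1
    have e2 : ∑ p ∈ P, ∑ z, (f p z - γ (p h)) ^ 2 ≤ Q :=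
      Finset.sum_le_sum_of_subset_of_nonneg hP1 fun _ _ _ =>
        Finset.sum_nonneg fun _ _ => sq_nonneg _
    have e3 : ∑ p ∈ P, ∑ z, (f (sw.trans p) z - γ ((sw.trans p) h)) ^ 2 ≤ Q := by
      rw [← Finset.sum_image (f := fun p => ∑ z, (f p z - γ (p h)) ^ 2)
        (g := fun p : X ≃ K => sw.trans p)
        (fun p _ p' _ hpp => by rw [← hss p, ← hss p']; exact congrArg sw.trans hpp)]
      refine Finset.sum_le_sum_of_subset_of_nonneg ?_ fun _ _ _ =>
        Finset.sum_nonneg fun _ _ => sq_nonneg _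
      intro q hq
      obtain ⟨p, hp, rfl⟩ := Finset.mem_image.1 hq
      simp only [hP, mem_filter, mem_univ, true_and] at hp ⊢
      rw [hv, hsr, hsh]
      exact ⟨hp.1, hp.2.2 ▸ hb⟩
    have e4 : ∑ p ∈ P, ∑ z, (f p z - f (sw.trans p) z) ^ 2 ≤ TH :=
      Finset.sum_le_sum_of_subset_of_nonneg hP2 fun _ _ _ =>
        Finset.sum_nonneg fun _ _ => sq_nonneg _
    have e5 : N * M * (γ a - γ b) ^ 2 = N * (M * (γ a - γ b) ^ 2) := by ring
    rw [e5]
    linarith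
  have hcF : ((univ.filter valp).card : ℝ) ≤ 2 * ((d : ℝ) - 1) * N := by
    have h0 := s3 (fun x y _ => if x = c ∧ y ∈ L then 1 else 0)
    have e0 : ((univ.filter valp).card : ℝ)
        = ∑ p : X ≃ K, if p r = c ∧ p h ∈ L then (1:ℝ) else 0 := by
      rw [Finset.sum_boole]
      congr 2
      ext p; simp [hv]
    rw [e0, h0, Finset.sum_eq_single_of_mem c (mem_univ _)]
    swap
    · intro x _ hx; simp [hx]
    have e1 : ∀ b ∈ (univ : Finset K).erase c, ∑ x ∈ (univ.erase c).erase b,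
        (if c = c ∧ b ∈ L then (1:ℝ) else 0) = ((d:ℝ) - 1) * (if b ∈ L then 1 else 0) := by
      intro b hb
      rw [sum_erase_erase_const hK hb]
      simp
    rw [Finset.sum_congr rfl e1, ← Finset.mul_sum]
    have e2 : ∑ b ∈ (univ : Finset K).erase c, (if b ∈ L then (1:ℝ) else 0) ≤ 2 := by
      rw [Finset.sum_boole]
      have : ((univ.erase c).filter fun b => b ∈ L).card ≤ 2 :=
        (Finset.card_le_card (fun x hx => (Finset.mem_filter.1 hx).2)).trans hL
      exact_mod_cast this
    have e3 := mul_le_mul_of_nonneg_left e2 (show 0 ≤ N * ((d:ℝ) - 1) by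
      apply mul_nonneg hN.le; linarith)
    linarith
  have hb : ∀ p ∈ univ.filter valp, ∑ z, (f p z - γ a) ^ 2
      ≤ 2 * ∑ z, (f p z - γ (p h)) ^ 2 + 2 * (3 * (2 * Q + TH) / N) := by
    intro p hp
    have hp' : valp p := by simpa using hp
    obtain ⟨h1, h2⟩ := (hv p).1 hp'
    have h3 := hγd (p h) h2 (fun h3 => hX.rh (p.injective (h1.trans h3.symm)))
    have h4 : M * (γ a - γ (p h)) ^ 2 ≤ 3 * (2 * Q + TH) / N := by
      rw [le_div_iff₀ hN]; linarith
    have h5 : ∑ z, (f p z - γ a) ^ 2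
        ≤ ∑ z, (2 * (f p z - γ (p h)) ^ 2 + 2 * (γ a - γ (p h)) ^ 2) := by
      refine Finset.sum_le_sum fun z _ => ?_
      nlinarith [sq_nonneg ((f p z - γ (p h)) + (γ a - γ (p h)))]
    rw [Finset.sum_add_distrib, ← Finset.mul_sum, Finset.sum_const, nsmul_eq_mul, Finset.card_univ,
      ← hMdef] at h5
    linarith
  refine (Finset.sum_le_sum hb).trans ?_
  rw [Finset.sum_add_distrib, ← Finset.mul_sum, Finset.sum_const, nsmul_eq_mul, ← hQ]
  have h1 := mul_le_mul_of_nonneg_right hcF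
    (show 0 ≤ 2 * (3 * (2 * Q + TH) / N) by positivity)
  have h2 : 2 * ((d : ℝ) - 1) * N * (2 * (3 * (2 * Q + TH) / N))
      = 12 * ((d:ℝ) - 1) * (2 * Q + TH) := by
    field_simp; ring
  rw [h2] at h1
  have h3 : 2 * Q + 12 * ((d:ℝ) - 1) * (2 * Q + TH) ≤ 24 * d * Q + 12 * d * TH := by
    nlinarith
  have h4 := mul_le_mul_of_nonneg_left hQ7 (show 0 ≤ 24 * (d:ℝ) by positivity)
  have h5 : 0 ≤ (d:ℝ) * TH := by positivity
  have h6 : 0 ≤ (d:ℝ) * Lt := by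
    have : 0 ≤ Lt := by linarith
    positivity
  linarith

end Fibre

/-! ### Poincaré inequalities for sets of colourings -/

section Top

variable {I K J : Type} [Fintype I] [DecidableEq I] [Fintype K] [DecidableEq K]
  [Fintype J] [DecidableEq J]

/-- The energy of the allowed recolourings of edge `a` inside the set `s` of colourings. -/
noncomputable def enS (allow : I → K → K → Prop) (s : Finset (I → K)) (F : (I → K) → ℝ) (a : I) : ℝ :=
  ∑ σ ∈ s, ∑ τ ∈ s, mv allow a σ τ * (F σ - F τ) ^ 2

/-- Poincaré inequality with constant `W` for the allowed single-edge recolourings inside `s`. -/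
def Poin (allow : I → K → K → Prop) (s : Finset (I → K)) (Es : Finset I) (W : ℝ) : Prop :=
  ∀ F : (I → K) → ℝ, ∃ m, ∑ σ ∈ s, (F σ - m) ^ 2 ≤ W * ∑ a ∈ Es, enS allow s F a

theorem enS_nonneg (allow : I → K → K → Prop) (s : Finset (I → K)) (F : (I → K) → ℝ) (a : I) :
    0 ≤ enS allow s F a :=
  Finset.sum_nonneg fun _ _ => Finset.sum_nonneg fun _ _ =>
    mul_nonneg (mv_nonneg _ _ _ _) (sq_nonneg _)

theorem Poin.mono {allow : I → K → K → Prop} {s : Finset (I → K)} {Es : Finset I} {W W' : ℝ}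
    (h : Poin allow s Es W) (hW : W ≤ W') : Poin allow s Es W' := by
  intro F
  obtain ⟨m, hm⟩ := h F
  exact ⟨m, hm.trans (mul_le_mul_of_nonneg_right hW
    (Finset.sum_nonneg fun _ _ => enS_nonneg _ _ _ _))⟩

theorem triv_sum {Y : Type} [Fintype Y] {inc : I → I → Prop} {μ : I → K} {E : Finset I} {r : I}
    {D : K → Y → I → K} (hD : Triv inc μ E r D) (A : Finset K) (s : Finset (I → K))
    (hs : ∀ σ, σ ∈ s ↔ IsCol inc μ E σ ∧ σ r ∈ A) (G : (I → K) → ℝ) :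
    ∑ σ ∈ s, G σ = ∑ c ∈ A, ∑ y, G (D c y) := by
  rw [← Finset.sum_product']
  symm
  refine Finset.sum_bij (fun x _ => D x.1 x.2) ?_ ?_ ?_ ?_
  · rintro ⟨c, y⟩ h
    rw [hs]
    refine ⟨hD.col _ _, ?_⟩
    rw [hD.root]
    exact (Finset.mem_product.1 h).1
  · rintro ⟨c, y⟩ _ ⟨c', y'⟩ _ h
    have hc : c = c' := by
      have := congrFun h r
      simpa only [hD.root] using this
    subst hc
    exact congrArg (Prod.mk c) (hD.inj c y y' h)
  · intro σ hσ
    obtain ⟨h1, h2⟩ := (hs σ).1 hσ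
    obtain ⟨c, y, rfl⟩ := hD.surj σ h1
    rw [hD.root] at h2
    exact ⟨(c, y), by simp [h2], rfl⟩
  · intros; rfl

/-- The recursive inequality yields the Poincaré inequality for the colourings whose root colour
lies in a set of at least `t` colours. -/
theorem HasPI.poin {inc : I → I → Prop} {μ : I → K} {allow : I → K → K → Prop} {d t : ℕ}
    {E : Finset I} {r : I} (hr : r ∈ E) {W W' : ℝ} (h : HasPI inc μ allow d t E r W) (hW0 : 0 ≤ W)
    (hW : W ≤ W') (hd : 90 * (d : ℝ) ≤ W') (A : Finset K) (hA : t ≤ A.card) (hA1 : 1 ≤ A.card)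
    (s : Finset (I → K)) (hs : ∀ σ, σ ∈ s ↔ IsCol inc μ E σ ∧ σ r ∈ A) :
    Poin allow s E W' := by
  obtain ⟨Y, _, _, _, D, hD, hP⟩ := h
  intro F
  obtain ⟨g, hg'⟩ : ∃ g : K → Y → ℝ, ∀ c y, F (D c y) = g c y := ⟨fun c y => F (D c y), fun _ _ => rfl⟩
  have h1 := hP A hA g
  have hA0 : (1 : ℝ) ≤ A.card := by exact_mod_cast hA1
  set m : ℝ := (∑ c ∈ A, mean (g c)) / A.card with hm
  refine ⟨m, ?_⟩
  have hm' : (A.card : ℝ) * m = ∑ c ∈ A, mean (g c) := by rw [hm]; exact mul_div_cancel₀ _ (by linarith)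
  have h2 := sum_pair_sq A (fun c => mean (g c)) m hm'
  rw [triv_sum hD A s hs]
  have h3 : ∀ a ∈ E, enS allow s F a = ∑ c ∈ A, ∑ y, ∑ c' ∈ A, ∑ y', mv allow a (D c y) (D c' y')
      * (g c y - g c' y') ^ 2 := by
    intro a _
    unfold enS
    rw [triv_sum hD A s hs]
    refine sum_congr rfl fun c _ => sum_congr rfl fun y _ => ?_
    rw [triv_sum hD A s hs]
    simp only [hg']
  simp only [hg']
  have h4 : ∀ c, ∑ y, (g c y - m) ^ 2
      = ∑ y, (g c y - mean (g c)) ^ 2 + (Fintype.card Y : ℝ) * (mean (g c) - m) ^ 2 :=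
    fun c => mean_pyth (g c) m
  simp only [h4, Finset.sum_add_distrib, ← Finset.mul_sum]
  rw [h2] at h1
  have h5 : 3 * (Fintype.card Y : ℝ) / A.card * (2 * (A.card : ℝ) * ∑ c ∈ A, (mean (g c) - m) ^ 2)
      = 6 * ((Fintype.card Y : ℝ) * ∑ c ∈ A, (mean (g c) - m) ^ 2) := by
    field_simp; ring
  rw [h5] at h1
  have h6 : 0 ≤ (Fintype.card Y : ℝ) * ∑ c ∈ A, (mean (g c) - m) ^ 2 :=
    mul_nonneg (by positivity) (Finset.sum_nonneg fun _ _ => sq_nonneg _)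
  have hmn : ∀ a c y c' y', 0 ≤ mv allow a (D c y) (D c' y') * (g c y - g c' y') ^ 2 :=
    fun a c y c' y' => mul_nonneg (mv_nonneg _ _ _ _) (sq_nonneg _)
  have h7 : ∑ c ∈ A, ∑ y, ∑ y', (W * ∑ a ∈ E.erase r, mv allow a (D c y) (D c y'))
      * (g c y - g c y') ^ 2 ≤ W' * ∑ a ∈ E.erase r, enS allow s F a := by
    have e1 : ∑ c ∈ A, ∑ y, ∑ y', (W * ∑ a ∈ E.erase r, mv allow a (D c y) (D c y'))
      * (g c y - g c y') ^ 2 = W * ∑ a ∈ E.erase r, ∑ c ∈ A, ∑ y, ∑ y',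
        mv allow a (D c y) (D c y') * (g c y - g c y') ^ 2 := by
      rw [Finset.sum_comm (s := E.erase r)]
      simp_rw [Finset.sum_comm (s := E.erase r), Finset.mul_sum, Finset.sum_mul, mul_assoc]
    rw [e1]
    refine mul_le_mul hW (Finset.sum_le_sum fun a ha => ?_) (Finset.sum_nonneg fun a _ =>
      Finset.sum_nonneg fun c _ => Finset.sum_nonneg fun y _ => Finset.sum_nonneg fun y' _ =>
        hmn _ _ _ _ _) (hW0.trans hW)
    rw [h3 a (Finset.mem_of_mem_erase ha)]
    refine Finset.sum_le_sum fun c hc => Finset.sum_le_sum fun y _ => ?_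
    exact Finset.single_le_sum (f := fun c' => ∑ y', mv allow a (D c y) (D c' y')
      * (g c y - g c' y') ^ 2) (fun c' _ => Finset.sum_nonneg fun y' _ => hmn _ _ _ _ _) hc
  have h8 : 90 * ((d : ℝ) / A.card) * ∑ c ∈ A, ∑ c' ∈ A.erase c, ∑ y, ∑ y',
      mv allow r (D c y) (D c' y') * (g c y - g c' y') ^ 2 ≤ W' * enS allow s F r := by
    have e2 : 90 * ((d : ℝ) / A.card) ≤ W' := by
      refine le_trans ?_ hd
      have : (d : ℝ) / A.card ≤ d := div_le_self (by positivity) hA0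
      linarith
    refine mul_le_mul e2 ?_ (Finset.sum_nonneg fun c _ => Finset.sum_nonneg fun c' _ =>
      Finset.sum_nonneg fun y _ => Finset.sum_nonneg fun y' _ => hmn _ _ _ _ _) (hW0.trans hW)
    rw [h3 r hr]
    refine Finset.sum_le_sum fun c hc => ?_
    rw [Finset.sum_comm]
    refine Finset.sum_le_sum fun y _ => ?_
    exact Finset.sum_le_sum_of_subset_of_nonneg (Finset.erase_subset _ _) fun c' _ _ =>
      Finset.sum_nonneg fun y' _ => hmn _ _ _ _ _
  rw [← Finset.add_sum_erase E _ hr, mul_add]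
  linarith

theorem mv_row_le {d : ℕ} (hK : Fintype.card K = d + 1) (allow : I → K → K → Prop)
    (s : Finset (I → K)) (a : I) (u : I → K) :
    ∑ u' ∈ s, mv allow a u u' ≤ (d : ℝ) + 1 := by
  unfold mv
  rw [Finset.sum_boole]
  have : (s.filter fun u' => DiffAt a u u' ∧ allow a (u a) (u' a)).card ≤ (univ : Finset K).card := by
    refine Finset.card_le_card_of_injOn (fun u' => u' a) (fun _ _ => mem_univ _) ?_
    intro v hv v' hv' h
    simp only [coe_filter, Set.mem_ofPred_eq] at hv hv'
    funext i
    by_cases hi : i = a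
    · rw [hi]; exact h
    · rw [← hv.2.1.2 i hi, ← hv'.2.1.2 i hi]
  rw [Finset.card_univ, hK] at this
  exact_mod_cast this

theorem mv_col_le {d : ℕ} (hK : Fintype.card K = d + 1) (allow : I → K → K → Prop)
    (s : Finset (I → K)) (a : I) (u' : I → K) :
    ∑ u ∈ s, mv allow a u u' ≤ (d : ℝ) + 1 := by
  unfold mv
  rw [Finset.sum_boole]
  have : (s.filter fun u => DiffAt a u u' ∧ allow a (u a) (u' a)).card ≤ (univ : Finset K).card := by
    refine Finset.card_le_card_of_injOn (fun u => u a) (fun _ _ => mem_univ _) ?_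
    intro v hv v' hv' h
    simp only [coe_filter, Set.mem_ofPred_eq] at hv hv'
    funext i
    by_cases hi : i = a
    · rw [hi]; exact h
    · rw [hv.2.1.2 i hi, hv'.2.1.2 i hi]
  rw [Finset.card_univ, hK] at this
  exact_mod_cast this

end Top

section TwoEnded

variable {I K J : Type} [Fintype I] [DecidableEq I] [Fintype K] [DecidableEq K]
  [Fintype J] [DecidableEq J]
  {inc : I → I → Prop} {μ : I → K} {U : Finset I} {r : I} {l : Option J → I}
  {E : Option J → Finset I} {Y : Option J → Type} [∀ c, Fintype (Y c)] [∀ c, DecidableEq (Y c)]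
  [∀ c, Nonempty (Y c)] {D : ∀ c, K → Y c → I → K}

/-- The states around the lower end of `r` compatible with the colouring `u` of the upper part, the
edge `l none` having its colour in `L`. -/
noncomputable def fibL (Y : Option J → Type) [∀ c, Fintype (Y c)] [∀ c, DecidableEq (Y c)]
    (r : I) (L : Finset K) (u : I → K) : Finset (Stt K J Y) :=
  univ.filter fun q => q.1 none = u r ∧ q.1 (some (some none)) ∈ L

theorem mem_fibL {L : Finset K} {u : I → K} {q : Stt K J Y} :
    q ∈ fibL Y r L u ↔ q.1 none = u r ∧ q.1 (some (some none)) ∈ L := by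
  simp [fibL]

theorem glue_mem (hS : StarG inc U r l E) (hD : ∀ c, Triv inc μ (E c) (l c) (D c)) {x : I}
    (hx : x ∈ U) {A L : Finset K} {S s' : Finset (I → K)}
    (hSb : ∀ σ, σ ∈ S ↔ IsCol inc μ U σ ∧ σ x ∈ A)
    (hs' : ∀ σ, σ ∈ s' ↔ IsCol inc μ (starEdges U E) σ ∧ σ x ∈ A ∧ σ (l none) ∈ L)
    {u : I → K} (hu : u ∈ S) {q : Stt K J Y} (hq : q ∈ fibL Y r L u) :
    glue μ U E D u q.1 q.2 ∈ s' := by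
  rw [mem_fibL] at hq
  obtain ⟨h1, h2⟩ := (hSb u).1 hu
  rw [hs', glue_U hx, glue_l hS hD]
  exact ⟨glue_col hS hD h1 hq.1, h2, hq.2⟩

theorem glue_sum (hS : StarG inc U r l E) (hD : ∀ c, Triv inc μ (E c) (l c) (D c))
    (hC : Fintype.card (Option J) + 2 = Fintype.card K) {x : I}
    (hx : x ∈ U) {A L : Finset K} {S s' : Finset (I → K)}
    (hSb : ∀ σ, σ ∈ S ↔ IsCol inc μ U σ ∧ σ x ∈ A)
    (hs' : ∀ σ, σ ∈ s' ↔ IsCol inc μ (starEdges U E) σ ∧ σ x ∈ A ∧ σ (l none) ∈ L)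
    (G : (I → K) → ℝ) :
    ∑ σ ∈ s', G σ = ∑ u ∈ S, ∑ q ∈ fibL Y r L u, G (glue μ U E D u q.1 q.2) := by
  rw [Finset.sum_sigma']
  symm
  refine Finset.sum_bij (fun z _ => glue μ U E D z.1 z.2.1 z.2.2) ?_ ?_ ?_ ?_
  · rintro ⟨u, q⟩ h
    rw [Finset.mem_sigma] at h
    exact glue_mem hS hD hx hSb hs' h.1 h.2
  · rintro ⟨u, p, w⟩ h ⟨u', p', w'⟩ h' e
    rw [Finset.mem_sigma, mem_fibL] at h h'
    obtain ⟨rfl, rfl, rfl⟩ := glue_inj hS hD ((hSb _).1 h.1).1 h.2.1 ((hSb _).1 h'.1).1 h'.2.1 e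
    rfl
  · intro σ hσ
    obtain ⟨h1, h2, h3⟩ := (hs' σ).1 hσ
    obtain ⟨u, p, w, hu, hp, rfl⟩ := glue_surj hS hD hC h1
    rw [glue_U hx] at h2
    rw [glue_l hS hD] at h3
    refine ⟨⟨u, p, w⟩, ?_, rfl⟩
    rw [Finset.mem_sigma, mem_fibL]
    exact ⟨(hSb u).2 ⟨hu, h2⟩, hp, h3⟩
  · intros; rfl

/-- Bounding the energy of a parametrised family of moves between glued colourings. -/
theorem glue_le_enS {β : Type*} (hS : StarG inc U r l E) (hD : ∀ c, Triv inc μ (E c) (l c) (D c))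
    (hC : Fintype.card (Option J) + 2 = Fintype.card K) {x : I}
    (hx : x ∈ U) {A L : Finset K} {S s' : Finset (I → K)}
    (hSb : ∀ σ, σ ∈ S ↔ IsCol inc μ U σ ∧ σ x ∈ A)
    (hs' : ∀ σ, σ ∈ s' ↔ IsCol inc μ (starEdges U E) σ ∧ σ x ∈ A ∧ σ (l none) ∈ L)
    (allow : I → K → K → Prop) (F : (I → K) → ℝ) (a : I)
    (T : (I → K) → Stt K J Y → Finset β) (tgt : (I → K) → Stt K J Y → β → I → K)
    (κ : (I → K) → Stt K J Y → β → ℝ)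
    (h : ∀ u ∈ S, ∀ q ∈ fibL Y r L u, (∀ b ∈ T u q, tgt u q b ∈ s' ∧
      κ u q b ≤ mv allow a (glue μ U E D u q.1 q.2) (tgt u q b)) ∧
      Set.InjOn (tgt u q) (T u q)) :
    ∑ u ∈ S, ∑ q ∈ fibL Y r L u, ∑ b ∈ T u q,
        κ u q b * (F (glue μ U E D u q.1 q.2) - F (tgt u q b)) ^ 2 ≤ enS allow s' F a := by
  unfold enS
  rw [glue_sum hS hD hC hx hSb hs']
  refine Finset.sum_le_sum fun u hu => Finset.sum_le_sum fun q hq => ?_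
  obtain ⟨h1, h2⟩ := h u hu q hq
  refine le_trans (Finset.sum_le_sum fun b hb =>
    mul_le_mul_of_nonneg_right (h1 b hb).2 (sq_nonneg _)) ?_
  rw [← Finset.sum_image (f := fun σ' => mv allow a (glue μ U E D u q.1 q.2) σ' *
    (F (glue μ U E D u q.1 q.2) - F σ') ^ 2) h2]
  refine Finset.sum_le_sum_of_subset_of_nonneg ?_ fun _ _ _ =>
    mul_nonneg (mv_nonneg _ _ _ _) (sq_nonneg _)
  intro σ hσ
  obtain ⟨b, hb, rfl⟩ := Finset.mem_image.1 hσ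
  exact (h1 b hb).1

/-- Variance inside the fibre over a colouring `u` of the upper part. -/
theorem fibL_var {d : ℕ} (hd : 3 ≤ d) (hK : Fintype.card K = d + 1)
    [Nonempty (Option (Option (Option J)) ≃ K)]
    (hS : StarG inc U r l E) (hD : ∀ c, Triv inc μ (E c) (l c) (D c))
    (hE : E none = {l none}) (hY : ∀ y y' : Y none, y = y') (W1 Wl : ℝ) (hWl : 0 ≤ Wl) (hW1 : Wl ≤ W1)
    (hW2 : 45 * (d : ℝ) ≤ W1)
    (hk : ∀ j, TwoCol (lightK (fun _ _ _ => True) d (E (some j)) (l (some j)) Wl (D (some j))))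
    (N : ℝ) (hN : 0 < N) (s3 : ∀ φ : K → K → K → ℝ, ∑ p : Option (Option (Option J)) ≃ K,
        φ (p none) (p (some (some none))) (p (some none))
      = N * ∑ a, ∑ b ∈ univ.erase a, ∑ c ∈ (univ.erase a).erase b, φ a b c)
    (L : Finset K) (hL : L.card ≤ 2) (u : I → K) (Fu : Stt K J Y → ℝ) :
    ∃ F0, ∑ q ∈ fibL Y r L u, (Fu q - F0) ^ 2
      ≤ 200 * d * W1 * ∑ a ∈ univ.biUnion E, ∑ q ∈ fibL Y r L u, ∑ q' ∈ fibL Y r L u,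
        mv (fun _ _ _ => True) a (glue μ U E D u q.1 q.2) (glue μ U E D u q'.1 q'.2)
          * (Fu q - Fu q') ^ 2 := by
  obtain ⟨y0⟩ := (inferInstance : Nonempty (Y none))
  have hd' : (3 : ℝ) ≤ d := by exact_mod_cast hd
  obtain ⟨valp, hv⟩ : ∃ valp : (Option (Option (Option J)) ≃ K) → Prop,
    ∀ p, valp p ↔ p none = u r ∧ p (some (some none)) ∈ L := ⟨_, fun _ => Iff.rfl⟩
  have hfib : fibL Y r L u = univ.filter fun q : Stt K J Y => valp q.1 := by
    ext q; rw [mem_fibL]; simp [hv]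
  have hyu : ∀ G : Y none → ℝ, ∑ y, G y = G y0 := fun G => by
    rw [Fintype.sum_eq_single y0]
    exact fun y hy => absurd (hY y y0) hy
  obtain ⟨F0, hF0⟩ := fibre_var hd hK starPos_option
    (fun j => lightK (fun _ _ _ => True) d (E (some j)) (l (some j)) Wl (D (some j))) hk N hN s3 L hL
    (u r) valp hv (fun p z => Fu (p, cons y0 z))
  refine ⟨F0, ?_⟩
  obtain ⟨en, hen⟩ : ∃ en : I → ℝ, ∀ a, en a = enA (fun _ _ _ => True)
      (fun q : Stt K J Y => valp q.1) (fun q => glue μ U E D u q.1 q.2) Fu a := ⟨_, fun _ => rfl⟩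
  have hen0 : ∀ a, 0 ≤ en a := fun a => by rw [hen]; exact enA_nonneg _ _ _ _ _
  have hR : ∑ a ∈ univ.biUnion E, ∑ q ∈ fibL Y r L u, ∑ q' ∈ fibL Y r L u,
        mv (fun _ _ _ => True) a (glue μ U E D u q.1 q.2) (glue μ U E D u q'.1 q'.2)
          * (Fu q - Fu q') ^ 2 = ∑ c, ∑ a ∈ E c, en a := by
    rw [hfib, Finset.sum_biUnion]
    · simp only [hen]; rfl
    · intro c _ c' _ hcc
      exact Finset.disjoint_left.2 fun i hi hi' => hS.dE c c' hcc i hi hi'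
  rw [hR, Fintype.sum_option, hE, Finset.sum_singleton]
  have hLHS : ∑ q ∈ fibL Y r L u, (Fu q - F0) ^ 2
      = ∑ p ∈ univ.filter valp, ∑ z, (Fu (p, cons y0 z) - F0) ^ 2 := by
    rw [hfib, Finset.sum_filter, ← sum_stt, Finset.sum_filter]
    refine sum_congr rfl fun p _ => ?_
    rw [hyu]
    by_cases hp : valp p
    · simp [hp]
    · simp [hp]
  rw [hLHS]
  refine hF0.trans ?_
  have hl : ∀ j, lightE (fun j => some (some (some j))) (some none)
      (fun j => lightK (fun _ _ _ => True) d (E (some j)) (l (some j)) Wl (D (some j))) j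
      (fun p z => if valp p then Fu (p, cons y0 z) else 0) ≤ W1 * ∑ a ∈ E (some j), en a := by
    intro j
    have hvs : ∀ p, valp ((Equiv.swap (some none) (some (some (some j)))).trans p) ↔ valp p := by
      intro p
      rw [hv, hv, swap_trans_other p (by simp) (by simp), swap_trans_other p (by simp) (by simp)]
    have := lightE_le hS hD (fun _ _ _ => True) d W1 Wl hWl hW1 hW2 j (fun _ => u) valp
      (fun p h => (hvs p).2 h) (fun p h h' => h ((hvs p).1 h')) Fu
      (fun j => lightK (fun _ _ _ => True) d (E (some j)) (l (some j)) Wl (D (some j))) rfl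
    rw [hyu] at this
    simp only [hen]
    exact this
  have ht : ∑ p ∈ univ.filter (fun p => valp p ∧ p (some none) ∈ L), ∑ z,
      (Fu (p, cons y0 z) - Fu ((Equiv.swap (some (some none)) (some none)).trans p, cons y0 z)) ^ 2
      ≤ en (l none) := by
    rw [hen]
    refine le_trans (le_of_eq ?_) (le_enA (α := Unit) (fun _ _ _ => True)
      (fun q : Stt K J Y => valp q.1) (fun q => glue μ U E D u q.1 q.2) Fu (l none)
      (fun q _ => ((Equiv.swap (some (some none)) (some none)).trans q.1, q.2))
      (fun _ _ => 1) (fun q => valp q.1 ∧ q.1 (some none) ∈ L) (fun q h => h.1)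
      (fun q _ _ _ _ => rfl) ?_ ?_)
    · rw [Finset.sum_filter, Finset.sum_filter, ← sum_stt]
      refine sum_congr rfl fun p _ => ?_
      rw [hyu]
      by_cases hp : valp p ∧ p (some none) ∈ L
      · simp [hp]
      · simp [hp]
    · intro q hq _
      rw [hv] at hq ⊢
      rw [swap_trans_other q.1 (by simp) (by simp)]
      refine ⟨hq.1.1, ?_⟩
      simpa using hq.2
    · intro q hq _
      refine le_trans (b := mv (fun _ _ _ => True) (l none)
        (D none (q.1 (some (some none))) (q.2 none))
        (D none (((Equiv.swap (some (some none)) (some none)).trans q.1) (some (some none)))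
          (q.2 none))) ?_ (glue_mv_E hS (fun _ _ _ => True) (hS.lE none) hD ?_ (fun _ _ => rfl))
      · unfold mv
        rw [if_pos]
        refine ⟨⟨?_, fun b hb => ?_⟩, trivial⟩
        · rw [(hD none).root, (hD none).root]
          intro h
          simpa using q.1.injective h
        · have hb' : b ∉ E none := by rw [hE]; simpa using hb
          rw [((hD none).col _ _).2 b hb', ((hD none).col _ _).2 b hb']
      · intro c hc
        rw [swap_trans_other q.1 (by simpa using hc) (by simp)]
  have h1 := Finset.sum_le_sum fun j (_ : j ∈ univ) => hl j
  rw [← Finset.mul_sum] at h1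
  have h2 : (1 : ℝ) ≤ W1 := by linarith
  have h3 : en (l none) ≤ W1 * en (l none) := by nlinarith [hen0 (l none)]
  have h4 : ∀ X T : ℝ, X + T ≤ W1 * (en (l none) + ∑ j, ∑ a ∈ E (some j), en a) →
      200 * (d : ℝ) * (X + T) ≤ 200 * d * W1 * (en (l none) + ∑ j, ∑ a ∈ E (some j), en a) := by
    intro X T h
    rw [mul_assoc _ W1]
    exact mul_le_mul_of_nonneg_left h (by positivity)
  apply h4
  linarith

end TwoEnded

section TwoEnded

variable {I K J : Type} [Fintype I] [DecidableEq I] [Fintype K] [DecidableEq K]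
  [Fintype J] [DecidableEq J]
  {inc : I → I → Prop} {μ : I → K} {U : Finset I} {r : I} {l : Option J → I}
  {E : Option J → Finset I} {Y : Option J → Type} [∀ c, Fintype (Y c)] [∀ c, DecidableEq (Y c)]
  [∀ c, Nonempty (Y c)] {D : ∀ c, K → Y c → I → K}

theorem card_fst (T : Finset (Stt K J Y)) (T' : Finset (Option (Option (Option J)) ≃ K))
    (h : ∀ q : Stt K J Y, q ∈ T ↔ q.1 ∈ T') :
    (T.card : ℝ) = (T'.card : ℝ) * Fintype.card (∀ c, Y c) := by
  have : T = T' ×ˢ univ := by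
    ext q; simp [h]
  rw [this, Finset.card_product, Finset.card_univ]
  push_cast
  rfl

theorem card_pos3 {N : ℝ} (s3 : ∀ φ : K → K → K → ℝ, ∑ p : Option (Option (Option J)) ≃ K,
        φ (p none) (p (some (some none))) (p (some none))
      = N * ∑ a, ∑ b ∈ univ.erase a, ∑ c ∈ (univ.erase a).erase b, φ a b c) {a b c : K}
    (hab : b ≠ a) (hac : c ≠ a) (hbc : c ≠ b) :
    ((univ.filter fun p : Option (Option (Option J)) ≃ K =>
      p none = a ∧ p (some (some none)) = b ∧ p (some none) = c).card : ℝ) = N := by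
  have := s3 (fun x y z => if x = a ∧ y = b ∧ z = c then 1 else 0)
  rw [Finset.sum_boole] at this
  rw [this]
  rw [Finset.sum_eq_single_of_mem a (mem_univ _), Finset.sum_eq_single_of_mem b,
    Finset.sum_eq_single_of_mem c]
  · simp
  · simp [hac, hbc]
  · intro x _ hx; simp [hx]
  · simp [hab]
  · intro x _ hx; simp [hx]
  · intro x _ hx; simp [hx]

theorem card_fibL_le {d : ℕ} (hd : 3 ≤ d) (hK : Fintype.card K = d + 1) {N : ℝ} (hN : 0 < N)
    (s3 : ∀ φ : K → K → K → ℝ, ∑ p : Option (Option (Option J)) ≃ K,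
        φ (p none) (p (some (some none))) (p (some none))
      = N * ∑ a, ∑ b ∈ univ.erase a, ∑ c ∈ (univ.erase a).erase b, φ a b c)
    (L : Finset K) (hL : L.card ≤ 2) (u : I → K) :
    ((fibL Y r L u).card : ℝ) ≤ 2 * (d : ℝ) * N * Fintype.card (∀ c, Y c) := by
  have hd' : (3 : ℝ) ≤ d := by exact_mod_cast hd
  rw [card_fst (fibL Y r L u) (univ.filter fun p => p none = u r ∧ p (some (some none)) ∈ L)
    (fun q => by rw [mem_fibL]; simp)]
  refine mul_le_mul_of_nonneg_right ?_ (by positivity)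
  have h0 := s3 (fun x y _ => if x = u r ∧ y ∈ L then 1 else 0)
  rw [Finset.sum_boole] at h0
  rw [h0, Finset.sum_eq_single_of_mem (u r) (mem_univ _)]
  swap
  · intro x _ hx; simp [hx]
  have e1 : ∀ b ∈ (univ : Finset K).erase (u r), ∑ x ∈ (univ.erase (u r)).erase b,
      (if u r = u r ∧ b ∈ L then (1:ℝ) else 0) = ((d:ℝ) - 1) * (if b ∈ L then 1 else 0) := by
    intro b hb
    rw [sum_erase_erase_const hK hb]
    simp
  rw [Finset.sum_congr rfl e1, ← Finset.mul_sum]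
  have e2 : ∑ b ∈ (univ : Finset K).erase (u r), (if b ∈ L then (1:ℝ) else 0) ≤ 2 := by
    rw [Finset.sum_boole]
    have : ((univ.erase (u r)).filter fun b => b ∈ L).card ≤ 2 :=
      (Finset.card_le_card (fun x hx => (Finset.mem_filter.1 hx).2)).trans hL
    exact_mod_cast this
  have e3 := mul_le_mul_of_nonneg_left e2 (show 0 ≤ N * ((d:ℝ) - 1) by
    apply mul_nonneg hN.le; linarith)
  nlinarith

/-- The part of a fibre that can follow the move from `u` to `v`: if the colour of `r` changes,
its new colour has to be the one missing at the lower end of `r`. -/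
noncomputable def followF (Y : Option J → Type) [∀ c, Fintype (Y c)] [∀ c, DecidableEq (Y c)]
    (r : I) (L : Finset K) (u v : I → K) : Finset (Stt K J Y) :=
  if u r = v r then fibL Y r L u
  else (fibL Y r L u).filter fun q => q.1 (some none) = v r

/-- The state reached when the upper part moves from `u` to `u'`. -/
noncomputable def followT (Y : Option J → Type) (r : I) (u u' : I → K) (q : Stt K J Y) :
    Stt K J Y :=
  if u r = u' r then q else ((Equiv.swap none (some none)).trans q.1, q.2)

theorem followF_sub {L : Finset K} {u u' : I → K} : followF Y r L u u' ⊆ fibL Y r L u := by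
  unfold followF
  split_ifs
  · exact Finset.Subset.refl _
  · exact Finset.filter_subset _ _

theorem followT_mem {L : Finset K} {u u' : I → K} {q : Stt K J Y} (hq : q ∈ followF Y r L u u') :
    followT Y r u u' q ∈ fibL Y r L u' := by
  unfold followF at hq
  unfold followT
  split_ifs at hq ⊢ with h
  · rw [mem_fibL] at hq ⊢
    rw [← h]; exact hq
  · rw [Finset.mem_filter, mem_fibL] at hq
    rw [mem_fibL]
    refine ⟨by simpa using hq.2, ?_⟩
    rw [swap_trans_other q.1 (by simp) (by simp)]
    exact hq.1.2

theorem followT_inj {u u' : I → K} : Function.Injective (followT Y r u u' (K := K)) := by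
  intro q q' h
  unfold followT at h
  split_ifs at h
  · exact h
  · obtain ⟨h1, h2⟩ := Prod.mk.inj h
    refine Prod.ext ?_ h2
    ext x
    have := congrArg (fun e => e (Equiv.swap none (some none) x)) h1
    simpa using this

theorem followT_child {u u' : I → K} {q : Stt K J Y} (c : Option J) :
    q.1 (some (some c)) = (followT Y r u u' q).1 (some (some c)) := by
  unfold followT
  split_ifs
  · rfl
  · rw [swap_trans_other q.1 (by simp) (by simp)]

theorem followT_snd {u u' : I → K} {q : Stt K J Y} : (followT Y r u u' q).2 = q.2 := by
  unfold followT
  split_ifs <;> rfl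

/-- A positive fraction (of order `1/d`) of each fibre follows a move of the base. This is where the
forbidden moves of `r` inside `L` matter: otherwise the new colour of `r` might be blocked by the
boundary edge in the whole fibre. -/
theorem followF_card {d : ℕ} (hd : 3 ≤ d) (hK : Fintype.card K = d + 1) {N : ℝ} (hN : 0 < N)
    (s3 : ∀ φ : K → K → K → ℝ, ∑ p : Option (Option (Option J)) ≃ K,
        φ (p none) (p (some (some none))) (p (some none))
      = N * ∑ a, ∑ b ∈ univ.erase a, ∑ c ∈ (univ.erase a).erase b, φ a b c)
    (L : Finset K) (hL : L.card = 2) (u u' : I → K)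
    (hu : u r ≠ u' r → ¬ (u r ∈ L ∧ u' r ∈ L)) :
    N * Fintype.card (∀ c, Y c) ≤ ((followF Y r L u u').card : ℝ) := by
  obtain ⟨b, hb, hbu, c, hcu, hcb, hc⟩ : ∃ b ∈ L, b ≠ u r ∧ ∃ c, c ≠ u r ∧ c ≠ b ∧
      (u r ≠ u' r → c = u' r) := by
    obtain ⟨b1, b2, hne, rfl⟩ := Finset.card_eq_two.1 hL
    by_cases h : u r = u' r
    · obtain ⟨b, hb, hbu⟩ : ∃ b ∈ ({b1, b2} : Finset K), b ≠ u r := by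
        by_cases h1 : b1 = u r
        · exact ⟨b2, by simp, fun h2 => hne (h1.trans h2.symm)⟩
        · exact ⟨b1, by simp, h1⟩
      obtain ⟨c, hc⟩ : ∃ c, c ∉ ({u r, b} : Finset K) := by
        by_contra hcon
        push Not at hcon
        have h1 := Finset.card_le_card (fun c _ => hcon c : (univ : Finset K) ⊆ {u r, b})
        rw [Finset.card_univ, hK] at h1
        have h2 := Finset.card_le_two (a := u r) (b := b)
        omega
      simp only [mem_insert, mem_singleton, not_or] at hc
      exact ⟨b, hb, hbu, c, hc.1, hc.2, fun h' => absurd h h'⟩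
    · have h' := hu h
      simp only [mem_insert, mem_singleton] at h'
      by_cases h1 : b1 = u r ∨ b1 = u' r
      · refine ⟨b2, by simp, ?_, u' r, Ne.symm h, ?_, fun _ => rfl⟩
        · rintro rfl; apply h'; rcases h1 with h1 | h1
          · exact absurd h1 hne
          · exact ⟨Or.inr rfl, Or.inl h1.symm⟩
        · intro h2; apply h'; rcases h1 with h1 | h1
          · exact ⟨Or.inl h1.symm, Or.inr h2⟩
          · exact absurd (h1.trans h2) hne
      · push Not at h1
        exact ⟨b1, by simp, h1.1, u' r, Ne.symm h, Ne.symm h1.2, fun _ => rfl⟩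
  rw [← card_pos3 s3 hbu hcu hcb, ← card_fst (univ.filter fun q : Stt K J Y => q.1 none = u r ∧
    q.1 (some (some none)) = b ∧ q.1 (some none) = c) _ (fun q => by simp)]
  norm_cast
  refine Finset.card_le_card ?_
  intro q hq
  simp only [mem_filter, mem_univ, true_and] at hq
  have h1 : q ∈ fibL Y r L u := mem_fibL.2 ⟨hq.1, hq.2.1 ▸ hb⟩
  unfold followF
  split_ifs with h
  · exact h1
  · rw [Finset.mem_filter]; exact ⟨h1, hq.2.2.trans (hc h)⟩

/-- The colourings of a tree with two boundary edges `x` and `l none`. The upper part `U`, in which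
the edge `r` next to `l none` does not move inside `L`, is glued with the states around the lower end of `r`. -/
theorem two_ended {d : ℕ} (hd : 3 ≤ d) (hK : Fintype.card K = d + 1)
    (hC : Fintype.card (Option J) + 2 = Fintype.card K)
    (hS : StarG inc U r l E) (hD : ∀ c, Triv inc μ (E c) (l c) (D c))
    (hE : E none = {l none}) (hY : ∀ y y' : Y none, y = y') (W1 Wl : ℝ) (hWl : 0 ≤ Wl) (hW1 : Wl ≤ W1)
    (hW2 : 45 * (d : ℝ) ≤ W1)
    (hk : ∀ j, TwoCol (lightK (fun _ _ _ => True) d (E (some j)) (l (some j)) Wl (D (some j))))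
    {x : I} (hx : x ∈ U) {A L : Finset K} (hL : L.card = 2) {S s' : Finset (I → K)}
    (hSb : ∀ σ, σ ∈ S ↔ IsCol inc μ U σ ∧ σ x ∈ A)
    (hs' : ∀ σ, σ ∈ s' ↔ IsCol inc μ (starEdges U E) σ ∧ σ x ∈ A ∧ σ (l none) ∈ L)
    (allow : I → K → K → Prop) (hallow : ∀ c c', allow r c c' → ¬ (c ∈ L ∧ c' ∈ L))
    (W0 : ℝ) (hW0 : 0 ≤ W0) (hP : Poin allow S U W0) :
    Poin (fun _ _ _ => True) s' (starEdges U E)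
      ((2 + 24 * d * W0 * (U.card * (d + 1))) * (200 * d * W1) + 12 * d * W0) := by
  intro F
  have hd' : (3 : ℝ) ≤ d := by exact_mod_cast hd
  have : Nonempty (Option (Option (Option J)) ≃ K) :=
    ⟨Fintype.equivOfCardEq (by rw [Fintype.card_option, Fintype.card_option, ← hC])⟩
  obtain ⟨N, hN, s3⟩ := sum_triple (X := Option (Option (Option J))) (K := K) (r := none)
    (h := some (some none)) (o := some none) (by simp) (by simp) (by simp)
  have hZ : (0 : ℝ) < Fintype.card (∀ c, Y c) := card_pos_real _
  choose F0 hF0 using fun u => fibL_var hd hK hS hD hE hY W1 Wl hWl hW1 hW2 hk N hN s3 L hL.le u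
    (fun q => F (glue μ U E D u q.1 q.2))
  obtain ⟨m, hm⟩ := hP F0
  refine ⟨m, ?_⟩
  have hfb := fibration S (fibL Y r L) (fun u q => F (glue μ U E D u q.1 q.2)) F0
    (fun u u' => ∑ a ∈ U, mv allow a u u')
    (fun u u' => Finset.sum_nonneg fun a _ => mv_nonneg _ _ _ _)
    (U.card * (d + 1)) (N * Fintype.card (∀ c, Y c)) (2 * (d : ℝ) * N * Fintype.card (∀ c, Y c))
    W0 (by positivity) (by positivity) hW0
    (by
      intro u _
      rw [Finset.sum_comm]
      refine (Finset.sum_le_sum fun a _ => mv_row_le hK allow S a u).trans ?_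
      rw [Finset.sum_const, nsmul_eq_mul])
    (by
      intro u _
      rw [Finset.sum_comm]
      refine (Finset.sum_le_sum fun a _ => mv_col_le hK allow S a u).trans ?_
      rw [Finset.sum_const, nsmul_eq_mul])
    (fun u _ => card_fibL_le hd hK hN s3 L hL.le u)
    (followF Y r L) (followT Y r)
    (by
      intro u _ u' _ hB
      refine ⟨followF_card hd hK hN s3 L hL u u' ?_, followF_sub, fun q hq => followT_mem hq,
        followT_inj.injOn⟩
      intro hne
      obtain ⟨a, ha, hmv⟩ := Finset.exists_ne_zero_of_sum_ne_zero hB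
      by_cases har : a = r
      · subst har
        apply hallow
        unfold mv at hmv
        by_contra hcon
        rw [if_neg (fun h => hcon h.2)] at hmv
        exact hmv rfl
      · exact absurd (mv_eq_zero_of_ne (Ne.symm har) hne) hmv)
    m (by
      refine hm.trans (le_of_eq ?_)
      congr 1
      unfold enS
      rw [Finset.sum_comm]
      refine sum_congr rfl fun u _ => ?_
      rw [Finset.sum_comm]
      refine sum_congr rfl fun u' _ => ?_
      rw [Finset.sum_mul])
  rw [glue_sum hS hD hC hx hSb hs']
  refine hfb.trans ?_
  have hr1 : 2 * (d : ℝ) * N * Fintype.card (∀ c, Y c) * W0 * (U.card * (d + 1))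
      / (N * Fintype.card (∀ c, Y c)) = 2 * d * W0 * (U.card * (d + 1)) := by
    field_simp
  have hr2 : 2 * (d : ℝ) * N * Fintype.card (∀ c, Y c) * W0 / (N * Fintype.card (∀ c, Y c))
      = 2 * d * W0 := by
    field_simp
  rw [hr1, hr2]
  obtain ⟨T, hT⟩ : ∃ T, T = fun _ : I => fun _ _ : K => True := ⟨_, rfl⟩
  have hen0 : ∀ a, 0 ≤ enS T s' F a := fun a => enS_nonneg _ _ _ _
  have hA : ∑ u ∈ S, ∑ q ∈ fibL Y r L u, (F (glue μ U E D u q.1 q.2) - F0 u) ^ 2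
      ≤ 200 * d * W1 * ∑ a ∈ univ.biUnion E, enS T s' F a := by
    refine (Finset.sum_le_sum fun u _ => hF0 u).trans ?_
    rw [← Finset.mul_sum, Finset.sum_comm]
    refine mul_le_mul_of_nonneg_left ?_ (mul_nonneg (by positivity) (by linarith))
    refine Finset.sum_le_sum fun a _ => ?_
    refine glue_le_enS hS hD hC hx hSb hs' T F a (fun u q => fibL Y r L u)
      (fun u q q' => glue μ U E D u q'.1 q'.2) _ ?_
    intro u hu q hq
    refine ⟨fun q' hq' => ⟨glue_mem hS hD hx hSb hs' hu hq', by rw [hT]⟩, ?_⟩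
    intro q1 h1 q2 h2 he
    rw [Finset.mem_coe, mem_fibL] at h1 h2
    have hc := ((hSb u).1 hu).1
    obtain ⟨-, e1, e2⟩ := glue_inj hS hD hc h1.1 hc h2.1 he
    exact Prod.ext e1 e2
  have hB : ∑ u ∈ S, ∑ u' ∈ S, (∑ a ∈ U, mv allow a u u') * ∑ q ∈ followF Y r L u u',
      (F (glue μ U E D u q.1 q.2) - F (glue μ U E D u' (followT Y r u u' q).1
        (followT Y r u u' q).2)) ^ 2 ≤ ∑ a ∈ U, enS T s' F a := by
    have e1 : ∀ a ∈ U, ∑ u ∈ S, ∑ q ∈ fibL Y r L u,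
        ∑ u' ∈ S.filter (fun u' => q ∈ followF Y r L u u'), mv allow a u u' *
          (F (glue μ U E D u q.1 q.2) - F (glue μ U E D u' (followT Y r u u' q).1
            (followT Y r u u' q).2)) ^ 2 ≤ enS T s' F a := by
      intro a ha
      refine glue_le_enS hS hD hC hx hSb hs' T F a
        (fun u q => S.filter (fun u' => q ∈ followF Y r L u u'))
        (fun u q u' => glue μ U E D u' (followT Y r u u' q).1 (followT Y r u u' q).2)
        (fun u q u' => mv allow a u u') ?_
      intro u hu q hq
      refine ⟨fun u' hu' => ⟨?_, ?_⟩, ?_⟩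
      · rw [Finset.mem_filter] at hu'
        exact glue_mem hS hD hx hSb hs' hu'.1 (followT_mem hu'.2)
      · rw [followT_snd]
        refine le_trans (b := mv T a u u') ?_ (glue_mv_U hS T ha fun c => followT_child c)
        unfold mv
        by_cases h : DiffAt a u u' ∧ allow a (u a) (u' a)
        · rw [if_pos h, if_pos ⟨h.1, by rw [hT]; trivial⟩]
        · rw [if_neg h]; split_ifs <;> norm_num
      · intro u1 h1 u2 h2 he
        rw [Finset.mem_coe, Finset.mem_filter] at h1 h2
        have m1 := followT_mem h1.2
        have m2 := followT_mem h2.2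
        rw [mem_fibL] at m1 m2
        exact (glue_inj hS hD ((hSb u1).1 h1.1).1 m1.1 ((hSb u2).1 h2.1).1 m2.1 he).1
    refine le_trans (le_of_eq ?_) (Finset.sum_le_sum e1)
    rw [Finset.sum_comm (s := U)]
    refine sum_congr rfl fun u _ => ?_
    rw [Finset.sum_comm (s := U)]
    have e2 : ∀ (a : I) (q : Stt K J Y), ∑ u' ∈ S.filter (fun u' => q ∈ followF Y r L u u'),
        mv allow a u u' * (F (glue μ U E D u q.1 q.2) - F (glue μ U E D u' (followT Y r u u' q).1
            (followT Y r u u' q).2)) ^ 2 = ∑ u' ∈ S, if q ∈ followF Y r L u u' then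
        mv allow a u u' * (F (glue μ U E D u q.1 q.2) - F (glue μ U E D u' (followT Y r u u' q).1
            (followT Y r u u' q).2)) ^ 2 else 0 := fun a q => Finset.sum_filter _ _
    simp_rw [e2]
    simp_rw [Finset.sum_comm (s := U) (t := S)]
    rw [Finset.sum_comm (t := S)]
    refine sum_congr rfl fun u' _ => ?_
    have e3 : ∀ G : Stt K J Y → ℝ, ∑ q ∈ followF Y r L u u', G q
        = ∑ q ∈ fibL Y r L u, if q ∈ followF Y r L u u' then G q else 0 := by
      intro G
      rw [← Finset.sum_filter, Finset.filter_mem_eq_inter,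
        Finset.inter_eq_right.2 followF_sub]
    rw [e3, Finset.mul_sum]
    refine sum_congr rfl fun q _ => ?_
    by_cases h : q ∈ followF Y r L u u'
    · simp only [if_pos h, Finset.sum_mul]
    · simp only [if_neg h, mul_zero, Finset.sum_const_zero]
  have hsp : ∑ a ∈ starEdges U E, enS T s' F a
      = ∑ a ∈ U, enS T s' F a + ∑ a ∈ univ.biUnion E, enS T s' F a := by
    unfold starEdges
    rw [Finset.sum_union]
    rw [Finset.disjoint_left]
    intro i hi hi'
    obtain ⟨c, -, hc⟩ := Finset.mem_biUnion.1 hi'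
    exact hS.dU c i hi hc
  rw [← hT, hsp]
  have p1 : 0 ≤ ∑ a ∈ U, enS T s' F a := Finset.sum_nonneg fun a _ => hen0 a
  have p2 : 0 ≤ ∑ a ∈ univ.biUnion E, enS T s' F a := Finset.sum_nonneg fun a _ => hen0 a
  have p3 : 0 ≤ 2 + 24 * (d : ℝ) * W0 * (U.card * (d + 1)) := by positivity
  have p4 : 0 ≤ 12 * (d : ℝ) * W0 := by positivity
  have p5 : 0 ≤ 200 * (d : ℝ) * W1 := mul_nonneg (by positivity) (by linarith)
  have q1 := mul_le_mul_of_nonneg_left hA p3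
  have q2 := mul_le_mul_of_nonneg_left hB p4
  have q3 := mul_nonneg (mul_nonneg p3 p5) p1
  have q4 := mul_nonneg p4 p2
  have r1 : 2 + 12 * (2 * (d : ℝ) * W0 * (U.card * (d + 1))) = 2 + 24 * (d : ℝ) * W0 * (U.card * (d + 1)) := by
    ring
  have r2 : 6 * (2 * (d : ℝ) * W0) = 12 * (d : ℝ) * W0 := by ring
  rw [r1, r2]
  linarith

end TwoEnded

/-! ### Colourings of rooted trees with constraints at one or two leaf edges -/

section RootedTree

variable {I K : Type} [DecidableEq I] [Fintype K] [DecidableEq K]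

theorem HasPI.mono_weight {inc : I → I → Prop} {μ : I → K} {allow : I → K → K → Prop} {d t : ℕ}
    {E : Finset I} {r : I} {W W' : ℝ} (hW : W ≤ W') (h : HasPI inc μ allow d t E r W) :
    HasPI inc μ allow d t E r W' := by
  obtain ⟨Y, i1, i2, i3, D, h1, h2⟩ := h
  refine ⟨Y, i1, i2, i3, D, h1, fun A hA g => (h2 A hA g).trans ?_⟩
  refine add_le_add (Finset.sum_le_sum fun c _ => Finset.sum_le_sum fun y _ =>
    Finset.sum_le_sum fun y' _ => mul_le_mul_of_nonneg_right
      (mul_le_mul_of_nonneg_right hW (Finset.sum_nonneg fun a _ => mv_nonneg _ _ _ _))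
      (sq_nonneg _)) le_rfl

/-- A rooted tree given by its parent map: `z` is the root and `dep` the depth. The vertex `v ≠ z`
also stands for the edge from `v` to `par v`. -/
structure Rooted (par : I → I) (dep : I → ℕ) (z : I) : Prop where
  hz : par z = z
  h0 : dep z = 0
  hs : ∀ v, v ≠ z → dep v = dep (par v) + 1

/-- Incidence of the edges `(a, par a)` and `(b, par b)`. -/
def incR (par : I → I) (a b : I) : Prop := a ≠ b ∧ (par a = b ∨ par b = a ∨ par a = par b)

/-- The children of `v` lying in `D`. -/
noncomputable def chD (par : I → I) (D : Finset I) (v : I) : Finset I := D.filter fun w => par w = v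

/-- The descendants of `v` (including `v`) lying in `D`. -/
noncomputable def dsD (par : I → I) (D : Finset I) (v : I) : Finset I :=
  D.filter fun w => ∃ n : ℕ, par^[n] w = v

variable {par : I → I} {dep : I → ℕ} {z : I} {D : Finset I} {d : ℕ}

theorem mem_chD {v w : I} : w ∈ chD par D v ↔ w ∈ D ∧ par w = v := by simp [chD]

theorem mem_dsD {v w : I} : w ∈ dsD par D v ↔ w ∈ D ∧ ∃ n : ℕ, par^[n] w = v := by simp [dsD]

theorem Rooted.dep_le (hR : Rooted par dep z) (n : ℕ) (w : I) : dep (par^[n] w) ≤ dep w := by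
  induction n generalizing w with
  | zero => simp
  | succ n ih =>
    rw [Function.iterate_succ_apply]
    refine (ih _).trans ?_
    by_cases h : w = z
    · rw [h, hR.hz]
    · rw [hR.hs w h]; omega

theorem Rooted.dep_par (hR : Rooted par dep z) {w : I} (h : w ≠ z) : dep (par w) < dep w := by
  rw [hR.hs w h]; omega

/-- Every vertex is `z` or has a unique ancestor at each smaller depth; here: two ancestors of the
same positive depth agree. -/
theorem Rooted.anc_unique (hR : Rooted par dep z) {w a b : I} {n n' : ℕ} (ha : par^[n] w = a)
    (hb : par^[n'] w = b) (haz : a ≠ z) (hbz : b ≠ z) (hab : dep a = dep b) : a = b := by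
  wlog h : n ≤ n' generalizing a b n n'
  · exact (this hb ha hbz haz hab.symm (by omega)).symm
  obtain ⟨k, rfl⟩ := Nat.exists_eq_add_of_le h
  rw [Nat.add_comm, Function.iterate_add_apply, ha] at hb
  cases k with
  | zero => simpa using hb
  | succ k =>
    rw [Function.iterate_succ_apply] at hb
    have h1 := hR.dep_le k (par a)
    have h2 := hR.dep_par haz
    rw [hb] at h1; omega

/-- A set of non-root vertices closed under taking parents. -/
structure ClosedD (par : I → I) (z : I) (D : Finset I) : Prop where
  nz : z ∉ D
  cl : ∀ v ∈ D, par v = z ∨ par v ∈ D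

theorem ClosedD.ne (hD : ClosedD par z D) {v : I} (hv : v ∈ D) : v ≠ z :=
  fun h => hD.nz (h ▸ hv)

theorem Rooted.par_iter_z (hR : Rooted par dep z) (n : ℕ) : par^[n] z = z := by
  induction n with
  | zero => rfl
  | succ n ih => rw [Function.iterate_succ_apply, hR.hz, ih]

theorem ClosedD.iter (hR : Rooted par dep z) (hD : ClosedD par z D) {w : I} (hw : w ∈ D) (n : ℕ)
    (h : par^[n] w ≠ z) : par^[n] w ∈ D := by
  induction n generalizing w with
  | zero => exact hw
  | succ n ih =>
    rw [Function.iterate_succ_apply] at h ⊢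
    rcases hD.cl w hw with h1 | h1
    · rw [h1, hR.par_iter_z] at h; exact absurd rfl h
    · exact ih h1 h

theorem dsD_self {v : I} (hv : v ∈ D) : v ∈ dsD par D v := mem_dsD.2 ⟨hv, 0, rfl⟩

theorem dsD_par (hR : Rooted par dep z) (hD : ClosedD par z D) {v w : I} (hvD : v ∈ D)
    (hw : w ∈ dsD par D v) (hwv : w ≠ v) :
    par w ∈ dsD par D v := by
  obtain ⟨h1, n, h2⟩ := mem_dsD.1 hw
  have hvz := hD.ne hvD
  cases n with
  | zero => exact absurd h2 hwv
  | succ n =>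
    rw [Function.iterate_succ_apply] at h2
    refine mem_dsD.2 ⟨(hD.cl w h1).resolve_left fun h => ?_, n, h2⟩
    rw [h, hR.par_iter_z] at h2; exact hvz h2.symm

theorem dsD_of_par {v w : I} (hw : w ∈ D) (h : par w ∈ dsD par D v) : w ∈ dsD par D v := by
  obtain ⟨h1, n, h2⟩ := mem_dsD.1 h
  exact mem_dsD.2 ⟨hw, n + 1, by rw [Function.iterate_succ_apply, h2]⟩

theorem dsD_dep (hR : Rooted par dep z) {v w : I} (h : w ∈ dsD par D v) : dep v ≤ dep w := by
  obtain ⟨h1, n, h2⟩ := mem_dsD.1 h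
  rw [← h2]; exact hR.dep_le n w

theorem dsD_disj (hR : Rooted par dep z) (hD : ClosedD par z D) {e c c' x : I} (hc : c ∈ chD par D e)
    (hc' : c' ∈ chD par D e) (hcc : c ≠ c') (hx : x ∈ dsD par D c) : x ∉ dsD par D c' := by
  intro hx'
  rw [mem_chD] at hc hc'
  obtain ⟨_, n, hn⟩ := mem_dsD.1 hx
  obtain ⟨_, n', hn'⟩ := mem_dsD.1 hx'
  refine hcc (hR.anc_unique hn hn' (hD.ne hc.1) (hD.ne hc'.1) ?_)
  rw [hR.hs c (hD.ne hc.1), hR.hs c' (hD.ne hc'.1), hc.2, hc'.2]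

/-- A parent-closed set of edges of a rooted tree, with no or `d - 1` children at each edge, is a
branching. -/
theorem br_of_rooted (hR : Rooted par dep z) (hD : ClosedD par z D)
    (hch : ∀ v ∈ D, chD par D v = ∅ ∨ (chD par D v).card + 1 = d) :
    Br (incR par) d D (chD par D) (dsD par D) where
  symm a b h := ⟨h.1.symm, by rcases h.2 with h | h | h <;> simp [h]⟩
  irr a h := h.1 rfl
  chN e he := Finset.filter_subset _ _
  chc := hch
  dsE e he := by
    ext w
    rw [mem_insert, mem_biUnion]
    constructor
    · intro hw
      obtain ⟨h1, n, h2⟩ := mem_dsD.1 hw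
      cases n with
      | zero => exact Or.inl h2
      | succ n =>
        right
        have h3 := h2
        rw [Function.iterate_succ_apply'] at h3
        have hne : par^[n] w ≠ z := by
          intro h; rw [h, hR.hz] at h3; exact hD.ne he h3.symm
        exact ⟨par^[n] w, mem_chD.2 ⟨hD.iter hR h1 n hne, h3⟩, mem_dsD.2 ⟨h1, n, rfl⟩⟩
    · rintro (rfl | ⟨c, hc, hw⟩)
      · exact dsD_self he
      · obtain ⟨h1, n, h2⟩ := mem_dsD.1 hw
        exact mem_dsD.2 ⟨h1, n + 1, by rw [Function.iterate_succ_apply', h2, (mem_chD.1 hc).2]⟩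
  notmem e he c hc h := by
    have h1 := dsD_dep hR h
    have h2 := mem_chD.1 hc
    have h3 := hR.dep_par (hD.ne h2.1)
    rw [h2.2] at h3; omega
  disj e he c hc c' hc' hcc x hx := dsD_disj hR hD hc hc' hcc hx
  incP e he c hc x hx := by
    have h2 := mem_chD.1 hc
    have h3 := dsD_dep hR hx
    have h4 := hR.dep_par (hD.ne h2.1)
    rw [h2.2] at h4
    have hxz := hD.ne (mem_dsD.1 hx).1
    have h5 := hR.hs x hxz
    have h6 := hR.hs e (hD.ne he)
    constructor
    · rintro ⟨h7, h8 | h8 | h8⟩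
      · rw [h8] at h6; omega
      · by_contra hne
        have h9 := dsD_dep hR (dsD_par hR hD h2.1 hx hne)
        rw [h8] at h9; omega
      · rw [h8] at h6; omega
    · rintro rfl
      refine ⟨fun h => ?_, Or.inr (Or.inl h2.2)⟩
      rw [h] at h4; omega
  incS e he c hc c' hc' hcc x hx x' hx' := by
    have key : ∀ {c c' : I}, c ∈ chD par D e → c' ∈ chD par D e → c ≠ c' → ∀ {x x'},
        x ∈ dsD par D c → x' ∈ dsD par D c' → par x ≠ x' := by
      intro c c' hc hc' hcc x x' hx hx' h
      exact dsD_disj hR hD hc hc' hcc hx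
        (dsD_of_par (mem_dsD.1 hx).1 (h ▸ hx'))
    have key2 : ∀ {c c' : I}, c ∈ chD par D e → c' ∈ chD par D e → c ≠ c' → ∀ {x x'},
        x ∈ dsD par D c → x' ∈ dsD par D c' → par x = par x' → x = c := by
      intro c c' hc hc' hcc x x' hx hx' h
      by_contra hne
      have h1 := dsD_par hR hD (mem_chD.1 hc).1 hx hne
      rw [h] at h1
      exact dsD_disj hR hD hc hc' hcc (dsD_of_par (mem_dsD.1 hx').1 h1) hx'
    constructor
    · rintro ⟨h1, h2 | h2 | h2⟩
      · exact absurd h2 (key hc hc' hcc hx hx')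
      · exact absurd h2 (key hc' hc hcc.symm hx' hx)
      · exact ⟨key2 hc hc' hcc hx hx' h2, key2 hc' hc hcc.symm hx' hx h2.symm⟩
    · rintro ⟨rfl, rfl⟩
      exact ⟨hcc, Or.inr (Or.inr ((mem_chD.1 hc).2.trans (mem_chD.1 hc').2.symm))⟩

theorem dsD_root (hR : Rooted par dep z) (hD : ClosedD par z D) {x : I}
    (hroot : ∀ v ∈ D, par v = z → v = x) : dsD par D x = D := by
  have : ∀ n, ∀ w ∈ D, dep w ≤ n → w ∈ dsD par D x := by
    intro n
    induction n with
    | zero =>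
      intro w hw h
      have := hR.hs w (hD.ne hw); omega
    | succ n ih =>
      intro w hw h
      rcases hD.cl w hw with h1 | h1
      · rw [← hroot w hw h1]; exact dsD_self hw
      · have := hR.hs w (hD.ne hw)
        exact dsD_of_par hw (ih _ h1 (by omega))
  exact Finset.Subset.antisymm (Finset.filter_subset _ _) fun w hw => this _ w hw le_rfl

/-- The Poincaré inequality for a rooted tree whose only constraint is a list `A` at the root edge. -/
theorem poin_one [Fintype I] (hd : 3 ≤ d) (hK : Fintype.card K = d + 1) (hR : Rooted par dep z)
    (hD : ClosedD par z D) (hch : ∀ v ∈ D, chD par D v = ∅ ∨ (chD par D v).card + 1 = d)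
    {x : I} (hxD : x ∈ D) (hroot : ∀ v ∈ D, par v = z → v = x) {μ : I → K} {A : Finset K}
    (hA : 2 ≤ A.card) {s : Finset (I → K)}
    (hs : ∀ σ, σ ∈ s ↔ IsCol (incR par) μ D σ ∧ σ x ∈ A) :
    Poin (fun _ _ _ => True) s D (2 ^ 15 * d * (D.card : ℝ) ^ 10) := by
  have hB := br_of_rooted hR hD hch
  have h := hB.thm1 (μ := μ) hd hK (fun _ _ _ => True) _ x hxD le_rfl (fun _ _ _ _ => trivial)
  rw [dsD_root hR hD hroot] at h
  have hc : (1 : ℝ) ≤ (D.card : ℝ) ^ 10 :=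
    one_le_pow₀ (by exact_mod_cast Finset.card_pos.2 ⟨x, hxD⟩)
  refine h.poin hxD (by positivity) le_rfl ?_ A hA (by omega) s hs
  have hd' : (0 : ℝ) ≤ d := by positivity
  nlinarith

/-- `D` with the strict descendants of `p` removed. -/
noncomputable def prune (par : I → I) (D : Finset I) (p : I) : Finset I :=
  D \ (dsD par D p).erase p

theorem mem_prune {p v : I} : v ∈ prune par D p ↔ v ∈ D ∧ (v ∈ dsD par D p → v = p) := by
  simp only [prune, mem_sdiff, mem_erase, not_and]
  tauto

theorem prune_closed (hR : Rooted par dep z) (hD : ClosedD par z D) {p : I} (hp : p ∈ D) :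
    ClosedD par z (prune par D p) where
  nz h := hD.nz (mem_prune.1 h).1
  cl v hv := by
    obtain ⟨h1, h2⟩ := mem_prune.1 hv
    refine (hD.cl v h1).imp id fun h3 => mem_prune.2 ⟨h3, fun h4 => ?_⟩
    have h5 := h2 (dsD_of_par h1 h4)
    subst h5
    have h6 := dsD_dep hR h4
    have h7 := hR.dep_par (hD.ne h1)
    omega

theorem chD_prune_self (hR : Rooted par dep z) (hD : ClosedD par z D) {p : I} (hp : p ∈ D) :
    chD par (prune par D p) p = ∅ := by
  refine Finset.eq_empty_of_forall_notMem fun w hw => ?_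
  obtain ⟨h1, h2⟩ := mem_chD.1 hw
  obtain ⟨h3, h4⟩ := mem_prune.1 h1
  have h5 := h4 (dsD_of_par h3 (by rw [h2]; exact dsD_self hp))
  have h6 := hR.dep_par (hD.ne h3)
  rw [h2, h5] at h6; omega

theorem chD_prune (hR : Rooted par dep z) (hD : ClosedD par z D) {p v : I} (hp : p ∈ D)
    (hv : v ∈ prune par D p) (hvp : v ≠ p) : chD par (prune par D p) v = chD par D v := by
  ext w
  rw [mem_chD, mem_chD, mem_prune]
  refine ⟨fun h => ⟨h.1.1, h.2⟩, fun h => ⟨⟨h.1, fun h1 => ?_⟩, h.2⟩⟩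
  by_contra h2
  have h3 := dsD_par hR hD hp h1 h2
  rw [h.2] at h3
  exact hvp ((mem_prune.1 hv).2 h3)

theorem starG_prune (hR : Rooted par dep z) (hD : ClosedD par z D)
    (hch : ∀ v ∈ D, chD par D v = ∅ ∨ (chD par D v).card + 1 = d) {p y : I} (hp : p ∈ D)
    (hy : y ∈ chD par D p) :
    StarG (incR par) (prune par D p) p (lroots (chD par D) p y)
      (fun c => dsD par D (lroots (chD par D) p y c)) := by
  have hB := br_of_rooted hR hD hch
  have h := hB.starG hp hy
  -- an edge of the pruned tree is no descendant of a child of `p`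
  have hU : ∀ c ∈ chD par D p, ∀ i ∈ prune par D p, i ∉ dsD par D c := by
    intro c hc i hi hic
    have h1 := (mem_prune.1 hi).2 (hB.sub hp hc hic)
    subst h1
    exact hB.notmem _ hp c hc hic
  refine ⟨h.symm, mem_prune.2 ⟨hp, fun _ => rfl⟩, h.lE, fun c => hU _ (lroots_mem hy c), h.dE, ?_,
    h.incE⟩
  intro c i hi i' hi'
  have hc := lroots_mem hy c
  generalize lroots (chD par D) p y c = l at hi' hc
  have hiD := (mem_prune.1 hi).1
  have hi'D := (mem_dsD.1 hi').1
  obtain ⟨hlD, hlp⟩ := mem_chD.1 hc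
  constructor
  · rintro ⟨h1, h2 | h2 | h2⟩
    · exact absurd (dsD_of_par hiD (h2 ▸ hi')) (hU l hc i hi)
    · by_cases h3 : i' = l
      · subst h3; exact ⟨h2.symm.trans hlp, rfl⟩
      · have h4 := dsD_par hR hD hlD hi' h3
        rw [h2] at h4
        exact absurd h4 (hU l hc i hi)
    · by_cases h3 : i' = l
      · subst h3
        have h4 : i ∈ chD par D p := mem_chD.2 ⟨hiD, h2.trans hlp⟩
        exact absurd (dsD_self hiD) (hU i h4 i hi)
      · have h4 := dsD_par hR hD hlD hi' h3
        rw [← h2] at h4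
        exact absurd (dsD_of_par hiD h4) (hU l hc i hi)
  · rintro ⟨rfl, rfl⟩
    refine ⟨fun h => ?_, Or.inr (Or.inl hlp)⟩
    rw [← h] at hi'
    exact hU _ hc _ hi (h ▸ hi')

theorem starEdges_prune (hR : Rooted par dep z) (hD : ClosedD par z D)
    (hch : ∀ v ∈ D, chD par D v = ∅ ∨ (chD par D v).card + 1 = d) {p y : I} (hp : p ∈ D)
    (hy : y ∈ chD par D p) :
    starEdges (prune par D p) (fun c => dsD par D (lroots (chD par D) p y c)) = D := by
  have hB := br_of_rooted hR hD hch
  have h := hB.starEdges_eq hp hy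
  ext i
  have h' : i ∈ starEdges {p} (fun c => dsD par D (lroots (chD par D) p y c)) ↔ i ∈ dsD par D p := by
    rw [h]
  rw [mem_starEdges, mem_singleton] at h'
  rw [mem_starEdges]
  constructor
  · rintro (h1 | ⟨c, hc⟩)
    · exact (mem_prune.1 h1).1
    · exact (mem_dsD.1 hc).1
  · intro hi
    by_cases h1 : i ∈ dsD par D p
    · rcases h'.2 h1 with rfl | h2
      · exact Or.inl (mem_prune.2 ⟨hi, fun _ => rfl⟩)
      · exact Or.inr h2
    · exact Or.inl (mem_prune.2 ⟨hi, fun h => absurd h h1⟩)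

theorem triv_subsingleton {inc : I → I → Prop} {μ : I → K} {Y : Type} {r : I} {E : Finset I}
    {Φ : K → Y → I → K} [Nonempty K] (hE : E = {r}) (h : Triv inc μ E r Φ) (y y' : Y) : y = y' := by
  obtain ⟨c⟩ := ‹Nonempty K›
  refine h.inj c y y' (funext fun i => ?_)
  by_cases hi : i = r
  · rw [hi, h.root, h.root]
  · rw [(h.col c y).2 i (by simpa [hE] using hi), (h.col c y').2 i (by simpa [hE] using hi)]

/-- The Poincaré inequality for the colourings of a rooted tree with root edge `x` restricted to a
list `A` and another leaf edge `y` restricted to a two-element list `L`. The tree is split at the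
parent `p` of `y`: on the pruned tree, moves of `p` between the two colours of `L` are forbidden. -/
theorem poin_two [Fintype I] (hd : 3 ≤ d) (hK : Fintype.card K = d + 1) (hR : Rooted par dep z)
    (hD : ClosedD par z D) (hch : ∀ v ∈ D, chD par D v = ∅ ∨ (chD par D v).card + 1 = d)
    {x y : I} (hxD : x ∈ D) (hxz : par x = z) (hroot : ∀ v ∈ D, par v = z → v = x)
    (hyD : y ∈ D) (hyx : y ≠ x) (hpx : par y ≠ x) (hyc : chD par D y = ∅)
    {μ : I → K} {A L : Finset K}
    (hA : 2 ≤ A.card) (hL : L.card = 2) {s : Finset (I → K)}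
    (hs : ∀ σ, σ ∈ s ↔ IsCol (incR par) μ D σ ∧ σ x ∈ A ∧ σ y ∈ L) :
    Poin (fun _ _ _ => True) s D
      ((2 + 24 * d * (2 ^ 25 * d * (D.card : ℝ) ^ 10) * ((D.card : ℝ) * (d + 1)))
        * (200 * d * (2 ^ 15 * d * (D.card : ℝ) ^ 10)) + 12 * d * (2 ^ 25 * d * (D.card : ℝ) ^ 10)) := by
  obtain ⟨p, hp⟩ : ∃ p, p = par y := ⟨_, rfl⟩
  have hpD : p ∈ D := hp ▸ (hD.cl y hyD).resolve_left fun h => hyx (hroot y hyD h)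
  rw [← hp] at hpx
  have hyp : y ∈ chD par D p := mem_chD.2 ⟨hyD, hp.symm⟩
  have hB := br_of_rooted hR hD hch
  have hdx := dsD_root hR hD hroot
  have hd' : (3 : ℝ) ≤ d := by exact_mod_cast hd
  have hneK : Nonempty K := Fintype.card_pos_iff.1 (by omega)
  have hm : (1 : ℝ) ≤ D.card := by exact_mod_cast Finset.card_pos.2 ⟨x, hxD⟩
  have hc : (1 : ℝ) ≤ (D.card : ℝ) ^ 10 := one_le_pow₀ hm
  -- the light subtrees hanging off `p`
  have hl : ∀ c, HasPI (incR par) μ (fun _ _ _ => True) d 2 (dsD par D (lroots (chD par D) p y c))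
      (lroots (chD par D) p y c) (2 ^ 15 * d * (D.card : ℝ) ^ 10) := by
    intro c
    have hcm := (mem_chD.1 (lroots_mem hyp c)).1
    refine (hB.thm1 hd hK (fun _ _ _ => True) _ _ hcm le_rfl (fun _ _ _ _ => trivial)).mono_weight ?_
    have h1 : ((dsD par D (lroots (chD par D) p y c)).card : ℝ) ≤ D.card := by
      exact_mod_cast Finset.card_le_card (Finset.filter_subset _ _)
    gcongr
  choose Y i1 i2 i3 Φ hΦ hPI using hl
  -- the pruned tree
  have hD' := prune_closed hR hD hpD
  have hch' : ∀ v ∈ prune par D p, chD par (prune par D p) v = ∅ ∨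
      (chD par (prune par D p) v).card + 1 = d := by
    intro v hv
    by_cases hvp : v = p
    · subst hvp; exact Or.inl (chD_prune_self hR hD hpD)
    · rw [chD_prune hR hD hpD hv hvp]; exact hch v (mem_prune.1 hv).1
  have hB' := br_of_rooted hR hD' hch'
  have hroot' : ∀ v ∈ prune par D p, par v = z → v = x := fun v hv => hroot v (mem_prune.1 hv).1
  have hdx' := dsD_root hR hD' hroot'
  have hpp : p ∈ prune par D p := mem_prune.2 ⟨hpD, fun _ => rfl⟩
  have hxp : x ∈ prune par D p := by
    refine mem_prune.2 ⟨hxD, fun h => ?_⟩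
    by_contra hne
    have h1 := (mem_dsD.1 (dsD_par hR hD hpD h hne)).1
    rw [hxz] at h1
    exact hD.nz h1
  obtain ⟨allow, hallow⟩ : ∃ allow : I → K → K → Prop,
    allow = fun a c c' => a = p → ¬ (c ∈ L ∧ c' ∈ L) := ⟨_, rfl⟩
  have h2 := hB'.thm2 (μ := μ) hd hK allow p (chD_prune_self hR hD hpD) L hL.le
    (fun a ha c c' => by rw [hallow]; exact fun h => absurd h ha)
    (fun c c' h => by rw [hallow]; exact fun _ => h) _ x hxp le_rfl (by rw [hdx']; exact hpp)
  rw [if_neg (Ne.symm hpx), hdx'] at h2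
  have hcU : ((prune par D p).card : ℝ) ≤ D.card := by
    exact_mod_cast Finset.card_le_card Finset.sdiff_subset
  obtain ⟨S, hS⟩ : ∃ S : Finset (I → K), ∀ σ, σ ∈ S ↔ IsCol (incR par) μ (prune par D p) σ ∧ σ x ∈ A :=
    ⟨univ.filter fun σ => IsCol (incR par) μ (prune par D p) σ ∧ σ x ∈ A, by simp⟩
  have hP : Poin allow S (prune par D p) (2 ^ 25 * d * (D.card : ℝ) ^ 10) := by
    refine h2.poin hxp (by positivity) (by gcongr) ?_ A hA (by omega) S hS
    nlinarith
  have hse := starEdges_prune hR hD hch hpD hyp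
  have hfin := two_ended (x := x) (A := A) (L := L) (S := S) (s' := s) hd hK
    (by rw [Fintype.card_option, hK]; have := hB.card_lights hpD hyp; omega)
    (starG_prune hR hD hch hpD hyp) hΦ
    (by
      show dsD par D y = {y}
      rw [hB.dsE y hyD, hyc]; rfl)
    (triv_subsingleton (by
      show dsD par D y = {y}
      rw [hB.dsE y hyD, hyc]; rfl) (hΦ none))
    (2 ^ 15 * d * (D.card : ℝ) ^ 10) (2 ^ 15 * d * (D.card : ℝ) ^ 10) (by positivity) le_rfl
    (by nlinarith)
    (fun j => lightK_twoCol (by positivity) (hPI (some j))) hxp hL hS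
    (by rw [hse]; exact hs) allow (by rw [hallow]; exact fun c c' h => h rfl)
    (2 ^ 25 * d * (D.card : ℝ) ^ 10) (by positivity) hP
  rw [hse] at hfin
  refine hfin.mono ?_
  gcongr

end RootedTree

/-! ### Rooting a tree and its splitting subtrees -/

section Graph

variable {V : Type} [Fintype V] [DecidableEq V] {G : SimpleGraph V} [DecidableRel G.Adj]

theorem closer_unique (hT : G.IsTree) {z v w w' : V} (h : G.Adj v w) (h' : G.Adj v w')
    (hd : G.dist z v = G.dist z w + 1) (hd' : G.dist z v = G.dist z w' + 1) : w = w' := by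
  obtain ⟨p, hp⟩ := hT.connected.exists_walk_length_eq_dist z w
  obtain ⟨p', hp'⟩ := hT.connected.exists_walk_length_eq_dist z w'
  have h1 : (p.concat h.symm).IsPath :=
    SimpleGraph.Walk.isPath_of_length_eq_dist _ (by rw [SimpleGraph.Walk.length_concat, hp, hd])
  have h2 : (p'.concat h'.symm).IsPath :=
    SimpleGraph.Walk.isPath_of_length_eq_dist _ (by rw [SimpleGraph.Walk.length_concat, hp', hd'])
  have h3 := (hT.existsUnique_path z v).unique h1 h2
  have h4 := congrArg SimpleGraph.Walk.penultimate h3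
  simpa using h4

theorem exists_closer (hT : G.IsTree) {z v : V} (h : v ≠ z) :
    ∃ w, G.Adj v w ∧ G.dist z v = G.dist z w + 1 := by
  obtain ⟨p, hp⟩ := hT.connected.exists_walk_length_eq_dist v z
  cases p with
  | nil => exact absurd rfl h
  | cons hadj q =>
    rename_i w
    refine ⟨w, hadj, ?_⟩
    rw [SimpleGraph.Walk.length_cons] at hp
    have h1 := SimpleGraph.dist_le q
    have h2 := hT.dist_eq_dist_add_one_of_adj z hadj
    rw [SimpleGraph.dist_comm (u := v)] at hp
    rw [SimpleGraph.dist_comm (u := w)] at h1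
    omega

/-- A parent map for the tree `G` rooted at `z`. -/
theorem exists_rooted (hT : G.IsTree) (z : V) : ∃ par : V → V, Rooted par (G.dist z) z ∧
    (∀ v ≠ z, G.Adj v (par v)) ∧ ∀ v w, G.Adj v w → v ≠ z ∧ par v = w ∨ w ≠ z ∧ par w = v := by
  choose! par hpar using fun v (h : v ≠ z) => exists_closer hT h
  have aux : ∀ v, v ≠ z → Function.update par z z v = par v := fun v h => Function.update_of_ne h _ _
  have key : ∀ v w, G.Adj v w → G.dist z v = G.dist z w + 1 →
      v ≠ z ∧ Function.update par z z v = w := by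
    intro v w h h1
    have hv : v ≠ z := by rintro rfl; simp at h1
    refine ⟨hv, ?_⟩
    rw [aux v hv]
    exact closer_unique hT (hpar v hv).1 h (hpar v hv).2 h1
  refine ⟨Function.update par z z, ⟨by simp, by simp, fun v hv => by rw [aux v hv]; exact (hpar v hv).2⟩,
    fun v hv => by rw [aux v hv]; exact (hpar v hv).1, fun v w h => ?_⟩
  rcases hT.dist_eq_dist_add_one_of_adj z h with h1 | h1
  · exact Or.inl (key v w h h1)
  · exact Or.inr (key w v h.symm h1)

/-- `par` is a parent map of the tree `G` rooted at `z`. -/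
structure TreePar (G : SimpleGraph V) (par : V → V) (dep : V → ℕ) (z : V) : Prop where
  rooted : Rooted par dep z
  adj : ∀ v ≠ z, G.Adj v (par v)
  cov : ∀ v w, G.Adj v w → v ≠ z ∧ par v = w ∨ w ≠ z ∧ par w = v

/-- The edge from `v` to its parent (a diagonal element, hence no edge, for the root). -/
def em (par : V → V) (v : V) : Sym2 V := s(v, par v)

variable {par : V → V} {dep : V → ℕ} {z : V}

theorem TreePar.em_mem (hP : TreePar G par dep z) {v : V} (h : v ≠ z) : em par v ∈ G.edgeSet :=
  hP.adj v h

theorem TreePar.em_surj (hP : TreePar G par dep z) {e : Sym2 V} (he : e ∈ G.edgeSet) :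
    ∃ v, v ≠ z ∧ em par v = e := by
  induction e with | _ a b => ?_
  rcases hP.cov a b he with ⟨h1, h2⟩ | ⟨h1, h2⟩
  · exact ⟨a, h1, by rw [em, h2]⟩
  · exact ⟨b, h1, by rw [em, h2, Sym2.eq_swap]⟩

theorem TreePar.em_inj (hP : TreePar G par dep z) {a b : V} (ha : a ≠ z)
    (h : em par a = em par b) : a = b := by
  rw [em, em, Sym2.eq_iff] at h
  rcases h with h | ⟨h1, h2⟩
  · exact h.1
  · by_cases hb : b = z
    · rw [hb, hP.rooted.hz] at h1; exact absurd h1 ha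
    have h3 := hP.rooted.dep_par ha
    have h4 := hP.rooted.dep_par hb
    rw [h2] at h3; rw [← h1] at h4; omega

theorem TreePar.em_ne (hP : TreePar G par dep z) {e : Sym2 V} (he : e ∈ G.edgeSet) {v : V}
    (h : em par v = e) : v ≠ z := by
  rintro rfl
  rw [em, hP.rooted.hz] at h
  rw [← h] at he
  exact G.loopless.irrefl _ he

theorem TreePar.inc_iff (hP : TreePar G par dep z) {a b : V} (ha : a ≠ z) :
    EdgeInc (em par a) (em par b) ↔ incR par a b := by
  unfold EdgeInc incR
  refine (and_congr (d := a = b ∨ par a = b ∨ par b = a ∨ par a = par b)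
    (not_congr ⟨hP.em_inj ha, fun h => by rw [h]⟩) ?_).trans ?_
  · simp only [em, Sym2.mem_iff]
    constructor
    · rintro ⟨v, rfl | rfl, h | h⟩
      · exact Or.inl h
      · exact Or.inr (Or.inr (Or.inl h.symm))
      · exact Or.inr (Or.inl h)
      · exact Or.inr (Or.inr (Or.inr h))
    · rintro (h | h | h | h)
      · exact ⟨a, Or.inl rfl, Or.inl h⟩
      · exact ⟨par a, Or.inr rfl, Or.inl h⟩
      · exact ⟨a, Or.inl rfl, Or.inr h.symm⟩
      · exact ⟨par a, Or.inr rfl, Or.inr h⟩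
  · constructor
    · rintro ⟨h1, h2⟩; exact ⟨h1, h2.resolve_left h1⟩
    · rintro ⟨h1, h2⟩; exact ⟨h1, Or.inr h2⟩

/-- The edge set `ET`, as a set of lower endpoints. -/
noncomputable def lowE (par : V → V) (ET : Finset (Sym2 V)) : Finset V :=
  univ.filter fun v => em par v ∈ ET

theorem mem_lowE {ET : Finset (Sym2 V)} {v : V} : v ∈ lowE par ET ↔ em par v ∈ ET := by simp [lowE]

variable {ET : Finset (Sym2 V)}

theorem TreePar.low_ne (hP : TreePar G par dep z) (hET : ∀ e ∈ ET, e ∈ G.edgeSet) {v : V}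
    (h : v ∈ lowE par ET) : v ≠ z :=
  hP.em_ne (hET _ (mem_lowE.1 h)) rfl

theorem TreePar.card_low (hP : TreePar G par dep z) (hET : ∀ e ∈ ET, e ∈ G.edgeSet) :
    (lowE par ET).card = ET.card := by
  refine Finset.card_bij (fun v _ => em par v) (fun v hv => mem_lowE.1 hv)
    (fun a ha b hb h => hP.em_inj (hP.low_ne hET ha) h) fun e he => ?_
  obtain ⟨v, hv, h⟩ := hP.em_surj (hET e he)
  exact ⟨v, mem_lowE.2 (h ▸ he), h⟩

theorem TreePar.degT_eq (hP : TreePar G par dep z) (hET : ∀ e ∈ ET, e ∈ G.edgeSet) {v : V}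
    (hv : v ∈ lowE par ET) : degT ET v = (chD par (lowE par ET) v).card + 1 := by
  have hvz := hP.low_ne hET hv
  have h1 : v ∉ chD par (lowE par ET) v := by
    intro h
    have h2 := hP.rooted.dep_par hvz
    rw [(mem_chD.1 h).2] at h2; omega
  rw [← Finset.card_insert_of_notMem h1]
  symm
  unfold degT
  refine Finset.card_bij (fun v _ => em par v) ?_ ?_ ?_
  · intro w hw
    rw [mem_insert, mem_chD] at hw
    rw [mem_filter]
    rcases hw with rfl | ⟨hw, hw'⟩
    · exact ⟨mem_lowE.1 hv, Sym2.mem_mk_left _ _⟩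
    · exact ⟨mem_lowE.1 hw, by rw [em, hw']; exact Sym2.mem_mk_right _ _⟩
  · intro a ha b hb h
    refine hP.em_inj ?_ h
    rw [mem_insert, mem_chD] at ha
    rcases ha with rfl | ha
    · exact hvz
    · exact hP.low_ne hET ha.1
  · intro e he
    rw [mem_filter] at he
    obtain ⟨w, hw, h⟩ := hP.em_surj (hET e he.1)
    have hwl : w ∈ lowE par ET := mem_lowE.2 (h ▸ he.1)
    refine ⟨w, ?_, h⟩
    have h3 := he.2
    rw [← h, em, Sym2.mem_iff] at h3
    rw [mem_insert, mem_chD]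
    rcases h3 with h3 | h3
    · exact Or.inl h3.symm
    · exact Or.inr ⟨hwl, h3.symm⟩

/-- Lower endpoints of a connected edge set containing an edge at the root `z` are closed under
parents. -/
theorem TreePar.closed (hP : TreePar G par dep z) (hET : ∀ e ∈ ET, e ∈ G.edgeSet)
    (hcon : EdgeConnectedSet ET) {x : V} (hx : x ∈ lowE par ET) (hxz : par x = z) :
    ClosedD par z (lowE par ET) where
  nz h := hP.low_ne hET h rfl
  cl v hv := by
    have key : ∀ e, Relation.ReflTransGen (fun a b => a ∈ ET ∧ b ∈ ET ∧ EdgeInc a b) (em par x) e →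
        ∀ w, em par w = e → w ∈ lowE par ET →
          ∀ n : ℕ, par^[n] w = z ∨ par^[n] w ∈ lowE par ET := by
      intro e he
      induction he with
      | refl =>
        intro w hw hwl n
        have := hP.em_inj (hP.low_ne hET hwl) hw
        subst this
        cases n with
        | zero => exact Or.inr hx
        | succ n =>
          rw [Function.iterate_succ_apply, hxz, hP.rooted.par_iter_z]; exact Or.inl rfl
      | tail _ hab ih =>
        rename_i b c
        obtain ⟨hb, hc, hbc⟩ := hab
        obtain ⟨a, ha, rfl⟩ := hP.em_surj (hET _ hb)
        intro w hw hwl n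
        subst hw
        have ih' := ih a rfl (mem_lowE.2 hb)
        rw [hP.inc_iff ha] at hbc
        rcases hbc.2 with h | h | h
        · have := ih' (n + 1)
          rwa [Function.iterate_succ_apply, h] at this
        · cases n with
          | zero => exact Or.inr hwl
          | succ n => rw [Function.iterate_succ_apply, h]; exact ih' n
        · cases n with
          | zero => exact Or.inr hwl
          | succ n =>
            have := ih' (n + 1)
            rwa [Function.iterate_succ_apply, h] at this
    exact key _ (hcon _ (mem_lowE.1 hx) _ (mem_lowE.1 hv)) v rfl hv 1

end Graph

section Splitting

variable {V : Type} [Fintype V] [DecidableEq V] {G : SimpleGraph V} [DecidableRel G.Adj]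
  {ET : Finset (Sym2 V)} {d : ℕ}

theorem degT_one {v : V} (h : degT ET v = 1) {e f : Sym2 V} (he : e ∈ ET) (hf : f ∈ ET) (hve : v ∈ e)
    (hvf : v ∈ f) : e = f :=
  Finset.card_le_one.1 h.le e (mem_filter.2 ⟨he, hve⟩) f (mem_filter.2 ⟨hf, hvf⟩)

theorem degT_pos {v : V} {e : Sym2 V} (he : e ∈ ET) (hve : v ∈ e) : 0 < degT ET v :=
  Finset.card_pos.2 ⟨e, mem_filter.2 ⟨he, hve⟩⟩

theorem mem_intBd_of (hsub : ET ⊆ G.edgeFinset) {e f : Sym2 V} (he : e ∈ ET) (hf : f ∈ G.edgeFinset)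
    (hfE : f ∉ ET) (hef : EdgeInc e f) : e ∈ intBd G ET := by
  refine mem_filter.2 ⟨he, f, mem_filter.2 ⟨mem_sdiff.2 ⟨hf, hfE⟩, e, he, ?_⟩, hef⟩
  obtain ⟨h1, v, h2, h3⟩ := hef
  exact ⟨h1.symm, v, h3, h2⟩

/-- A vertex of the subtree meeting an outside edge is a leaf of the subtree: otherwise two of its
subtree edges would be incident interior boundary edges. -/
theorem degT_one_of_out (hsub : ET ⊆ G.edgeFinset)
    (hpair : ∀ e ∈ intBd G ET, ∀ f ∈ intBd G ET, e ≠ f → ¬ EdgeInc e f) {v : V} {e f : Sym2 V}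
    (he : e ∈ ET) (hve : v ∈ e) (hf : f ∈ G.edgeFinset) (hfE : f ∉ ET) (hvf : v ∈ f) :
    degT ET v = 1 := by
  refine le_antisymm (Finset.card_le_one.2 fun a ha b hb => ?_) (degT_pos he hve)
  rw [mem_filter] at ha hb
  have key : ∀ a ∈ ET, v ∈ a → a ∈ intBd G ET := fun a ha hva =>
    mem_intBd_of hsub ha hf hfE ⟨fun h => hfE (h ▸ ha), v, hva, hvf⟩
  by_contra hab
  exact hpair a (key a ha.1 ha.2) b (key b hb.1 hb.2) hab ⟨hab, v, ha.2, hb.2⟩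

theorem degT_full (hsub : ET ⊆ G.edgeFinset) {v : V} (h : ∀ f ∈ G.edgeFinset, v ∈ f → f ∈ ET) :
    degT ET v = G.degree v := by
  rw [← G.card_incidenceFinset_eq_degree]
  unfold degT
  congr 1
  ext f
  rw [mem_filter, G.incidenceFinset_eq_filter, mem_filter]
  exact ⟨fun hf => ⟨hsub hf.1, hf.2⟩, fun hf => ⟨h f hf.1 hf.2, hf.2⟩⟩

theorem degT_cases (hsub : ET ⊆ G.edgeFinset)
    (hpair : ∀ e ∈ intBd G ET, ∀ f ∈ intBd G ET, e ≠ f → ¬ EdgeInc e f)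
    (hdeg : ∀ v : V, 2 ≤ G.degree v → G.degree v = d) {v : V} {e : Sym2 V}
    (he : e ∈ ET) (hve : v ∈ e) : degT ET v = 1 ∨ degT ET v = d := by
  by_cases h : ∀ f ∈ G.edgeFinset, v ∈ f → f ∈ ET
  · have h1 := degT_full hsub h
    have h2 := degT_pos he hve
    rw [h1] at h2 ⊢
    by_cases h3 : 2 ≤ G.degree v
    · exact Or.inr (hdeg v h3)
    · left; omega
  · push Not at h
    obtain ⟨f, hf, hvf, hfE⟩ := h
    exact Or.inl (degT_one_of_out hsub hpair he hve hf hfE hvf)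

theorem card_one_of_ends (hcon : EdgeConnectedSet ET) {v w : V} (hE : s(v, w) ∈ ET)
    (hv : degT ET v = 1) (hw : degT ET w = 1) : ET.card = 1 := by
  rw [Finset.card_eq_one]
  refine ⟨s(v, w), Finset.eq_singleton_iff_unique_mem.2 ⟨hE, fun f hf => ?_⟩⟩
  rcases Relation.ReflTransGen.cases_head (hcon _ hE f hf) with h | ⟨g, ⟨h1, h2, h3, u, h4, h5⟩, _⟩
  · exact h.symm
  · rw [Sym2.mem_iff] at h4
    rcases h4 with rfl | rfl
    · exact absurd (degT_one hv hE h2 (Sym2.mem_mk_left _ _) h5) h3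
    · exact absurd (degT_one hw hE h2 (Sym2.mem_mk_right _ _) h5) h3

/-- The colours available at an interior boundary edge given the outside colouring: exactly two,
as its outer endpoint has `d - 1` outside edges of distinct colours. -/
theorem bd_list (hsub : ET ⊆ G.edgeFinset) (hcon : EdgeConnectedSet ET) (hm : ET.card ≠ 1)
    (hpair : ∀ e ∈ intBd G ET, ∀ f ∈ intBd G ET, e ≠ f → ¬ EdgeInc e f) (hd : 3 ≤ d)
    (hdeg : ∀ v : V, 2 ≤ G.degree v → G.degree v = d) {μ : Sym2 V → Fin (d + 1)}
    (hμ : ProperECol G μ) {e : Sym2 V} (he : e ∈ intBd G ET) :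
    ∃ v ∈ e, degT ET v = 1 ∧ ∃ A : Finset (Fin (d + 1)), A.card = 2 ∧
      ∀ c, c ∈ A ↔ ∀ f ∈ G.edgeFinset, f ∉ ET → EdgeInc e f → c ≠ μ f := by
  obtain ⟨heE, f₀, hf₀, hef, v, hve, hvf⟩ := mem_filter.1 he
  obtain ⟨hf₀', _⟩ := mem_filter.1 hf₀
  obtain ⟨hf₀G, hf₀E⟩ := mem_sdiff.1 hf₀'
  have hv1 := degT_one_of_out hsub hpair heE hve hf₀G hf₀E hvf
  refine ⟨v, hve, hv1, ?_⟩
  obtain ⟨F, hF⟩ : ∃ F, F = (G.incidenceFinset v).erase e := ⟨_, rfl⟩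
  have hmF : ∀ f, f ∈ F ↔ f ≠ e ∧ f ∈ G.edgeFinset ∧ v ∈ f := by
    intro f; rw [hF, mem_erase, G.incidenceFinset_eq_filter, mem_filter]
  have heI : e ∈ G.incidenceFinset v := by
    rw [G.incidenceFinset_eq_filter, mem_filter]; exact ⟨hsub heE, hve⟩
  have hf₀F : f₀ ∈ F := (hmF _).2 ⟨hef.symm, hf₀G, hvf⟩
  have hFc : F.card + 1 = G.degree v := by
    rw [hF, ← G.card_incidenceFinset_eq_degree, Finset.card_erase_add_one heI]
  have hFd : F.card + 1 = d := by
    rw [hFc]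
    refine hdeg v ?_
    have := Finset.card_pos.2 ⟨f₀, hf₀F⟩
    omega
  have hinj : Set.InjOn μ F := by
    intro a ha b hb hab
    rw [Finset.mem_coe, hmF] at ha hb
    by_contra hne
    exact hμ a (SimpleGraph.mem_edgeFinset.1 ha.2.1) b (SimpleGraph.mem_edgeFinset.1 hb.2.1)
      ⟨hne, v, ha.2.2, hb.2.2⟩ hab
  refine ⟨(F.image μ)ᶜ, ?_, fun c => ?_⟩
  · rw [Finset.card_compl, Finset.card_image_of_injOn hinj, Fintype.card_fin]; omega
  · rw [mem_compl, mem_image]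
    constructor
    · rintro h f hf hfE ⟨hne, w, hwe, hwf⟩ rfl
      refine h ⟨f, (hmF f).2 ⟨hne.symm, hf, ?_⟩, rfl⟩
      by_contra hvf'
      have hvw : v ≠ w := by rintro rfl; exact hvf' hwf
      have hw1 := degT_one_of_out hsub hpair heE hwe hf hfE hwf
      have : e = s(v, w) := (Sym2.mem_and_mem_iff hvw).1 ⟨hve, hwe⟩
      rw [this] at heE
      exact hm (card_one_of_ends hcon heE hv1 hw1)
    · rintro h ⟨f, hf, rfl⟩
      rw [hmF] at hf
      refine h f hf.2.1 (fun hfE => ?_) ⟨hf.1.symm, v, hve, hf.2.2⟩ rfl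
      exact hf.1 (degT_one hv1 hfE heE hf.2.2 hve)

/-- Without interior boundary the subtree is the whole tree, hence contains a leaf. -/
theorem exists_leaf_of_no_bd (hT : G.IsTree) (hsub : ET ⊆ G.edgeFinset) (hne : ET.Nonempty)
    (hbd : intBd G ET = ∅) : ∃ z, ∃ e ∈ ET, z ∈ e ∧ degT ET z = 1 := by
  have hfull : ∀ v, (∃ e ∈ ET, v ∈ e) → ∀ f ∈ G.edgeFinset, v ∈ f → f ∈ ET := by
    rintro v ⟨e, he, hve⟩ f hf hvf
    by_contra hfE
    have := mem_intBd_of hsub he hf hfE ⟨fun h => hfE (h ▸ he), v, hve, hvf⟩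
    rw [hbd] at this; simp at this
  obtain ⟨e, he⟩ := hne
  obtain ⟨a, b, rfl⟩ : ∃ a b, e = s(a, b) := ⟨_, _, e.out_eq.symm⟩
  have hab : G.Adj a b := SimpleGraph.mem_edgeFinset.1 (hsub he)
  have hall : ∀ v, ∃ e ∈ ET, v ∈ e := by
    intro v
    obtain ⟨p⟩ := hT.connected a v
    have : ∀ {u w : V} (p : G.Walk u w), (∃ e ∈ ET, u ∈ e) → ∃ e ∈ ET, w ∈ e := by
      intro u w p
      induction p with
      | nil => exact id
      | cons h p ih =>
        intro hu
        exact ih ⟨_, hfull _ hu _ (SimpleGraph.mem_edgeFinset.2 h) (Sym2.mem_mk_left _ _),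
          Sym2.mem_mk_right _ _⟩
    exact this p ⟨_, he, Sym2.mem_mk_left _ _⟩
  have : Nontrivial V := ⟨a, b, hab.ne⟩
  obtain ⟨z, hz⟩ := hT.exists_vert_degree_one_of_nontrivial
  obtain ⟨e, he, hze⟩ := hall z
  exact ⟨z, e, he, hze, by rw [degT_full hsub (hfull z ⟨e, he, hze⟩), hz]⟩

end Splitting

/-! ### Transfer to the Glauber dynamics on the edges of the tree -/

section Transfer

variable {V : Type} [Fintype V] [DecidableEq V] {G : SimpleGraph V} [DecidableRel G.Adj]
  {ET : Finset (Sym2 V)} {d : ℕ} {par : V → V} {dep : V → ℕ} {z : V}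

/-- Indicator of two colourings differing at exactly one edge. -/
noncomputable def oneDiff {k : ℕ} {μ : Sym2 V → Fin k} (σ σ' : OmegaE G k ET μ) : ℝ :=
  if (univ.filter fun w => σ.1 w ≠ σ'.1 w).card = 1 then 1 else 0

/-- The Poincaré inequality for single-edge moves on the edge colourings. -/
def GPoin (G : SimpleGraph V) (k : ℕ) (ET : Finset (Sym2 V)) (μ : Sym2 V → Fin k) (W : ℝ) : Prop :=
  ∀ f : OmegaE G k ET μ → ℝ, ∃ c : ℝ,
    ∑ σ, (f σ - c) ^ 2 ≤ W * ∑ σ, ∑ σ', oneDiff σ σ' * (f σ - f σ') ^ 2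

theorem sum_mv_le (hP : TreePar G par dep z) (hET : ∀ e ∈ ET, e ∈ G.edgeSet) {k : ℕ}
    {μ : Sym2 V → Fin k} (σ σ' : OmegaE G k ET μ) :
    ∑ a ∈ lowE par ET, mv (fun _ _ _ => True) a (fun v => σ.1 (em par v)) (fun v => σ'.1 (em par v))
      ≤ oneDiff σ σ' := by
  by_cases h : ∃ a ∈ lowE par ET,
      DiffAt a (fun v => σ.1 (em par v)) (fun v => σ'.1 (em par v))
  · obtain ⟨a, ha, hd⟩ := h
    have h1 : oneDiff σ σ' = 1 := by
      unfold oneDiff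
      rw [if_pos]
      rw [Finset.card_eq_one]
      refine ⟨em par a, ?_⟩
      ext e
      rw [mem_filter, mem_singleton]
      constructor
      · rintro ⟨_, he⟩
        by_cases heE : e ∈ ET
        · obtain ⟨b, hb, rfl⟩ := hP.em_surj (hET e heE)
          by_contra hne
          exact he (hd.2 b fun h => hne (by rw [h]))
        · exact absurd ((σ.2.2 e heE).trans (σ'.2.2 e heE).symm) he
      · rintro rfl
        exact ⟨mem_univ _, hd.1⟩
    rw [h1, Finset.sum_eq_single_of_mem a ha]
    · unfold mv; split_ifs <;> norm_num
    · intro b hb hba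
      unfold mv
      rw [if_neg]
      rintro ⟨h2, _⟩
      exact hd.1 (h2.2 a (Ne.symm hba))
  · rw [Finset.sum_eq_zero]
    · unfold oneDiff; split_ifs <;> norm_num
    · intro a ha
      unfold mv
      rw [if_neg]
      rintro ⟨h2, _⟩
      exact h ⟨a, ha, h2⟩

/-- The identification of edges with lower endpoints carries the Poincaré inequality for colourings of
the rooted tree, restricted by the outside colours, over to the edge colourings of `G`. -/
theorem poin_transfer (hP : TreePar G par dep z) (hsub : ET ⊆ G.edgeFinset) {k : ℕ}
    {μ : Sym2 V → Fin k} (hμ : ProperECol G μ) {s : Finset (V → Fin k)}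
    (hs : ∀ τ, τ ∈ s ↔ IsCol (incR par) (fun v => μ (em par v)) (lowE par ET) τ ∧
      ∀ v ∈ lowE par ET, ∀ f ∈ G.edgeFinset, f ∉ ET → EdgeInc (em par v) f → τ v ≠ μ f)
    {W : ℝ} (hW : 0 ≤ W) (h : Poin (fun _ _ _ => True) s (lowE par ET) W) : GPoin G k ET μ W := by
  have hET : ∀ e ∈ ET, e ∈ G.edgeSet := fun e he => SimpleGraph.mem_edgeFinset.1 (hsub he)
  obtain ⟨φ, hφ⟩ : ∃ φ : OmegaE G k ET μ → V → Fin k, ∀ σ, φ σ = fun v => σ.1 (em par v) :=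
    ⟨_, fun _ => rfl⟩
  have hinj : Function.Injective φ := by
    intro σ σ' h
    rw [hφ, hφ] at h
    refine Subtype.ext (funext fun e => ?_)
    by_cases he : e ∈ ET
    · obtain ⟨v, _, rfl⟩ := hP.em_surj (hET e he)
      exact congrFun h v
    · rw [σ.2.2 e he, σ'.2.2 e he]
  have himg : s = univ.image φ := by
    ext τ
    rw [hs, mem_image]
    constructor
    · rintro ⟨⟨h1, h2⟩, h3⟩
      obtain ⟨σ, hσ⟩ : ∃ σ : Sym2 V → Fin k,
          ∀ e, σ e = if h : ∃ v, v ∈ lowE par ET ∧ em par v = e then τ h.choose else μ e :=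
        ⟨_, fun _ => rfl⟩
      have hσ1 : ∀ v ∈ lowE par ET, σ (em par v) = τ v := by
        intro v hv
        have hex : ∃ w, w ∈ lowE par ET ∧ em par w = em par v := ⟨v, hv, rfl⟩
        rw [hσ, dif_pos hex]
        congr 1
        exact hP.em_inj (hP.low_ne hET hex.choose_spec.1) hex.choose_spec.2
      have hσ2 : ∀ e ∉ ET, σ e = μ e := by
        intro e he
        rw [hσ, dif_neg]
        rintro ⟨v, hv, rfl⟩
        exact he (mem_lowE.1 hv)
      refine ⟨⟨σ, ?_, hσ2⟩, mem_univ _, ?_⟩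
      · intro e he f hf hef
        have hmix : ∀ e ∈ G.edgeSet, ∀ f ∈ G.edgeSet, EdgeInc e f → e ∈ ET → f ∉ ET → σ e ≠ σ f := by
          intro e he f hf hef heE hfE
          obtain ⟨v, _, rfl⟩ := hP.em_surj he
          rw [hσ1 v (mem_lowE.2 heE), hσ2 f hfE]
          exact h3 v (mem_lowE.2 heE) f (SimpleGraph.mem_edgeFinset.2 hf) hfE hef
        by_cases heE : e ∈ ET <;> by_cases hfE : f ∈ ET
        · obtain ⟨v, hv, rfl⟩ := hP.em_surj he
          obtain ⟨w, hw, rfl⟩ := hP.em_surj hf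
          rw [hσ1 v (mem_lowE.2 heE), hσ1 w (mem_lowE.2 hfE)]
          exact h1 v (mem_lowE.2 heE) w (mem_lowE.2 hfE) ((hP.inc_iff hv).1 hef)
        · exact hmix e he f hf hef heE hfE
        · have hfe : EdgeInc f e := by
            obtain ⟨h4, v, h5, h6⟩ := hef
            exact ⟨h4.symm, v, h6, h5⟩
          exact (hmix f hf e he hfe hfE heE).symm
        · rw [hσ2 e heE, hσ2 f hfE]
          exact hμ e he f hf hef
      · rw [hφ]
        funext v
        by_cases hv : v ∈ lowE par ET
        · exact hσ1 v hv
        · exact (hσ2 _ fun h => hv (mem_lowE.2 h)).trans (h2 v hv).symm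
    · rintro ⟨σ, _, rfl⟩
      rw [hφ]
      refine ⟨⟨fun v hv w hw hvw => ?_, fun v hv => σ.2.2 _ fun h => hv (mem_lowE.2 h)⟩, ?_⟩
      · exact σ.2.1 _ (hET _ (mem_lowE.1 hv)) _ (hET _ (mem_lowE.1 hw))
          ((hP.inc_iff (hP.low_ne hET hv)).2 hvw)
      · intro v hv f hf hfE hvf
        rw [← σ.2.2 f hfE]
        exact σ.2.1 _ (hET _ (mem_lowE.1 hv)) _ (SimpleGraph.mem_edgeFinset.1 hf) hvf
  intro f
  obtain ⟨c, hc⟩ := h (Function.extend φ f 0)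
  refine ⟨c, ?_⟩
  have hF : ∀ σ, Function.extend φ f 0 (φ σ) = f σ := fun σ => hinj.extend_apply _ _ _
  have hsum : ∀ g : (V → Fin k) → ℝ, ∑ τ ∈ s, g τ = ∑ σ, g (φ σ) := by
    intro g
    rw [himg, Finset.sum_image fun a _ b _ hab => hinj hab]
  rw [hsum] at hc
  simp only [hF] at hc
  refine hc.trans (mul_le_mul_of_nonneg_left ?_ hW)
  simp only [enS, hsum, hF]
  rw [Finset.sum_comm]
  refine Finset.sum_le_sum fun σ _ => ?_
  rw [Finset.sum_comm]
  refine Finset.sum_le_sum fun σ' _ => ?_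
  rw [← Finset.sum_mul]
  refine mul_le_mul_of_nonneg_right ?_ (sq_nonneg _)
  rw [hφ, hφ]
  exact sum_mv_le hP hET σ σ'

end Transfer

section Combine

variable {V : Type} [Fintype V] [DecidableEq V] {G : SimpleGraph V} [DecidableRel G.Adj]
  {ET : Finset (Sym2 V)} {d : ℕ}

/-- Rooting the tree at a leaf `z` of the subtree turns the subtree into a branching with a single
root edge. -/
theorem root_setup (hT : G.IsTree) (hsub : ET ⊆ G.edgeFinset) (hcon : EdgeConnectedSet ET)
    (hm : ET.card ≠ 1)
    (hpair : ∀ e ∈ intBd G ET, ∀ f ∈ intBd G ET, e ≠ f → ¬ EdgeInc e f)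
    (hdeg : ∀ v : V, 2 ≤ G.degree v → G.degree v = d) {z : V} {e : Sym2 V} (he : e ∈ ET) (hze : z ∈ e)
    (hz : degT ET z = 1) :
    ∃ (par : V → V) (dep : V → ℕ) (x : V), TreePar G par dep z ∧ ClosedD par z (lowE par ET) ∧
      (∀ v ∈ lowE par ET, chD par (lowE par ET) v = ∅ ∨ (chD par (lowE par ET) v).card + 1 = d) ∧
      x ∈ lowE par ET ∧ par x = z ∧ em par x = e ∧ (∀ v ∈ lowE par ET, par v = z → v = x) ∧
      d ≤ ET.card := by
  have hET : ∀ e ∈ ET, e ∈ G.edgeSet := fun e he => SimpleGraph.mem_edgeFinset.1 (hsub he)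
  obtain ⟨par, h1, h2, h3⟩ := exists_rooted hT z
  have hP : TreePar G par (G.dist z) z := ⟨h1, h2, h3⟩
  obtain ⟨x, hxz, hx⟩ := hP.em_surj (hET e he)
  have hxl : x ∈ lowE par ET := mem_lowE.2 (hx ▸ he)
  have hpx : par x = z := by
    rw [← hx, em, Sym2.mem_iff] at hze
    rcases hze with h | h
    · exact absurd h.symm hxz
    · exact h.symm
  refine ⟨par, _, x, hP, hP.closed hET hcon hxl hpx, ?_, hxl, hpx, hx, ?_, ?_⟩
  · intro v hv
    have h4 := hP.degT_eq hET hv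
    rcases degT_cases hsub hpair hdeg (mem_lowE.1 hv) (Sym2.mem_mk_left _ _) with h5 | h5
    · left
      rw [← Finset.card_eq_zero]; omega
    · right; omega
  · intro v hv hvz
    refine hP.em_inj (hP.low_ne hET hv) ?_
    refine degT_one hz (mem_lowE.1 hv) (mem_lowE.1 hxl) ?_ ?_
    · rw [em, hvz]; exact Sym2.mem_mk_right _ _
    · rw [em, hpx]; exact Sym2.mem_mk_right _ _
  · rcases degT_cases hsub hpair hdeg (mem_lowE.1 hxl) (Sym2.mem_mk_left x (par x)) with h5 | h5
    · refine absurd (card_one_of_ends hcon (mem_lowE.1 hxl) h5 ?_) hm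
      rw [hpx]; exact hz
    · rw [← h5]; exact Finset.card_le_card (Finset.filter_subset _ _)

/-- The Poincaré constant obtained for a splitting subtree with `m` edges. -/
noncomputable def bigW (d m : ℝ) : ℝ :=
  (2 + 24 * d * (2 ^ 25 * d * m ^ 10) * (m * (d + 1))) * (200 * d * (2 ^ 15 * d * m ^ 10))
    + 12 * d * (2 ^ 25 * d * m ^ 10)

theorem bigW_nonneg {d m : ℝ} (hd : 0 ≤ d) (hm : 0 ≤ m) : 0 ≤ bigW d m := by
  unfold bigW; positivity

theorem le_bigW {d m : ℝ} (hd : 1 ≤ d) (hm : 0 ≤ m) : 2 ^ 15 * d * m ^ 10 ≤ bigW d m := by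
  have h1 : 12 * d * (2 ^ 25 * d * m ^ 10) ≤ bigW d m := by
    unfold bigW
    have : 0 ≤ (2 + 24 * d * (2 ^ 25 * d * m ^ 10) * (m * (d + 1))) *
      (200 * d * (2 ^ 15 * d * m ^ 10)) := by positivity
    linarith
  refine le_trans ?_ h1
  have h2 : 0 ≤ d * m ^ 10 := by positivity
  nlinarith

/-- The Poincaré inequality for splitting subtrees with more than one edge, by the number of interior
boundary edges: the root is the outer end of such an edge if there is one, and a leaf of `G`
otherwise. The comparison `d ≤ |ET|` serves to absorb powers of `d` into powers of `m`. -/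
theorem tree_gpoin (hd : 3 ≤ d) (hT : G.IsTree) (hdeg : ∀ v : V, 2 ≤ G.degree v → G.degree v = d)
    (hS : IsSplitting G ET) (hm : ET.card ≠ 1) {μ : Sym2 V → Fin (d + 1)} (hμ : ProperECol G μ) :
    GPoin G (d + 1) ET μ (bigW d ET.card) ∧ d ≤ ET.card := by
  obtain ⟨hsub, hne, hcon, h⟩ := hS
  obtain ⟨-, hc2, hpair⟩ := h.resolve_left hm
  have hET : ∀ e ∈ ET, e ∈ G.edgeSet := fun e he => SimpleGraph.mem_edgeFinset.1 (hsub he)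
  have hK : Fintype.card (Fin (d + 1)) = d + 1 := Fintype.card_fin _
  have hd' : (1 : ℝ) ≤ d := by exact_mod_cast (by omega : 1 ≤ d)
  have hW := bigW_nonneg (d := d) (m := ET.card) (by positivity) (by positivity)
  have hW1 := le_bigW (d := d) (m := ET.card) hd' (by positivity)
  rcases (intBd G ET).eq_empty_or_nonempty with hbd | ⟨e, he⟩
  · obtain ⟨z, e, he, hze, hz⟩ := exists_leaf_of_no_bd hT hsub hne hbd
    obtain ⟨par, dep, x, hP, hD, hch, hx, hxz, hxe, hroot, hdm⟩ :=
      root_setup hT hsub hcon hm hpair hdeg he hze hz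
    refine ⟨?_, hdm⟩
    obtain ⟨s, hs⟩ : ∃ s : Finset (V → Fin (d + 1)), ∀ τ, τ ∈ s ↔
        IsCol (incR par) (fun v => μ (em par v)) (lowE par ET) τ ∧ τ x ∈ (univ : Finset (Fin (d + 1))) :=
      ⟨univ.filter fun τ => IsCol (incR par) (fun v => μ (em par v)) (lowE par ET) τ ∧
        τ x ∈ (univ : Finset (Fin (d + 1))), by simp⟩
    have h1 := poin_one hd hK hP.rooted hD hch hx hroot
      (by rw [Finset.card_univ, hK]; omega) hs
    rw [hP.card_low hET] at h1
    refine poin_transfer hP hsub hμ (s := s) (fun τ => (hs τ).trans (and_congr_right fun _ => ?_)) hW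
      (h1.mono hW1)
    refine ⟨fun _ v hv f hf hfE hvf => ?_, fun _ => mem_univ _⟩
    have := mem_intBd_of hsub (mem_lowE.1 hv) hf hfE hvf
    rw [hbd] at this; simp at this
  · obtain ⟨z, hze, hz, A, hA, hAc⟩ := bd_list hsub hcon hm hpair hd hdeg hμ he
    have heE : e ∈ ET := (mem_filter.1 he).1
    obtain ⟨par, dep, x, hP, hD, hch, hx, hxz, hxe, hroot, hdm⟩ :=
      root_setup hT hsub hcon hm hpair hdeg heE hze hz
    refine ⟨?_, hdm⟩
    by_cases hone : ∃ f ∈ intBd G ET, f ≠ e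
    · obtain ⟨f, hf, hfe⟩ := hone
      have hfE : f ∈ ET := (mem_filter.1 hf).1
      obtain ⟨w, hwf, hw, L, hL, hLc⟩ := bd_list hsub hcon hm hpair hd hdeg hμ hf
      obtain ⟨y, hyz, hyf⟩ := hP.em_surj (hET f hfE)
      have hy : y ∈ lowE par ET := mem_lowE.2 (hyf ▸ hfE)
      have hyx : y ≠ x := by
        rintro rfl; exact hfe (hyf.symm.trans hxe)
      -- two interior boundary edges exhaust the boundary
      have hbd : ∀ g ∈ intBd G ET, g = e ∨ g = f := by
        intro g hg
        by_contra hcon'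
        push Not at hcon'
        have h3 : ({e, f, g} : Finset (Sym2 V)) ⊆ intBd G ET := by
          intro a ha
          simp only [mem_insert, mem_singleton] at ha
          rcases ha with rfl | rfl | rfl <;> assumption
        have h4 := Finset.card_le_card h3
        rw [Finset.card_eq_three.2 ⟨e, f, g, hfe.symm, hcon'.1.symm, hcon'.2.symm, rfl⟩] at h4
        omega
      have hninc : ¬ incR par y x := by
        rw [← hP.inc_iff hyz, hyf, hxe]; exact hpair f hf e he hfe
      have hpyx : par y ≠ x := fun h => hninc ⟨hyx, Or.inl h⟩
      -- the leaf end of `f` is its lower endpoint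
      have hwy : w = y := by
        rw [← hyf, em, Sym2.mem_iff] at hwf
        refine hwf.resolve_right fun hwp => ?_
        have h5 : par y ∈ lowE par ET := (hD.cl y hy).resolve_left fun h => hyx (hroot y hy h)
        have h6 := hP.degT_eq hET h5
        have h7 : 0 < (chD par (lowE par ET) (par y)).card :=
          Finset.card_pos.2 ⟨y, mem_chD.2 ⟨hy, rfl⟩⟩
        rw [hwp] at hw; omega
      have hyc : chD par (lowE par ET) y = ∅ := by
        have h6 := hP.degT_eq hET hy
        rw [← Finset.card_eq_zero]; rw [hwy] at hw; omega
      obtain ⟨s, hs⟩ : ∃ s : Finset (V → Fin (d + 1)), ∀ τ, τ ∈ s ↔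
          IsCol (incR par) (fun v => μ (em par v)) (lowE par ET) τ ∧ τ x ∈ A ∧ τ y ∈ L :=
        ⟨univ.filter fun τ => IsCol (incR par) (fun v => μ (em par v)) (lowE par ET) τ ∧
          τ x ∈ A ∧ τ y ∈ L, by simp⟩
      have h1 := poin_two hd hK hP.rooted hD hch hx hxz hroot hy hyx hpyx hyc hA.ge hL hs
      rw [hP.card_low hET] at h1
      refine poin_transfer hP hsub hμ (s := s) (fun τ => (hs τ).trans (and_congr_right fun _ => ?_)) hW
        h1
      rw [hAc, hLc]
      constructor
      · rintro ⟨h8, h9⟩ v hv g hg hgE hvg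
        rcases hbd _ (mem_intBd_of hsub (mem_lowE.1 hv) hg hgE hvg) with h10 | h10
        · have := hP.em_inj (hP.low_ne hET hv) (h10.trans hxe.symm)
          subst this
          exact h8 g hg hgE (h10 ▸ hvg)
        · have := hP.em_inj (hP.low_ne hET hv) (h10.trans hyf.symm)
          subst this
          exact h9 g hg hgE (h10 ▸ hvg)
      · intro h8
        exact ⟨fun g hg hgE heg => h8 x hx g hg hgE (hxe.symm ▸ heg),
          fun g hg hgE hfg => h8 y hy g hg hgE (hyf.symm ▸ hfg)⟩
    · push Not at hone
      obtain ⟨s, hs⟩ : ∃ s : Finset (V → Fin (d + 1)), ∀ τ, τ ∈ s ↔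
          IsCol (incR par) (fun v => μ (em par v)) (lowE par ET) τ ∧ τ x ∈ A :=
        ⟨univ.filter fun τ => IsCol (incR par) (fun v => μ (em par v)) (lowE par ET) τ ∧ τ x ∈ A,
          by simp⟩
      have h1 := poin_one hd hK hP.rooted hD hch hx hroot hA.ge hs
      rw [hP.card_low hET] at h1
      refine poin_transfer hP hsub hμ (s := s) (fun τ => (hs τ).trans (and_congr_right fun _ => ?_)) hW
        (h1.mono hW1)
      rw [hAc]
      constructor
      · intro h8 v hv g hg hgE hvg
        have h10 := hone _ (mem_intBd_of hsub (mem_lowE.1 hv) hg hgE hvg)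
        have := hP.em_inj (hP.low_ne hET hv) (h10.trans hxe.symm)
        subst this
        exact h8 g hg hgE (h10 ▸ hvg)
      · intro h8 g hg hgE heg
        exact h8 x hx g hg hgE (hxe.symm ▸ heg)

end Combine

/-! ### From the Poincaré inequality to ergodicity and the relaxation time -/

section Final

variable {V : Type} [Fintype V] [DecidableEq V] {G : SimpleGraph V}
  {ET : Finset (Sym2 V)} {k : ℕ} {μ : Sym2 V → Fin k}

theorem treeGen_off {σ σ' : OmegaE G k ET μ} (h : σ ≠ σ') :
    treeGen G k ET μ σ σ' = 1 / (k : ℝ) * oneDiff σ σ' := by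
  unfold treeGen glauber glauberOff oneDiff
  rw [if_neg h]
  split_ifs with h1
  · rw [Finset.sum_const, h1]; simp
  · simp

theorem oneDiff_symm (σ σ' : OmegaE G k ET μ) : oneDiff σ σ' = oneDiff σ' σ := by
  unfold oneDiff
  simp only [ne_comm]

theorem oneDiff_nonneg (σ σ' : OmegaE G k ET μ) : 0 ≤ oneDiff σ σ' := by
  unfold oneDiff; split_ifs <;> norm_num

/-- The indicator of the set reachable from a state has zero energy, hence is constant. -/
theorem GPoin.ergodic (hk : 0 < k) {W : ℝ} (h : GPoin G k ET μ W) :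
    IsErgodicGen (treeGen G k ET μ) := by
  intro x y
  obtain ⟨f, hf⟩ : ∃ f : OmegaE G k ET μ → ℝ, ∀ σ, f σ =
    if Relation.ReflTransGen (IsTransition (treeGen G k ET μ)) x σ then 1 else 0 := ⟨_, fun _ => rfl⟩
  obtain ⟨c, hc⟩ := h f
  have hk' : (0 : ℝ) < 1 / k := by positivity
  -- the set reachable from `x` is closed under single-edge moves
  have key : ∀ σ σ' : OmegaE G k ET μ, oneDiff σ σ' ≠ 0 → f σ = f σ' := by
    intro σ σ' h1
    by_cases h2 : σ = σ'
    · rw [h2]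
    have h3 : 0 < oneDiff σ σ' := lt_of_le_of_ne (oneDiff_nonneg _ _) h1.symm
    have t1 : IsTransition (treeGen G k ET μ) σ σ' := ⟨h2, by rw [treeGen_off h2]; positivity⟩
    have t2 : IsTransition (treeGen G k ET μ) σ' σ :=
      ⟨Ne.symm h2, by rw [treeGen_off (Ne.symm h2), oneDiff_symm]; positivity⟩
    rw [hf, hf]
    have : Relation.ReflTransGen (IsTransition (treeGen G k ET μ)) x σ ↔
        Relation.ReflTransGen (IsTransition (treeGen G k ET μ)) x σ' :=
      ⟨fun h => h.tail t1, fun h => h.tail t2⟩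
    simp only [this]
  have h0 : ∑ σ, ∑ σ', oneDiff σ σ' * (f σ - f σ') ^ 2 = 0 := by
    refine Finset.sum_eq_zero fun σ _ => Finset.sum_eq_zero fun σ' _ => ?_
    by_cases h1 : oneDiff σ σ' = 0
    · rw [h1, zero_mul]
    · rw [key σ σ' h1]; simp
  rw [h0, mul_zero] at hc
  have h1 : ∀ σ, f σ = c := by
    intro σ
    have h2 : (f σ - c) ^ 2 ≤ 0 :=
      (Finset.single_le_sum (f := fun σ => (f σ - c) ^ 2) (fun _ _ => sq_nonneg _) (mem_univ σ)).trans hc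
    have h3 := pow_eq_zero_iff (two_ne_zero) |>.1 (le_antisymm h2 (sq_nonneg _))
    linarith
  have h2 : f x = 1 := by rw [hf, if_pos Relation.ReflTransGen.refl]
  have h3 : f y = 1 := by rw [h1 y, ← h1 x, h2]
  by_contra hcon
  rw [hf, if_neg hcon] at h3
  norm_num at h3

theorem sum_sq_diff_le {Ω : Type*} [Fintype Ω] (f : Ω → ℝ) (c : ℝ) :
    ∑ a, ∑ b, (f a - f b) ^ 2 ≤ 2 * (Fintype.card Ω : ℝ) * ∑ a, (f a - c) ^ 2 := by
  have h : ∀ a b, (f a - f b) ^ 2 = (f a - c) ^ 2 + (f b - c) ^ 2 - 2 * ((f a - c) * (f b - c)) :=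
    fun a b => by ring
  simp only [h, Finset.sum_sub_distrib, Finset.sum_add_distrib, ← Finset.mul_sum, ← Finset.sum_mul,
    Finset.sum_const, Finset.card_univ, nsmul_eq_mul]
  nlinarith [sq_nonneg (∑ a, (f a - c))]

theorem varForm_unif {Ω : Type*} [Fintype Ω] (f : Ω → ℝ) :
    VarForm (unif Ω) f = 1 / 2 * ((1 / (Fintype.card Ω : ℝ)) ^ 2 * ∑ a, ∑ b, (f a - f b) ^ 2) := by
  unfold VarForm unif
  simp only [Finset.mul_sum]
  refine Finset.sum_congr rfl fun a _ => Finset.sum_congr rfl fun b _ => by ring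

theorem varForm_pos {Ω : Type*} [Fintype Ω] {f : Ω → ℝ} {a b : Ω} (h : f a ≠ f b) :
    0 < VarForm (unif Ω) f := by
  rw [varForm_unif]
  have h1 : 0 < (f a - f b) ^ 2 := by
    have := sub_ne_zero.2 h
    positivity
  have h2 : (f a - f b) ^ 2 ≤ ∑ b, (f a - f b) ^ 2 :=
    Finset.single_le_sum (f := fun b => (f a - f b) ^ 2) (fun _ _ => sq_nonneg _) (mem_univ b)
  have h3 : ∑ b, (f a - f b) ^ 2 ≤ ∑ a, ∑ b, (f a - f b) ^ 2 :=
    Finset.single_le_sum (f := fun a => ∑ b, (f a - f b) ^ 2)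
      (fun _ _ => Finset.sum_nonneg fun _ _ => sq_nonneg _) (mem_univ a)
  have h4 : (0 : ℝ) < Fintype.card Ω := by exact_mod_cast Fintype.card_pos_iff.2 ⟨a⟩
  have h5 : 0 < ∑ a, ∑ b, (f a - f b) ^ 2 := by linarith
  positivity

theorem dirForm_eq (f : OmegaE G k ET μ → ℝ) :
    DirForm (unif (OmegaE G k ET μ)) (treeGen G k ET μ) f =
      1 / 2 * (1 / (Fintype.card (OmegaE G k ET μ) : ℝ) * (1 / (k : ℝ) *
        ∑ σ, ∑ σ', oneDiff σ σ' * (f σ - f σ') ^ 2)) := by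
  unfold DirForm unif
  simp only [Finset.mul_sum]
  refine Finset.sum_congr rfl fun a _ => Finset.sum_congr rfl fun b _ => ?_
  by_cases h : a = b
  · rw [h]; simp
  · rw [treeGen_off h]; ring

/-- The factor `2 * k` comes from the update rate `1 / k` and from the `1 / 2` in the Dirichlet form;
`1 ≤ B` covers the convention for one-point spaces. -/
theorem GPoin.relax (hk : 0 < k) {W B : ℝ} (h : GPoin G k ET μ W) (hW : 0 < W) (hB : 2 * k * W ≤ B)
    (hB1 : 1 ≤ B) : relaxTime (unif (OmegaE G k ET μ)) (treeGen G k ET μ) ≤ B := by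
  unfold relaxTime
  split_ifs with hab
  swap
  · exact hB1
  obtain ⟨a, b, hab⟩ := hab
  have hk' : (0 : ℝ) < k := by exact_mod_cast hk
  have hN : (0 : ℝ) < Fintype.card (OmegaE G k ET μ) := by
    exact_mod_cast Fintype.card_pos_iff.2 ⟨a⟩
  have hgap : 1 / (2 * k * W) ≤ specGap (unif (OmegaE G k ET μ)) (treeGen G k ET μ) := by
    unfold specGap
    refine le_csInf ⟨_, fun σ => if σ = a then 1 else 0, ⟨a, b, ?_⟩, rfl⟩ ?_
    · simp [Ne.symm hab]
    · rintro r ⟨f, ⟨a', b', hf⟩, rfl⟩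
      have hv := varForm_pos hf
      rw [div_le_div_iff₀ (by positivity) hv, one_mul, dirForm_eq, varForm_unif]
      obtain ⟨c, hc⟩ := h f
      have h1 := sum_sq_diff_le f c
      generalize ∑ a, ∑ b, (f a - f b) ^ 2 = Q at h1
      generalize ∑ σ, ∑ σ', oneDiff σ σ' * (f σ - f σ') ^ 2 = S at hc
      generalize ∑ a, (f a - c) ^ 2 = R at h1 hc
      generalize (Fintype.card (OmegaE G k ET μ) : ℝ) = N at hN h1
      have h2 : Q ≤ 2 * N * (W * S) := h1.trans (by gcongr)
      calc 1 / 2 * ((1 / N) ^ 2 * Q) ≤ 1 / 2 * ((1 / N) ^ 2 * (2 * N * (W * S))) := by gcongr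
        _ = 1 / 2 * (1 / N * (1 / k * S)) * (2 * k * W) := by field_simp
  have hpos : (0 : ℝ) < 1 / (2 * k * W) := by positivity
  calc 1 / specGap (unif (OmegaE G k ET μ)) (treeGen G k ET μ) ≤ 1 / (1 / (2 * k * W)) :=
        one_div_le_one_div_of_le hpos hgap
    _ = 2 * k * W := by rw [one_div_one_div]
    _ ≤ B := hB

theorem gpoin_single (hμ : ProperECol G μ) (hE : ET.card = 1) : GPoin G k ET μ 1 := by
  obtain ⟨e, rfl⟩ := Finset.card_eq_one.1 hE
  intro f
  obtain ⟨σ₀, hσ₀⟩ : ∃ σ₀ : OmegaE G k {e} μ, σ₀ = ⟨μ, hμ, fun _ _ => rfl⟩ := ⟨_, rfl⟩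
  refine ⟨f σ₀, ?_⟩
  rw [one_mul]
  refine Finset.sum_le_sum fun σ _ => ?_
  have hnn : ∀ σ' ∈ univ, 0 ≤ oneDiff σ σ' * (f σ - f σ') ^ 2 := fun σ' _ =>
    mul_nonneg (oneDiff_nonneg _ _) (sq_nonneg _)
  refine le_trans ?_ (Finset.single_le_sum hnn (mem_univ σ₀))
  by_cases h : σ = σ₀
  · rw [h]; simp
  · have : oneDiff σ σ₀ = 1 := by
      unfold oneDiff
      rw [if_pos]
      rw [Finset.card_eq_one]
      refine ⟨e, ?_⟩
      have hoff : ∀ g, g ≠ e → σ.1 g = σ₀.1 g := fun g hg => by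
        rw [σ.2.2 g (by simpa using hg), σ₀.2.2 g (by simpa using hg)]
      ext g
      rw [mem_filter, mem_singleton]
      constructor
      · rintro ⟨_, hg⟩
        by_contra hne
        exact hg (hoff g hne)
      · rintro rfl
        refine ⟨mem_univ _, fun hg => h (Subtype.ext (funext fun g' => ?_))⟩
        by_cases hne : g' = g
        · rw [hne, hg]
        · exact hoff g' hne
    rw [this, one_mul]

/-- Since `2 ≤ d ≤ m`, all numerical constants and powers of `d` are absorbed into powers of `m`. -/
theorem bigW_bound {d m : ℝ} (hd : 3 ≤ d) (hdm : d ≤ m) :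
    2 * (d + 1) * bigW d m ≤ d ^ 3 * m ^ 84 := by
  have hd0 : 0 ≤ d := by linarith
  have hm0 : 0 ≤ m := by linarith
  have hm1 : 1 ≤ m := by linarith
  have hd1 : d + 1 ≤ 2 * m := by linarith
  have h1 : bigW d m ≤ 2 ^ 55 * m ^ 26 := by
    unfold bigW
    calc (2 + 24 * d * (2 ^ 25 * d * m ^ 10) * (m * (d + 1))) * (200 * d * (2 ^ 15 * d * m ^ 10))
          + 12 * d * (2 ^ 25 * d * m ^ 10)
        ≤ (2 * m ^ 14 + 24 * m * (2 ^ 25 * m * m ^ 10) * (m * (2 * m))) *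
            (200 * m * (2 ^ 15 * m * m ^ 10)) + 12 * m * (2 ^ 25 * m * m ^ 10) * m ^ 14 := by
          have h2 : 1 ≤ m ^ 14 := one_le_pow₀ hm1
          have h3 : 12 * d * (2 ^ 25 * d * m ^ 10) ≤ 12 * m * (2 ^ 25 * m * m ^ 10) * m ^ 14 := by
            calc 12 * d * (2 ^ 25 * d * m ^ 10) ≤ 12 * m * (2 ^ 25 * m * m ^ 10) := by gcongr
              _ ≤ _ := le_mul_of_one_le_right (by positivity) h2
          have h4 : (2 : ℝ) ≤ 2 * m ^ 14 := by linarith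
          gcongr
      _ = ((2 + 24 * 2 ^ 25 * 2) * (200 * 2 ^ 15) + 12 * 2 ^ 25) * m ^ 26 := by ring
      _ ≤ 2 ^ 55 * m ^ 26 := by
          have : (0 : ℝ) ≤ m ^ 26 := by positivity
          refine mul_le_mul_of_nonneg_right ?_ this
          norm_num
  have h2 : (2 : ℝ) ^ 57 ≤ m ^ 57 := by
    have : (2 : ℝ) ≤ m := by linarith
    gcongr
  have hW0 : 0 ≤ bigW d m := by unfold bigW; positivity
  calc 2 * (d + 1) * bigW d m ≤ 2 * (2 * m) * (2 ^ 55 * m ^ 26) := by gcongr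
    _ = 1 * (2 ^ 57 * m ^ 27) := by ring
    _ ≤ d ^ 3 * (m ^ 57 * m ^ 27) := by
        have : (1 : ℝ) ≤ d ^ 3 := one_le_pow₀ (by linarith)
        gcongr
    _ = d ^ 3 * m ^ 84 := by ring

end Final

end TreeSplit

/-- there is a constant `C` such that for every `d ≥ 3`, every finite tree `G`
whose internal vertices all have degree exactly `d`, every splitting subtree of `G` with edge
set `ET` (of `m = |ET|` edges), and every proper `(d+1)`-edge-colouring `μ` of `G`, the
Glauber dynamics `𝓛^μ_E` is ergodic and `τ(𝓛^μ_E) ≤ d³·m^C`. -/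
theorem tree_splitting_relaxTime :
    ∃ C : ℝ, 0 < C ∧
      ∀ (V : Type) [Fintype V] [DecidableEq V] (G : SimpleGraph V) [DecidableRel G.Adj]
        (d : ℕ), 3 ≤ d → G.IsTree → (∀ v : V, 2 ≤ G.degree v → G.degree v = d) →
      ∀ ET : Finset (Sym2 V), IsSplitting G ET →
      ∀ μ : Sym2 V → Fin (d + 1), ProperECol G μ →
        IsErgodicGen (treeGen G (d + 1) ET μ) ∧
        relaxTime (unif (OmegaE G (d + 1) ET μ)) (treeGen G (d + 1) ET μ) ≤
          (d : ℝ) ^ 3 * (ET.card : ℝ) ^ C := by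
  refine ⟨(84 : ℕ), by norm_num, ?_⟩
  intro V _ _ G _ d hd hT hdeg ET hS μ hμ
  have hd' : (3 : ℝ) ≤ d := by exact_mod_cast hd
  rw [Real.rpow_natCast]
  by_cases hm : ET.card = 1
  · have h := TreeSplit.gpoin_single hμ hm
    refine ⟨h.ergodic (by omega), h.relax (by omega) one_pos ?_ ?_⟩
    · rw [hm]; push_cast; rw [one_pow]; nlinarith [sq_nonneg ((d : ℝ) - 3)]
    · rw [hm]; push_cast; rw [one_pow]; nlinarith [sq_nonneg ((d : ℝ) - 3)]
  · obtain ⟨h, hdm⟩ := TreeSplit.tree_gpoin hd hT hdeg hS hm hμ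
    have hdm' : (d : ℝ) ≤ ET.card := by exact_mod_cast hdm
    have hW : 0 < TreeSplit.bigW d ET.card := by
      have h1 := TreeSplit.le_bigW (d := d) (m := ET.card) (by linarith) (by positivity)
      have h2 : (0 : ℝ) < ET.card := by linarith
      have : (0 : ℝ) < 2 ^ 15 * d * (ET.card : ℝ) ^ 10 := by positivity
      linarith
    refine ⟨h.ergodic (by omega), h.relax (by omega) hW ?_ ?_⟩
    · push_cast
      exact TreeSplit.bigW_bound hd' hdm'
    · have h1 : (1 : ℝ) ≤ (d : ℝ) ^ 3 := one_le_pow₀ (by linarith)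
      have h2 : (1 : ℝ) ≤ (ET.card : ℝ) ^ 84 := one_le_pow₀ (by linarith)
      nlinarith
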